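/- arXiv:2408.10127 — 6 statements merged into one kernel-verified Lean document; each statement's English description precedes it below -/
import Mathlib

section
/- Let G be a finite group, ε > 0, and K a real number with 1 < K < |G|^{ε/2}. Let A ⊆ G be a nonempty subset. Suppose S is a set of complex irreducible characters of G such that the sum of χ(1)² over all irreducible characters χ not in S is less than |G|^ε, and suppose that for every χ ∈ S, the average |E_{x,y ∈ A}[χ(y⁻¹x)]| (where x, y range uniformly and independently over A) is at most χ(1)/K. Then for every subset B ⊆ G with 0 < |B| < |G|^{1−2ε}, there exists σ ∈ G with |A^σ B| > K|B|/(1 + |G|^{−ε/2}). -/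
/-!
The proof is a second moment argument, averaged over the conjugating element.

For `s : G` let `N s` be the number of `(x, y, h, k) ∈ A × A × B × B` with
`s⁻¹ x s h = s⁻¹ y s k`, the multiplicative energy of the pair `(A^s, B)`. By Cauchy–Schwarz
`|A|² |B|² ≤ |A^s B| · N s` (`card_sq_le`), so it is enough to show that `N s` is small on average.

Since `∑_s [s⁻¹ x s g = 1]` is a class function of `x`, it expands in irreducible characters:
`∑_s [s⁻¹ x s g = 1] = ∑_i χ_i(x) χ_i(g)` (`sum_conj_delta`). Hence `∑_s N s = ∑_i α_i β_i` with
`α_i = ∑_{x, y ∈ A} χ_i(y⁻¹ x)` and `β_i = ∑_{h, k ∈ B} χ_i(h k⁻¹)`. Here `β_i ≥ 0` because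
characters are positive definite, `∑_i χ_i(1) β_i = |G| |B|` by the decomposition of the regular
character, `|α_i| ≤ |A|² χ_i(1)` and `β_i ≤ |B|² χ_i(1)` trivially, and `|α_i| ≤ |A|² χ_i(1) / K`
when `χ_i ∈ S`. With `D = ∑_{χ ∉ S} χ(1)² < |G|^ε` this gives
`∑_s N s ≤ |A|² (|G| |B| / K + |B|² D)`. If every `|A^s B|` were at most
`K |B| / (1 + |G|^{-ε/2})`, it would follow that `|G|^{1 - ε/2} ≤ K |B| D`, whereas the bounds on
`K`, `|B|` and `D` give `K |B| D < |G|^{ε/2 + (1 - 2ε) + ε} = |G|^{1 - ε/2}`.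

The representation theory is done with matrices. The Wedderburn decomposition of `ℂ[G]` provides
matrix representations `ρ_i` whose images span the full matrix algebras, pairwise distinct
characters, and the formula for the regular character as the trace of left multiplication
(`exists_wedderburn`). Spanning replaces irreducibility and yields Schur's lemma in the averaged
form `Spans.sum_conj`. That every irreducible character occurs among the traces of the `ρ_i` is not
needed; it is enough that these traces are irreducible characters and that there are only finitely
many irreducible characters, so that the `finsum` in the hypothesis is a genuine sum.
-/

open scoped Pointwise

/-- The conjugate `A^σ = {σ⁻¹ a σ : a ∈ A}` of a finite subset of a group. -/
def conjFinset {G : Type*} [Group G] [DecidableEq G] (A : Finset G) (σ : G) : Finset G :=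
  A.image fun a => σ⁻¹ * a * σ

/-- `χ : G → ℂ` is the character of an irreducible complex representation of `G`. -/
def IsIrredChar (G : Type) [Group G] (χ : G → ℂ) : Prop :=
  ∃ V : FDRep ℂ G, CategoryTheory.Simple V ∧ FDRep.character V = χ

namespace CharGrowth

open Matrix

variable {G : Type} [Group G] [Fintype G] {n : ℕ}

/-! ### Unitarity and positive definiteness of characters -/

open scoped MatrixOrder ComplexOrder in
/-- Weyl's unitary trick: `P = ∑ g, (ρ g)ᴴ ρ g` is positive definite and invariant, and conjugating
by `Q` with `P = Qᴴ Q` makes the representation unitary without changing its character. -/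
theorem exists_unitary_trace (ρ : G →* Matrix (Fin n) (Fin n) ℂ) :
    ∃ U : G →* Matrix (Fin n) (Fin n) ℂ,
      (∀ g, U g ∈ Matrix.unitaryGroup (Fin n) ℂ) ∧ ∀ g, (U g).trace = (ρ g).trace := by
  classical
  set P : Matrix (Fin n) (Fin n) ℂ := ∑ g, (ρ g)ᴴ * ρ g with hP
  have hpos : P.PosDef := by
    rw [hP, ← Finset.add_sum_erase _ _ (Finset.mem_univ (1 : G))]
    refine Matrix.PosDef.add_posSemidef (by simpa using Matrix.PosDef.one) ?_
    exact Matrix.posSemidef_sum _ fun g _ => posSemidef_conjTranspose_mul_self _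
  have hinv : ∀ g, (ρ g)ᴴ * P * ρ g = P := fun g => by
    rw [hP, Finset.mul_sum, Finset.sum_mul,
      ← Equiv.sum_comp (Equiv.mulRight g) (fun h => (ρ h)ᴴ * ρ h)]
    refine Finset.sum_congr rfl fun h _ => ?_
    simp [map_mul, conjTranspose_mul, Matrix.mul_assoc]
  obtain ⟨Q, hQ⟩ : ∃ Q : Matrix (Fin n) (Fin n) ℂ, P = star Q * Q :=
    CStarAlgebra.nonneg_iff_eq_star_mul_self.mp hpos.posSemidef.nonneg
  rw [star_eq_conjTranspose] at hQ
  have hQu : IsUnit Q.det := by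
    have h := (Matrix.isUnit_iff_isUnit_det _).mp hpos.isUnit
    rw [hQ, det_mul] at h
    exact isUnit_of_mul_isUnit_right h
  have h1 : Q⁻¹ * Q = 1 := nonsing_inv_mul Q hQu
  have h2 : Q * Q⁻¹ = 1 := mul_nonsing_inv Q hQu
  have h3 : (Q⁻¹)ᴴ * Qᴴ = 1 := by rw [← conjTranspose_mul, h2, conjTranspose_one]
  refine ⟨{ toFun := fun g => Q * ρ g * Q⁻¹, map_one' := by simp [h2], map_mul' := ?_ }, ?_, ?_⟩
  · intro g h
    calc Q * ρ (g * h) * Q⁻¹ = Q * ρ g * 1 * ρ h * Q⁻¹ := by simp [Matrix.mul_assoc]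
      _ = _ := by rw [← h1]; simp only [Matrix.mul_assoc]
  · intro g
    rw [Matrix.mem_unitaryGroup_iff', star_eq_conjTranspose]
    calc (Q * ρ g * Q⁻¹)ᴴ * (Q * ρ g * Q⁻¹)
        = (Q⁻¹)ᴴ * ((ρ g)ᴴ * (Qᴴ * Q) * ρ g) * Q⁻¹ := by
          simp only [conjTranspose_mul, Matrix.mul_assoc]
      _ = ((Q⁻¹)ᴴ * Qᴴ) * (Q * Q⁻¹) := by rw [← hQ, hinv, hQ]; simp only [Matrix.mul_assoc]
      _ = 1 := by rw [h2, h3, one_mul]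
  · intro g
    change (Q * ρ g * Q⁻¹).trace = _
    rw [trace_mul_comm, ← Matrix.mul_assoc, h1, one_mul]

theorem norm_trace_le (ρ : G →* Matrix (Fin n) (Fin n) ℂ) (g : G) : ‖(ρ g).trace‖ ≤ n := by
  obtain ⟨U, hU, htr⟩ := exists_unitary_trace ρ
  rw [← htr, trace]
  refine (norm_sum_le _ _).trans ?_
  refine (Finset.sum_le_sum fun i _ => entry_norm_bound_of_unitary (hU g) i i).trans ?_
  simp

open scoped ComplexOrder in
/-- Characters are positive definite: for a unitary model `U` the double sum is `tr (M Mᴴ)` with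
`M = ∑ h ∈ B, U h`. -/
theorem sum_trace_nonneg (ρ : G →* Matrix (Fin n) (Fin n) ℂ) (B : Finset G) :
    0 ≤ ∑ h ∈ B, ∑ k ∈ B, (ρ (h * k⁻¹)).trace := by
  obtain ⟨U, hU, htr⟩ := exists_unitary_trace ρ
  have key : ∑ h ∈ B, ∑ k ∈ B, (ρ (h * k⁻¹)).trace
      = ((∑ h ∈ B, U h) * (∑ k ∈ B, U k)ᴴ).trace := by
    simp only [conjTranspose_sum, Finset.sum_mul_sum, trace_sum]
    refine Finset.sum_congr rfl fun h _ => Finset.sum_congr rfl fun k _ => ?_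
    have : U k⁻¹ = (U k)ᴴ := by
      have e1 : U k⁻¹ * U k = 1 := by rw [← map_mul]; simp
      have e2 : U k * (U k)ᴴ = 1 := Matrix.mem_unitaryGroup_iff.mp (hU k)
      exact left_inv_eq_right_inv e1 e2
    rw [← htr, map_mul, this]
  rw [key]
  exact (posSemidef_self_mul_conjTranspose _).trace_nonneg

/-! ### Schur's lemma in matrix form -/

/-- The matrices `ρ g` span the full matrix algebra. By Burnside's theorem this is absolute
irreducibility (in dimension `n ≠ 0`); the spanning form is what the averaging arguments use. -/
def Spans (ρ : G →* Matrix (Fin n) (Fin n) ℂ) : Prop :=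
  Submodule.span ℂ (Set.range ρ) = ⊤

/-- Schur's lemma, averaged form: `∑ s, ρ(s)⁻¹ X ρ(s)` commutes with all matrices, so it is a scalar
matrix, and comparing traces determines the scalar. The factor `n` is kept on the left to avoid
dividing by it. -/
theorem Spans.sum_conj {ρ : G →* Matrix (Fin n) (Fin n) ℂ} (hρ : Spans ρ)
    (X : Matrix (Fin n) (Fin n) ℂ) :
    (n : ℂ) • ∑ s, ρ s⁻¹ * X * ρ s = (Fintype.card G * X.trace) • 1 := by
  set Y := ∑ s, ρ s⁻¹ * X * ρ s with hY
  have hcomm : ∀ M, Commute M Y := by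
    intro M
    have hM : M ∈ Submodule.span ℂ (Set.range ρ) := by rw [hρ]; trivial
    induction hM using Submodule.span_induction with
    | mem x hx =>
      obtain ⟨g, rfl⟩ := hx
      rw [commute_iff_eq, hY, Finset.mul_sum, Finset.sum_mul,
        ← Equiv.sum_comp (Equiv.mulRight g) (fun s => ρ g * (ρ s⁻¹ * X * ρ s))]
      refine Finset.sum_congr rfl fun s _ => ?_
      simp only [Equiv.coe_mulRight, _root_.mul_inv_rev, map_mul, ← Matrix.mul_assoc]
      rw [← map_mul]
      simp
    | zero => exact Commute.zero_left _
    | add x y _ _ hx hy => exact hx.add_left hy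
    | smul a x _ hx => exact hx.smul_left a
  obtain ⟨c, hc⟩ := mem_range_scalar_iff_commute_single'.mpr fun i j => hcomm (single i j 1)
  have htr : Y.trace = Fintype.card G * X.trace := by
    rw [hY, trace_sum]
    have : ∀ s, (ρ s⁻¹ * X * ρ s).trace = X.trace := fun s => by
      rw [trace_mul_comm, ← Matrix.mul_assoc, ← map_mul]; simp
    simp [this]
  rw [← htr, ← hc]
  ext i j
  by_cases h : i = j <;> simp [h]

theorem Spans.sum_trace_conj {ρ : G →* Matrix (Fin n) (Fin n) ℂ} (hρ : Spans ρ) (x g : G) :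
    (n : ℂ) * ∑ s, (ρ (s⁻¹ * x * s * g)).trace
      = Fintype.card G * ((ρ x).trace * (ρ g).trace) := by
  have h := congrArg (fun Y => (Y * ρ g).trace) (hρ.sum_conj (ρ x))
  simpa [Finset.sum_mul, trace_sum, mul_assoc] using h

/-- The character of a spanning representation has norm one; this is the `(i, j)` entry of
`Spans.sum_conj` at the matrix unit `E_ij`, summed over `i` and `j`. -/
theorem Spans.sum_trace_mul_inv {ρ : G →* Matrix (Fin n) (Fin n) ℂ} (hρ : Spans ρ) (hn : n ≠ 0) :
    ∑ g, (ρ g).trace * (ρ g⁻¹).trace = Fintype.card G := by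
  have hn' : (n : ℂ) ≠ 0 := by exact_mod_cast hn
  have h1 : ∀ i j : Fin n, (n : ℂ) * ∑ s, ρ s⁻¹ i i * ρ s j j
      = Fintype.card G * (if i = j then 1 else 0) := by
    intro i j
    have h := congrFun (congrFun (hρ.sum_conj (single i j 1)) i) j
    have e : ∀ s : G, (ρ s⁻¹ * single i j (1 : ℂ) * ρ s : Matrix (Fin n) (Fin n) ℂ) i j
        = ρ s⁻¹ i i * ρ s j j := fun s => by
      rw [Matrix.mul_apply, Finset.sum_eq_single j]
      · simp
      · intro b _ hb
        rw [Matrix.mul_single_apply_of_ne _ _ _ _ _ hb, zero_mul]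
      · simp
    simp only [Matrix.smul_apply, Matrix.sum_apply, e, smul_eq_mul] at h
    rw [h]
    by_cases hij : i = j
    · subst hij; simp
    · simp [hij]
  refine mul_left_cancel₀ hn' ?_
  calc (n : ℂ) * ∑ g, (ρ g).trace * (ρ g⁻¹).trace
      = ∑ j, ∑ i, (n : ℂ) * ∑ s, ρ s⁻¹ i i * ρ s j j := by
        simp only [← Finset.mul_sum]
        have e : ∀ g, (ρ g).trace * (ρ g⁻¹).trace = ∑ j, ∑ i, ρ g⁻¹ i i * ρ g j j := fun g => by
          simp only [trace, diag, Finset.sum_mul_sum]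
          exact Finset.sum_congr rfl fun _ _ => Finset.sum_congr rfl fun _ _ => mul_comm _ _
        simp only [e]
        rw [Finset.sum_comm]
        exact congrArg _ (Finset.sum_congr rfl fun _ _ => Finset.sum_comm)
    _ = _ := by
        simp only [h1]
        simp

theorem Spans.isIrredChar {ρ : G →* Matrix (Fin n) (Fin n) ℂ} (hρ : Spans ρ) (hn : n ≠ 0) :
    IsIrredChar G fun g => (ρ g).trace := by
  let r : Representation ℂ G (Fin n → ℂ) :=
    ((Matrix.toLinAlgEquiv' (R := ℂ) (n := Fin n)).toAlgHom : _ →* _).comp ρ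
  have hc : FDRep.character (FDRep.of r) = fun g => (ρ g).trace := by
    funext g
    exact Matrix.trace_toLin'_eq (ρ g)
  refine ⟨FDRep.of r, ?_, hc⟩
  rw [FDRep.simple_iff_char_is_norm_one, hc]
  simpa using hρ.sum_trace_mul_inv hn

/-- There are finitely many irreducible characters: by orthonormality they are linearly independent
in the finite-dimensional space `G → ℂ`. -/
theorem finite_isIrredChar (G : Type) [Group G] [Finite G] :
    {χ : G → ℂ | IsIrredChar G χ}.Finite := by
  classical
  have := Fintype.ofFinite G
  have : Invertible (Nat.card G : ℂ) := invertibleOfNonzero (by simp)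
  have hli : LinearIndependent ℂ (fun χ : {χ : G → ℂ | IsIrredChar G χ} => (χ : G → ℂ)) := by
    rw [linearIndependent_iff']
    intro s a hs χ hχ
    have horth : ∀ ψ : {χ : G → ℂ | IsIrredChar G χ},
        (Nat.card G : ℂ)⁻¹ * ∑ g : G, ψ.1 g * χ.1 g⁻¹ = if ψ = χ then 1 else 0 := by
      rintro ⟨ψ, V, hV, rfl⟩
      obtain ⟨χ, W, hW, rfl⟩ := χ
      have h := FDRep.char_orthonormal V W
      rw [h]
      by_cases hVW : V.character = W.character
      · have h2 := FDRep.char_orthonormal W W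
        rw [if_pos ⟨CategoryTheory.Iso.refl _⟩, ← hVW, hVW] at h2
        rw [hVW, h2] at h
        rw [← h]
        simp [hVW]
      · rw [if_neg, if_neg]
        · exact fun h => hVW (congrArg Subtype.val h)
        · rintro ⟨i⟩
          exact hVW (FDRep.char_iso i)
    have h0 : ∑ ψ ∈ s, a ψ * ((Nat.card G : ℂ)⁻¹ * ∑ g : G, ψ.1 g * χ.1 g⁻¹) = 0 := by
      have := congrArg (fun f : G → ℂ => (Nat.card G : ℂ)⁻¹ * ∑ g : G, f g * χ.1 g⁻¹) hs
      simp only [Finset.sum_apply, Pi.smul_apply, smul_eq_mul, Pi.zero_apply, zero_mul,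
        Finset.sum_const_zero, mul_zero, Finset.sum_mul] at this
      rw [← this, Finset.sum_comm, Finset.mul_sum]
      refine Finset.sum_congr rfl fun ψ _ => ?_
      simp only [Finset.mul_sum]
      refine Finset.sum_congr rfl fun ψ _ => ?_
      ring
    simp only [horth] at h0
    simpa [hχ] using h0
  have := hli.finite
  exact Set.toFinite _


/-! ### The regular character -/

/-- The Wedderburn decomposition of `ℂ[G]` read as a family of matrix representations: their images
span, their characters are pairwise distinct, and `∑ i, d i • χ i` is the regular character. -/
theorem exists_wedderburn (G : Type) [Group G] [Fintype G] [DecidableEq G] :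
    ∃ (m : ℕ) (d : Fin m → ℕ) (ρ : ∀ i, G →* Matrix (Fin (d i)) (Fin (d i)) ℂ),
      (∀ i, d i ≠ 0) ∧ (∀ i, Spans (ρ i)) ∧
      Function.Injective (fun i g => (ρ i g).trace) ∧
      ∀ g, ∑ i, (d i : ℂ) * (ρ i g).trace = if g = 1 then (Fintype.card G : ℂ) else 0 := by
  obtain ⟨m, d, hd, ⟨e⟩⟩ :=
    IsSemisimpleRing.exists_algEquiv_pi_matrix_of_isAlgClosed ℂ (MonoidAlgebra ℂ G)
  let pr : ∀ i, MonoidAlgebra ℂ G →ₐ[ℂ] Matrix (Fin (d i)) (Fin (d i)) ℂ :=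
    fun i => (Pi.evalAlgHom ℂ _ i).comp e.toAlgHom
  have hpr : ∀ i x, pr i x = e x i := fun i x => rfl
  refine ⟨m, d, fun i => ((pr i : _ →* _)).comp (MonoidAlgebra.of ℂ G), fun i => (hd i).out,
    fun i => ?_, ?_, fun g => ?_⟩
  · have hsurj : Function.Surjective (pr i).toLinearMap := fun M =>
      ⟨e.symm (Pi.single i M), by simp [hpr]⟩
    have hspan : Submodule.span ℂ (Set.range (MonoidAlgebra.of ℂ G)) = ⊤ := by
      rw [eq_top_iff]
      rintro x -
      induction x using MonoidAlgebra.induction_on with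
      | of g => exact Submodule.subset_span ⟨g, rfl⟩
      | add x y hx hy => exact Submodule.add_mem _ hx hy
      | smul a x hx => exact Submodule.smul_mem _ a hx
    rw [Spans]
    have := congrArg (Submodule.map (pr i).toLinearMap) hspan
    rw [Submodule.map_span, Submodule.map_top, LinearMap.range_eq_top.mpr hsurj,
      ← Set.range_comp] at this
    exact this
  -- Equal characters on `G` agree on `ℂ[G]`, but the central idempotent of the `i`-th block has
  -- trace `d i` in block `i` and trace `0` in every other block.
  · intro i j hij
    by_contra hne
    have hext : (traceLinearMap (Fin (d i)) ℂ ℂ).comp (pr i).toLinearMap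
        = (traceLinearMap (Fin (d j)) ℂ ℂ).comp (pr j).toLinearMap := by
      refine (MonoidAlgebra.basis G ℂ).ext fun g => ?_
      simpa using congrFun hij g
    have h := LinearMap.congr_fun hext (e.symm (Pi.single i 1))
    simp [hpr, Pi.single_eq_of_ne (Ne.symm hne)] at h
    exact (hd i).out h
  -- Compute the trace of left multiplication by `g` twice: on `ℂ[G]` in the basis `G`, and on the
  -- product of matrix algebras in the basis of matrix units.
  · let L := LinearMap.mulLeft ℂ (MonoidAlgebra.of ℂ G g)
    have h1 : LinearMap.trace ℂ _ L = if g = 1 then (Fintype.card G : ℂ) else 0 := by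
      rw [LinearMap.trace_eq_matrix_trace ℂ (MonoidAlgebra.basis G ℂ)]
      simp only [trace, diag, LinearMap.toMatrix_apply]
      simp [L, MonoidAlgebra.basis, Finsupp.single_apply, MonoidAlgebra.single_mul_single]
    have h2 : LinearMap.trace ℂ _ (LinearMap.mulLeft ℂ (e (MonoidAlgebra.of ℂ G g)))
        = LinearMap.trace ℂ _ L := by
      rw [← LinearMap.trace_conj' L e.toLinearEquiv]
      congr 1
      refine LinearMap.ext fun x => ?_
      simp [L, LinearEquiv.conj_apply]
    rw [← h1, ← h2, LinearMap.trace_eq_matrix_trace ℂ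
      (Pi.basis fun i => Matrix.stdBasis ℂ (Fin (d i)) (Fin (d i)))]
    simp only [trace, diag, LinearMap.toMatrix_apply]
    rw [Fintype.sum_sigma]
    refine Finset.sum_congr rfl fun i _ => ?_
    rw [Fintype.sum_prod_type]
    have hrepr : ∀ (M : Matrix (Fin (d i)) (Fin (d i)) ℂ) p,
        (Matrix.stdBasis ℂ (Fin (d i)) (Fin (d i))).repr M p = M p.1 p.2 := fun _ _ => rfl
    simp only [Pi.basis_repr, Pi.basis_apply, LinearMap.mulLeft_apply, Pi.mul_apply,
      Pi.single_eq_same, hrepr, Matrix.stdBasis_eq_single, mul_single_apply_same, mul_one]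
    rw [Finset.sum_comm]
    simp [hpr]

/-! ### Energy and growth -/

/-- Cauchy–Schwarz for the representation function of `A^s B`: its sum over `A^s B` is `|A| |B|` and
its sum of squares counts the solutions of `s⁻¹ x s h = s⁻¹ y s k`. -/
theorem card_sq_le {G : Type} [Group G] [DecidableEq G] (A B : Finset G) (s : G) :
    A.card ^ 2 * B.card ^ 2 ≤ (conjFinset A s * B).card *
      ∑ x ∈ A, ∑ y ∈ A, ∑ h ∈ B, ∑ k ∈ B,
        if s⁻¹ * (y⁻¹ * x) * s * (h * k⁻¹) = 1 then 1 else 0 := by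
  classical
  set f : G × G → G := fun p => s⁻¹ * p.1 * s * p.2 with hf
  have hmaps : ∀ p ∈ A ×ˢ B, f p ∈ conjFinset A s * B := by
    intro p hp
    rw [Finset.mem_product] at hp
    exact Finset.mul_mem_mul (Finset.mem_image_of_mem _ hp.1) hp.2
  have h1 : ∑ z ∈ conjFinset A s * B, ((A ×ˢ B).filter fun p => f p = z).card
      = A.card * B.card := by
    rw [← Finset.card_product, ← Finset.card_eq_sum_card_fiberwise hmaps]
  have h2 := sq_sum_le_card_mul_sum_sq (s := conjFinset A s * B)
    (f := fun z => ((A ×ˢ B).filter fun p => f p = z).card)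
  rw [h1, mul_pow, Nat.cast_id] at h2
  refine h2.trans_eq ?_
  congr 1
  have h3 : ∀ z, ((A ×ˢ B).filter fun p => f p = z).card ^ 2
      = ∑ p ∈ A ×ˢ B, ∑ q ∈ A ×ˢ B, if f p = z then (if f q = z then 1 else 0) else 0 := by
    intro z
    rw [sq, Finset.card_filter, Finset.sum_mul_sum]
    refine Finset.sum_congr rfl fun p _ => Finset.sum_congr rfl fun q _ => ?_
    by_cases h : f p = z <;> simp [h]
  simp only [h3]
  rw [Finset.sum_comm]
  have h4 : ∀ p ∈ A ×ˢ B, ∑ z ∈ conjFinset A s * B, ∑ q ∈ A ×ˢ B,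
      (if f p = z then (if f q = z then 1 else 0) else 0)
      = ∑ q ∈ A ×ˢ B, if f q = f p then 1 else 0 := by
    intro p hp
    rw [Finset.sum_comm]
    refine Finset.sum_congr rfl fun q _ => ?_
    rw [Finset.sum_ite_eq, if_pos (hmaps p hp)]
  rw [Finset.sum_congr rfl h4, Finset.sum_product]
  refine Finset.sum_congr rfl fun x _ => ?_
  simp only [Finset.sum_product]
  rw [Finset.sum_comm]
  refine Finset.sum_congr rfl fun y _ => Finset.sum_congr rfl fun h _ =>
    Finset.sum_congr rfl fun k _ => ?_
  have : f (y, k) = f (x, h) ↔ s⁻¹ * (y⁻¹ * x) * s * (h * k⁻¹) = 1 := by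
    have e : s⁻¹ * (y⁻¹ * x) * s * (h * k⁻¹) = k * ((f (y, k))⁻¹ * f (x, h)) * k⁻¹ := by
      simp only [hf]; group
    rw [e, conj_eq_one_iff, inv_mul_eq_one]
  simp only [this]

/-- Expand `[· = 1]` as `|G|⁻¹ ∑ i, d i • χ i` and average each character over conjugates with
`Spans.sum_trace_conj`. -/
theorem sum_conj_delta [DecidableEq G] {m : ℕ} {d : Fin m → ℕ}
    {ρ : ∀ i, G →* Matrix (Fin (d i)) (Fin (d i)) ℂ} (hρ : ∀ i, Spans (ρ i))
    (hreg : ∀ g, ∑ i, (d i : ℂ) * (ρ i g).trace = if g = 1 then (Fintype.card G : ℂ) else 0)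
    (x g : G) :
    ∑ s : G, (if s⁻¹ * x * s * g = 1 then (1 : ℂ) else 0)
      = ∑ i, (ρ i x).trace * (ρ i g).trace := by
  have hG : (Fintype.card G : ℂ) ≠ 0 := by exact_mod_cast Fintype.card_ne_zero
  refine mul_left_cancel₀ hG ?_
  rw [Finset.mul_sum, Finset.mul_sum]
  simp only [← (hρ _).sum_trace_conj, Finset.mul_sum]
  rw [Finset.sum_comm]
  simp only [hreg, mul_ite, mul_one, mul_zero]

end CharGrowth

open CharGrowth

theorem from_character_theory_to_growth (G : Type) [Group G] [Fintype G] [DecidableEq G]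
    (ε K : ℝ) (hε : 0 < ε) (hK1 : 1 < K) (hK2 : K < (Fintype.card G : ℝ) ^ (ε / 2))
    (A : Finset G) (hA : A.Nonempty)
    (S : Set (G → ℂ)) (hS : ∀ χ ∈ S, IsIrredChar G χ)
    (hsum : ∑ᶠ χ ∈ {χ : G → ℂ | IsIrredChar G χ ∧ χ ∉ S}, ‖χ 1‖ ^ 2
      < (Fintype.card G : ℝ) ^ ε)
    (hchar : ∀ χ ∈ S,
      ‖((A.card : ℂ) ^ 2)⁻¹ * ∑ x ∈ A, ∑ y ∈ A, χ (y⁻¹ * x)‖ ≤ ‖χ 1‖ / K)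
    (B : Finset G) (hB : 0 < B.card)
    (hBcard : (B.card : ℝ) < (Fintype.card G : ℝ) ^ (1 - 2 * ε)) :
    ∃ σ : G, ((conjFinset A σ * B).card : ℝ) >
      K * (B.card : ℝ) / (1 + (Fintype.card G : ℝ) ^ (-(ε / 2))) := by

  classical
  obtain ⟨m, d, ρ, hd, hρ, hinj, hreg⟩ := exists_wedderburn G
  set q : ℝ := (Fintype.card G : ℝ) with hq
  have hq0 : 0 < q := by rw [hq]; exact_mod_cast Fintype.card_pos
  set χ : Fin m → G → ℂ := fun i g => (ρ i g).trace with hχ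
  have hχ1 : ∀ i, χ i 1 = d i := fun i => by simp [hχ]
  have hirr : ∀ i, IsIrredChar G (χ i) := fun i => (hρ i).isIrredChar (hd i)
  have ha : (0 : ℝ) < A.card := by exact_mod_cast hA.card_pos
  have hb : (0 : ℝ) < B.card := by exact_mod_cast hB
  have hK : 0 < K := by linarith
  set α : Fin m → ℂ := fun i => ∑ x ∈ A, ∑ y ∈ A, χ i (y⁻¹ * x) with hα
  have hβ' : ∀ i, ∃ b : ℝ, 0 ≤ b ∧ ∑ h ∈ B, ∑ k ∈ B, χ i (h * k⁻¹) = (b : ℂ) := by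
    intro i
    have h := sum_trace_nonneg (ρ i) B
    rw [Complex.nonneg_iff] at h
    exact ⟨_, h.1, Complex.ext rfl h.2.symm⟩
  choose β hβ0 hβ using hβ'
  have hα1 : ∀ i, ‖α i‖ ≤ (A.card : ℝ) ^ 2 * d i := by
    intro i
    calc ‖α i‖ ≤ ∑ x ∈ A, ∑ y ∈ A, (d i : ℝ) :=
          (norm_sum_le _ _).trans (Finset.sum_le_sum fun x _ => (norm_sum_le _ _).trans
            (Finset.sum_le_sum fun y _ => norm_trace_le (ρ i) _))
      _ = _ := by simp; ring
  have hα2 : ∀ i, χ i ∈ S → ‖α i‖ ≤ (A.card : ℝ) ^ 2 * (d i / K) := by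
    intro i hi
    have h := hchar _ hi
    rw [norm_mul, hχ1] at h
    simp only [norm_inv, norm_pow, Complex.norm_natCast] at h
    rwa [inv_mul_le_iff₀ (by positivity)] at h
  have hβ1 : ∀ i, β i ≤ (B.card : ℝ) ^ 2 * d i := by
    intro i
    calc β i = ‖∑ h ∈ B, ∑ k ∈ B, χ i (h * k⁻¹)‖ := by
          rw [hβ, Complex.norm_real, Real.norm_of_nonneg (hβ0 i)]
      _ ≤ ∑ x ∈ B, ∑ y ∈ B, (d i : ℝ) :=
          (norm_sum_le _ _).trans (Finset.sum_le_sum fun x _ => (norm_sum_le _ _).trans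
            (Finset.sum_le_sum fun y _ => norm_trace_le (ρ i) _))
      _ = _ := by simp; ring
  have hβsum : ∑ i, (d i : ℝ) * β i = q * B.card := by
    have h : ((∑ i, (d i : ℝ) * β i : ℝ) : ℂ) = q * B.card := by
      push_cast
      simp only [← hβ, Finset.mul_sum]
      rw [Finset.sum_comm]
      calc ∑ h ∈ B, ∑ i, ∑ k ∈ B, (d i : ℂ) * χ i (h * k⁻¹)
          = ∑ h ∈ B, ∑ k ∈ B, if h * k⁻¹ = 1 then (Fintype.card G : ℂ) else 0 := by
            refine Finset.sum_congr rfl fun h _ => ?_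
            rw [Finset.sum_comm]
            exact Finset.sum_congr rfl fun k _ => hreg _
        _ = _ := by
            simp only [mul_inv_eq_one, Finset.sum_ite_eq]
            rw [Finset.sum_congr rfl fun h hh => if_pos hh]
            simp [hq, mul_comm]
    exact_mod_cast h
  have hD : ∑ i with χ i ∉ S, (d i : ℝ) ^ 2 < q ^ ε := by
    have hfin : {χ : G → ℂ | IsIrredChar G χ ∧ χ ∉ S}.Finite :=
      (finite_isIrredChar G).subset fun _ h => h.1
    refine lt_of_le_of_lt ?_ hsum
    rw [finsum_mem_eq_finite_toFinset_sum _ hfin]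
    calc ∑ i with χ i ∉ S, (d i : ℝ) ^ 2
        = ∑ ψ ∈ (Finset.univ.filter fun i => χ i ∉ S).image χ, ‖ψ 1‖ ^ 2 := by
          rw [Finset.sum_image hinj.injOn]
          simp [hχ1]
      _ ≤ _ := by
          refine Finset.sum_le_sum_of_subset_of_nonneg ?_ fun _ _ _ => by positivity
          intro ψ hψ
          obtain ⟨i, hi, rfl⟩ := Finset.mem_image.mp hψ
          simpa using ⟨hirr i, (Finset.mem_filter.mp hi).2⟩
  set N : G → ℕ := fun s => ∑ x ∈ A, ∑ y ∈ A, ∑ h ∈ B, ∑ k ∈ B,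
    if s⁻¹ * (y⁻¹ * x) * s * (h * k⁻¹) = 1 then 1 else 0 with hN
  have hNsum : ((∑ s, (N s : ℝ) : ℝ) : ℂ) = ∑ i, α i * β i := by
    have e : ((∑ s, (N s : ℝ) : ℝ) : ℂ) = ∑ x ∈ A, ∑ y ∈ A, ∑ h ∈ B, ∑ k ∈ B,
        ∑ i, χ i (y⁻¹ * x) * χ i (h * k⁻¹) := by
      simp only [hχ, ← sum_conj_delta hρ hreg]
      simp only [hN]
      push_cast
      rw [Finset.sum_comm]
      refine Finset.sum_congr rfl fun x _ => ?_
      rw [Finset.sum_comm]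
      refine Finset.sum_congr rfl fun y _ => ?_
      rw [Finset.sum_comm]
      refine Finset.sum_congr rfl fun h _ => ?_
      rw [Finset.sum_comm]
      refine Finset.sum_congr rfl fun k _ => Finset.sum_congr rfl fun s _ => ?_
      split_ifs <;> simp
    rw [e]
    symm
    simp only [← hβ, hα, Finset.sum_mul]
    rw [Finset.sum_comm]
    refine Finset.sum_congr rfl fun x _ => ?_
    rw [Finset.sum_comm]
    refine Finset.sum_congr rfl fun y _ => ?_
    simp only [Finset.mul_sum]
    rw [Finset.sum_comm]
    refine Finset.sum_congr rfl fun h _ => ?_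
    rw [Finset.sum_comm]
  have hNle : ∑ s, (N s : ℝ) ≤ (A.card : ℝ) ^ 2 *
      (q * B.card / K + (B.card : ℝ) ^ 2 * ∑ i with χ i ∉ S, (d i : ℝ) ^ 2) := by
    have hnn : 0 ≤ ∑ s, (N s : ℝ) := by positivity
    calc ∑ s, (N s : ℝ) = ‖((∑ s, (N s : ℝ) : ℝ) : ℂ)‖ := by
          rw [Complex.norm_real, Real.norm_of_nonneg hnn]
      _ ≤ ∑ i, ‖α i‖ * β i := by
          rw [hNsum]
          refine (norm_sum_le _ _).trans (Finset.sum_le_sum fun i _ => ?_)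
          rw [norm_mul, Complex.norm_real, Real.norm_of_nonneg (hβ0 i)]
      _ ≤ ∑ i, (A.card : ℝ) ^ 2 * (d i * β i / K +
            if χ i ∉ S then (B.card : ℝ) ^ 2 * (d i : ℝ) ^ 2 else 0) := by
          refine Finset.sum_le_sum fun i _ => ?_
          by_cases hi : χ i ∈ S
          · refine (mul_le_mul_of_nonneg_right (hα2 i hi) (hβ0 i)).trans_eq ?_
            simp [hi]; ring
          · have h0 : 0 ≤ d i * β i / K := by have := hβ0 i; positivity
            calc ‖α i‖ * β i ≤ ((A.card : ℝ) ^ 2 * d i) * ((B.card : ℝ) ^ 2 * d i) :=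
                  mul_le_mul (hα1 i) (hβ1 i) (hβ0 i) (by positivity)
              _ = (A.card : ℝ) ^ 2 * ((B.card : ℝ) ^ 2 * (d i : ℝ) ^ 2) := by ring
              _ ≤ _ := by
                  rw [if_pos hi]
                  exact mul_le_mul_of_nonneg_left (by linarith) (by positivity)
      _ = _ := by
          rw [← Finset.mul_sum, Finset.sum_add_distrib, ← Finset.sum_div, hβsum,
            Finset.mul_sum, Finset.sum_filter]
  by_contra hcon
  push Not at hcon
  set e : ℝ := q ^ (-(ε / 2)) with he
  have he0 : 0 < e := Real.rpow_pos_of_pos hq0 _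
  set T : ℝ := K * B.card / (1 + e) with hT
  have hT0 : 0 < T := by positivity
  have hstep : ∀ s, (A.card : ℝ) ^ 2 * (B.card : ℝ) ^ 2 ≤ T * N s := by
    intro s
    have h : (A.card : ℝ) ^ 2 * (B.card : ℝ) ^ 2 ≤ (conjFinset A s * B).card * N s := by
      exact_mod_cast card_sq_le A B s
    exact h.trans (mul_le_mul_of_nonneg_right (hcon s) (by positivity))
  have hall : q * ((A.card : ℝ) ^ 2 * (B.card : ℝ) ^ 2) ≤ T * ∑ s, (N s : ℝ) := by
    rw [Finset.mul_sum]
    refine le_trans ?_ (Finset.sum_le_sum fun s _ => hstep s)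
    simp [hq]
  set D : ℝ := ∑ i with χ i ∉ S, (d i : ℝ) ^ 2
  have hmain : q * e ≤ K * B.card * D := by
    have h := hall.trans (mul_le_mul_of_nonneg_left hNle hT0.le)
    have h' : ((A.card : ℝ) ^ 2 * (B.card : ℝ) ^ 2 / (1 + e)) * (q * (1 + e))
        ≤ ((A.card : ℝ) ^ 2 * (B.card : ℝ) ^ 2 / (1 + e)) * (q + K * B.card * D) := by
      have e1 : (A.card : ℝ) ^ 2 * (B.card : ℝ) ^ 2 / (1 + e) * (q * (1 + e))
          = q * ((A.card : ℝ) ^ 2 * (B.card : ℝ) ^ 2) := by field_simp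
      have e2 : (A.card : ℝ) ^ 2 * (B.card : ℝ) ^ 2 / (1 + e) * (q + K * B.card * D)
          = T * ((A.card : ℝ) ^ 2 * (q * B.card / K + (B.card : ℝ) ^ 2 * D)) := by
        rw [hT]; field_simp
      rw [e1, e2]
      exact h
    have := le_of_mul_le_mul_left h' (by positivity)
    linarith
  have hlt : K * B.card * D < q ^ (ε / 2) * q ^ (1 - 2 * ε) * q ^ ε := by
    have hD0 : 0 ≤ D := Finset.sum_nonneg fun _ _ => by positivity
    have h1 : K * B.card < q ^ (ε / 2) * q ^ (1 - 2 * ε) :=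
      mul_lt_mul'' hK2 hBcard hK.le hb.le
    exact mul_lt_mul'' h1 hD (by positivity) hD0
  have heq : q ^ (ε / 2) * q ^ (1 - 2 * ε) * q ^ ε = q * e := by
    rw [he, ← Real.rpow_add hq0, ← Real.rpow_add hq0]
    nth_rewrite 2 [← Real.rpow_one q]
    rw [← Real.rpow_add hq0]
    congr 1
    ring
  linarith
end

section
/- Let G be a finite group and A, B ⊆ G nonempty subsets. Write f = (|G|/|A|)·1_A for the density function of A, and for each irreducible character χ define f^{=χ} = χ(1)·(f ∗ χ). Let K > 1 and δ > 0, and let S be a set of complex irreducible characters of G such that ‖f^{=χ}‖₂² ≤ χ(1)²/K for every χ ∈ S, and Σ_{χ ∉ S} χ(1)² ≤ δ|G|/(K|B|). Then the average over σ ∈ G of 1/|A^σ B| is at most (1+δ)/(K|B|); in particular there exists σ ∈ G with |A^σ B| ≥ (K/(1+δ))·|B|. -/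
/-!
The Cauchy-Schwarz inequality bounds `1 / |A^σ B|` by `E(A^σ, B) / (|A|² |B|²)`, where `E` is the
multiplicative energy, i.e. the number of solutions of `(σ⁻¹aσ) b = (σ⁻¹a'σ) b'`. Such a solution
means that `σ` conjugates `a'⁻¹a` to `b'b⁻¹`, and column orthogonality of the character table counts
these `σ`. Summing over `σ` gives

  `∑_σ E(A^σ, B) = ∑_χ w_A(χ) w_B(χ)`, with `w_A(χ) = ∑_{a, a' ∈ A} χ(a'⁻¹ a)` (`sum_energy`).

The identity `χ ∗ χ = χ / χ(1)` shows that `w_A(χ) ≥ 0` and `‖f^{=χ}‖₂² = χ(1) w_A(χ) / |A|²`.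
For `χ ∈ S` the hypothesis therefore reads `w_A(χ) ≤ χ(1) |A|² / K`, and Parseval's identity
`∑_χ χ(1) w_B(χ) = |G| |B|` (`sum_wt`) bounds the contribution of `S`. For `χ ∉ S` the trivial bounds
`w_A(χ) ≤ χ(1) |A|²` and `w_B(χ) ≤ χ(1) |B|²` (`wt_le`) suffice.

Column orthogonality (`column_orth`) follows from the completeness of the irreducible characters
among class functions (`class_fun_zero`), which combines Schur's lemma with the semisimplicity of the
group algebra.
-/


open scoped Pointwise

/-- The (normalized) convolution of two functions on a finite group:
`(g ∗ h)(x) = (1/|G|) Σ_y g(y) h(y⁻¹x)`. -/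
noncomputable def conv {G : Type*} [Group G] [Fintype G] (g h : G → ℂ) : G → ℂ :=
  fun x => (Fintype.card G : ℂ)⁻¹ * ∑ y : G, g y * h (y⁻¹ * x)

/-! ### Irreducible characters -/

/-- Schur's lemma: an endomorphism of a simple representation that commutes with the action is a
scalar. The space of intertwining maps has dimension `⟨χ, χ⟩ = 1`. -/
lemma schur {G : Type} [Group G] [Fintype G] (V : FDRep ℂ G) (hV : CategoryTheory.Simple V)
    (T : V →ₗ[ℂ] V) (hT : ∀ g, T ∘ₗ V.ρ g = V.ρ g ∘ₗ T) : ∃ c : ℂ, T = c • LinearMap.id := by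
  have : Invertible (Nat.card G : ℂ) := invertibleOfNonzero (by simp [Nat.card_eq_fintype_card])
  have h1 := Representation.card_inv_mul_sum_char_mul_char_eq_finrank (k := ℂ) V.ρ V.ρ
  have h2 := (FDRep.simple_iff_char_is_norm_one V).1 hV
  have h3 : Module.finrank ℂ (Representation.IntertwiningMap V.ρ V.ρ) = 1 := by
    have h4 : (Nat.card G : ℂ)⁻¹ * ∑ g : G, V.character g * V.character g⁻¹ =
      Module.finrank ℂ (Representation.IntertwiningMap V.ρ V.ρ) := h1
    rw [h2, inv_mul_cancel₀ (by simp [Nat.card_eq_fintype_card])] at h4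
    exact_mod_cast h4.symm
  have hne : (1 : Representation.IntertwiningMap V.ρ V.ρ) ≠ 0 := by
    intro h
    have : Subsingleton (Representation.IntertwiningMap V.ρ V.ρ) := subsingleton_of_zero_eq_one h.symm
    have := Module.finrank_zero_of_subsingleton (R := ℂ) (M := Representation.IntertwiningMap V.ρ V.ρ)
    omega
  obtain ⟨c, hc⟩ := (finrank_eq_one_iff_of_nonzero' _ hne).1 h3 ⟨T, hT⟩
  refine ⟨c, ?_⟩
  have := congrArg (fun f : Representation.IntertwiningMap V.ρ V.ρ => f.toLinearMap) hc
  exact this.symm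

lemma finrank_ne {G : Type} [Group G] [Fintype G] (V : FDRep ℂ G) (hV : CategoryTheory.Simple V) :
    (Module.finrank ℂ V : ℂ) ≠ 0 := by
  intro h
  have h0 : Subsingleton V := Module.finrank_zero_iff.1 (by exact_mod_cast h)
  have h2 := (FDRep.simple_iff_char_is_norm_one V).1 hV
  have : ∀ g, V.character g = 0 := fun g => by
    have : V.ρ g = 0 := Subsingleton.elim _ _
    simp [FDRep.character, this]
  rw [Finset.sum_eq_zero (fun g _ => by rw [this, zero_mul])] at h2
  exact (NeZero.ne (Nat.card G)) (by exact_mod_cast h2.symm)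

/-- A class function `F` acts on a simple representation as the scalar `(∑ F χ) / χ(1)`, the value
being read off from the trace. -/
lemma class_sum {G : Type} [Group G] [Fintype G] (V : FDRep ℂ G) (hV : CategoryTheory.Simple V)
    (F : G → ℂ) (hF : ∀ g h, F (g * h * g⁻¹) = F h) :
    ∑ g, F g • V.ρ g =
      ((∑ g, F g * V.character g) / V.character 1) • (LinearMap.id : V →ₗ[ℂ] V) := by
  obtain ⟨c, hc⟩ := schur V hV (∑ g, F g • V.ρ g) (by
    intro h
    change (∑ g, F g • V.ρ g) * V.ρ h = V.ρ h * (∑ g, F g • V.ρ g)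
    rw [Finset.sum_mul, Finset.mul_sum]
    refine Fintype.sum_equiv (MulAut.conj h⁻¹).toEquiv _ _ fun g => ?_
    have := hF h⁻¹ g
    simp only [inv_inv] at this
    have e : (MulAut.conj h⁻¹).toEquiv g = h⁻¹ * g * h := by simp
    rw [e, this, smul_mul_assoc, mul_smul_comm, ← map_mul, ← map_mul]
    simp [mul_assoc])
  have h1 := congrArg (LinearMap.trace ℂ V) hc
  have h2 : ∑ g, F g * V.character g = c * Module.finrank ℂ V := by
    simpa [FDRep.character] using h1
  rw [hc, h2, FDRep.char_one, mul_div_cancel_right₀ _ (finrank_ne V hV)]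

/-- Convolving an irreducible character with a class function rescales it. -/
lemma conv_irred {G : Type} [Group G] [Fintype G] (χ : G → ℂ) (hχ : IsIrredChar G χ)
    (F : G → ℂ) (hF : ∀ g h, F (g * h * g⁻¹) = F h) (x : G) :
    ∑ g, F g * χ (x * g) = (∑ g, F g * χ g) / χ 1 * χ x := by
  obtain ⟨V, hV, rfl⟩ := hχ
  have h := congrArg (fun T => LinearMap.trace ℂ V (V.ρ x * T)) (class_sum V hV F hF)
  have e : (V.ρ x * (LinearMap.id : V →ₗ[ℂ] V)) = V.ρ x := rfl
  simpa [Finset.mul_sum, ← map_mul, FDRep.character, e] using h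

lemma irred_norm {G : Type} [Group G] [Fintype G] (χ : G → ℂ) (hχ : IsIrredChar G χ) :
    ∑ g, χ g⁻¹ * χ g = Fintype.card G := by
  obtain ⟨V, hV, rfl⟩ := hχ
  simpa [mul_comm] using (FDRep.simple_iff_char_is_norm_one V).1 hV

/-- First orthogonality relation for two different irreducible characters. -/
lemma irred_orth {G : Type} [Group G] [Fintype G] (χ ψ : G → ℂ) (hχ : IsIrredChar G χ)
    (hψ : IsIrredChar G ψ) (hne : χ ≠ ψ) :
    ∑ g, χ g * ψ g⁻¹ = 0 := by
  obtain ⟨V, hV, rfl⟩ := hχ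
  obtain ⟨W, hW, rfl⟩ := hψ
  have : Invertible (Nat.card G : ℂ) := invertibleOfNonzero (by simp [Nat.card_eq_fintype_card])
  have h := FDRep.char_orthonormal V W
  rw [if_neg] at h
  · simpa [Nat.card_eq_fintype_card] using h
  · rintro ⟨i⟩
    exact hne (FDRep.char_iso i)

lemma irred_conj {G : Type} [Group G] [Fintype G] (χ : G → ℂ) (hχ : IsIrredChar G χ) (g h : G) :
    χ (g * h * g⁻¹) = χ h := by
  obtain ⟨V, hV, rfl⟩ := hχ
  exact V.char_conj h g

lemma irred_one {G : Type} [Group G] [Fintype G] (χ : G → ℂ) (hχ : IsIrredChar G χ) :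
    ∃ d : ℕ, 0 < d ∧ χ 1 = d := by
  obtain ⟨V, hV, rfl⟩ := hχ
  refine ⟨Module.finrank ℂ V, ?_, V.char_one⟩
  have := finrank_ne V hV
  exact Nat.pos_of_ne_zero (by exact_mod_cast this)


open scoped ComplexOrder in
/-- `χ(g⁻¹)` is the complex conjugate of `χ(g)`. With `M` the matrices of the representation, the
positive definite matrix `H = ∑ (M x)ᴴ (M x)` satisfies `(M g)ᴴ H (M g) = H`, so `(M g)ᴴ` is
similar to `M g⁻¹`. -/
lemma irred_inv {G : Type} [Group G] [Fintype G] (χ : G → ℂ) (hχ : IsIrredChar G χ) (g : G) :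
    χ g⁻¹ = (starRingEnd ℂ) (χ g) := by
  classical
  obtain ⟨V, hV, rfl⟩ := hχ
  let b := Module.finBasis ℂ V
  let M : G → Matrix _ _ ℂ := fun g => LinearMap.toMatrix b b (V.ρ g)
  have hM : ∀ x y, M (x * y) = M x * M y := fun x y => by
    simp only [M, map_mul]
    exact LinearMap.toMatrix_mul b _ _
  have hM1 : M 1 = 1 := by simp [M]
  have htr : ∀ x, V.character x = (M x).trace := fun x => LinearMap.trace_eq_matrix_trace ℂ b _
  set H := ∑ x, (M x).conjTranspose * M x with hH
  have hpos : H.PosDef := by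
    rw [hH, ← Finset.add_sum_erase _ _ (Finset.mem_univ 1), hM1]
    simp only [Matrix.conjTranspose_one, mul_one]
    exact Matrix.PosDef.one.add_posSemidef
      (Matrix.posSemidef_sum _ fun x _ => Matrix.posSemidef_conjTranspose_mul_self _)
  have hu : IsUnit H := hpos.isUnit
  have hinv : (M g).conjTranspose * H = H * M g⁻¹ := by
    have h1 : (M g).conjTranspose * H * M g = H := by
      rw [hH, Finset.mul_sum, Finset.sum_mul]
      refine Fintype.sum_equiv (Equiv.mulRight g) _ _ fun x => ?_
      simp [hM, Matrix.mul_assoc]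
    calc (M g).conjTranspose * H = (M g).conjTranspose * H * M g * M g⁻¹ := by
          rw [Matrix.mul_assoc _ (M g), ← hM, mul_inv_cancel, hM1, mul_one]
      _ = H * M g⁻¹ := by rw [h1]
  obtain ⟨u, hu⟩ := hu
  rw [htr, htr, starRingEnd_apply, ← Matrix.trace_conjTranspose]
  rw [← hu] at hinv
  have : (M g).conjTranspose = u * M g⁻¹ * (u⁻¹ : (Matrix _ _ ℂ)ˣ) := by
    rw [← hinv]; simp [mul_assoc]
  rw [this, Matrix.trace_mul_comm, ← mul_assoc]; simp

/-! ### Completeness and column orthogonality -/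

lemma ofModule_smul {G : Type} [Group G] (M : Type) [AddCommGroup M]
    [Module ℂ M] [Module (MonoidAlgebra ℂ G) M] [IsScalarTower ℂ (MonoidAlgebra ℂ G) M]
    (r : MonoidAlgebra ℂ G) (m : M) :
    (Representation.ofModule' (k := ℂ) (G := G) M).asAlgebraHom r m = r • m := by
  have : (Representation.ofModule' (k := ℂ) (G := G) M).asAlgebraHom = Algebra.lsmul ℂ ℂ M := by
    rw [Representation.asAlgebraHom_def, Representation.ofModule', Equiv.apply_symm_apply]
  rw [this]; rfl

/-- A class function orthogonal to all irreducible characters acts as zero on every simple module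
over the group algebra. -/
lemma simple_module_zero {G : Type} [Group G] [Fintype G] (M : Type) [AddCommGroup M]
    [Module ℂ M] [Module (MonoidAlgebra ℂ G) M] [IsScalarTower ℂ (MonoidAlgebra ℂ G) M]
    [Module.Finite ℂ M] [IsSimpleModule (MonoidAlgebra ℂ G) M]
    (F : G → ℂ) (hF : ∀ g h, F (g * h * g⁻¹) = F h)
    (h0 : ∀ χ, IsIrredChar G χ → ∑ g, F g * χ g = 0) (m : M) :
    (∑ g, MonoidAlgebra.single g (F g)) • m = 0 := by
  set ρ := Representation.ofModule' (k := ℂ) (G := G) M with hρ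
  have hirr : ρ.IsIrreducible := by
    rw [Representation.irreducible_iff_isSimpleModule_asModule]
    let e : ρ.asModule ≃ₗ[MonoidAlgebra ℂ G] M :=
      { ρ.asModuleEquiv with
        map_smul' := fun r x => by
          change ρ.asModuleEquiv (r • x) = r • ρ.asModuleEquiv x
          rw [Representation.asModuleEquiv_map_smul, hρ, ofModule_smul] }
    exact IsSimpleModule.congr e
  have : Invertible (Nat.card G : ℂ) := invertibleOfNonzero (by simp [Nat.card_eq_fintype_card])
  have hs : CategoryTheory.Simple (FDRep.of ρ) := by
    rw [FDRep.simple_iff_char_is_norm_one]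
    have := Representation.char_orthonormal ρ ρ
    rw [if_pos ⟨Representation.Equiv.refl _⟩] at this
    rw [inv_mul_eq_one₀ (by simp [Nat.card_eq_fintype_card])] at this
    exact this.symm
  have h := class_sum (FDRep.of ρ) hs F hF
  rw [h0 _ ⟨_, hs, rfl⟩] at h
  have h2 : (∑ g, F g • ρ g) m = 0 := by
    have := LinearMap.congr_fun h m
    simpa using this
  rw [← ofModule_smul, ← hρ, map_sum]
  simpa using h2

/-- Completeness of the irreducible characters: a class function orthogonal to all of them vanishes.
By Maschke's theorem the group algebra is the sum of its simple submodules, so the element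
`∑ F(g) g` annihilates `1`. -/
lemma class_fun_zero {G : Type} [Group G] [Fintype G]
    (F : G → ℂ) (hF : ∀ g h, F (g * h * g⁻¹) = F h)
    (h0 : ∀ χ, IsIrredChar G χ → ∑ g, F g * χ g = 0) (x : G) : F x = 0 := by
  have hfin : Module.Finite ℂ (MonoidAlgebra ℂ G) :=
    Module.Finite.equiv (MonoidAlgebra.coeffLinearEquiv (S := ℂ) (M := G) ℂ).symm
  set z : MonoidAlgebra ℂ G := ∑ g, MonoidAlgebra.single g (F g) with hz
  have htop : (1 : MonoidAlgebra ℂ G) ∈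
      sSup {m : Submodule (MonoidAlgebra ℂ G) (MonoidAlgebra ℂ G) |
        IsSimpleModule (MonoidAlgebra ℂ G) m} := by
    rw [IsSemisimpleModule.sSup_simples_eq_top]; trivial
  rw [sSup_eq_iSup'] at htop
  have h1 : z • (1 : MonoidAlgebra ℂ G) = 0 := by
    refine Submodule.iSup_induction _ (motive := fun y => z • y = 0) htop ?_ (smul_zero _) ?_
    · rintro ⟨N, hN⟩ y hy
      have : IsSimpleModule (MonoidAlgebra ℂ G) N := hN
      have : Module.Finite ℂ N := Module.Finite.of_injective
        (N.subtype.restrictScalars ℂ) N.subtype_injective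
      have := simple_module_zero N F hF h0 ⟨y, hy⟩
      exact congrArg Subtype.val this
    · intro a b ha hb
      rw [smul_add, ha, hb, add_zero]
  rw [smul_eq_mul, mul_one] at h1
  have h2 := congrArg (fun r => MonoidAlgebra.coeffLinearEquiv (S := ℂ) (M := G) ℂ r x) h1
  classical
  simpa [hz, map_sum, Finsupp.single_apply] using h2

/-- There are finitely many irreducible characters, since they are linearly independent. -/
lemma irred_finite (G : Type) [Group G] [Fintype G] : {χ : G → ℂ | IsIrredChar G χ}.Finite := by
  have hli : LinearIndependent ℂ (Subtype.val : {χ : G → ℂ | IsIrredChar G χ} → (G → ℂ)) := by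
    rw [linearIndependent_iff']
    intro s c hc ψ hψ
    have h1 : ∑ g, (∑ χ ∈ s, c χ • (χ : G → ℂ)) g * ψ.1 g⁻¹ = c ψ * Fintype.card G := by
      simp only [Finset.sum_apply, Pi.smul_apply, smul_eq_mul, Finset.sum_mul]
      rw [Finset.sum_comm, Finset.sum_eq_single_of_mem ψ hψ]
      · rw [← irred_norm ψ.1 ψ.2, Finset.mul_sum]
        exact Finset.sum_congr rfl fun g _ => by ring
      · intro χ _ hne
        simp only [mul_assoc, ← Finset.mul_sum]
        rw [irred_orth χ.1 ψ.1 χ.2 ψ.2 (fun h => hne (Subtype.ext h)), mul_zero]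
    rw [hc] at h1
    simpa using h1.symm
  exact hli.setFinite

/-- Column orthogonality. For fixed `y`, both sides are class functions of `x` with the same inner
product with every irreducible character. -/
lemma column_orth {G : Type} [Group G] [Fintype G] [DecidableEq G] (x y : G) :
    ∑ χ ∈ (irred_finite G).toFinset, χ x * χ y⁻¹ =
      ∑ σ : G, if σ⁻¹ * x * σ = y then 1 else 0 := by
  -- The inverse on `x` makes the pairing `∑ F ψ` in `class_fun_zero` the Hermitian one.
  let F : G → ℂ := fun x => ∑ χ ∈ (irred_finite G).toFinset, χ x⁻¹ * χ y⁻¹ -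
      ∑ σ : G, if σ⁻¹ * x⁻¹ * σ = y then 1 else 0
  have hF : ∀ g h, F (g * h * g⁻¹) = F h := by
    intro g h
    simp only [F]
    congr 1
    · refine Finset.sum_congr rfl fun χ hχ => ?_
      have : (g * h * g⁻¹)⁻¹ = g * h⁻¹ * g⁻¹ := by group
      rw [this, irred_conj χ (by simpa using hχ)]
    · refine Fintype.sum_equiv (Equiv.mulLeft g⁻¹) _ _ fun σ => ?_
      simp [mul_assoc]
  have h0 : ∀ ψ, IsIrredChar G ψ → ∑ g, F g * ψ g = 0 := by
    intro ψ hψ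
    simp only [F, sub_mul, Finset.sum_sub_distrib, Finset.sum_mul]
    rw [sub_eq_zero, Finset.sum_comm, Finset.sum_eq_single_of_mem ψ (by simpa using hψ)]
    · have h1 : ∑ g, ψ g⁻¹ * ψ y⁻¹ * ψ g = Fintype.card G * ψ y⁻¹ := by
        rw [← irred_norm ψ hψ, Finset.sum_mul]
        exact Finset.sum_congr rfl fun g _ => by ring
      rw [h1, Finset.sum_comm]
      have h2 : ∀ σ : G, ∑ g, (if σ⁻¹ * g⁻¹ * σ = y then (1 : ℂ) else 0) * ψ g = ψ y⁻¹ := by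
        intro σ
        rw [Finset.sum_eq_single (σ * y⁻¹ * σ⁻¹)]
        · rw [if_pos (by group), one_mul, irred_conj ψ hψ]
        · intro g _ hg
          rw [if_neg, zero_mul]
          rintro rfl
          exact hg (by group)
        · simp
      rw [Finset.sum_congr rfl fun σ _ => h2 σ]
      simp
    · intro χ hχ hne
      have := irred_orth ψ χ hψ (by simpa using hχ) hne.symm
      calc ∑ g, χ g⁻¹ * χ y⁻¹ * ψ g = χ y⁻¹ * ∑ g, ψ g * χ g⁻¹ := by
            rw [Finset.mul_sum]
            exact Finset.sum_congr rfl fun g _ => by ring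
        _ = 0 := by rw [this, mul_zero]
  have h := class_fun_zero F hF h0 x⁻¹
  simp only [F, inv_inv] at h
  exact sub_eq_zero.1 h

/-! ### The weight of a set at a character -/

/-- The weight `∑_{a, a' ∈ A} χ(a'⁻¹ a)` of `A` at the irreducible character `χ`, defined by the
expression `(χ(1) / |G|) ∑_σ |∑_{a ∈ A} χ(a⁻¹ σ)|²`, which is visibly real and nonnegative. Up to
normalization it is the squared `L²` norm of the `χ`-component of the indicator function of `A`;
`wt_eq` shows that the two expressions agree. -/
noncomputable def wt {G : Type} [Group G] [Fintype G] (A : Finset G) (χ : G → ℂ) : ℝ :=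
  ‖χ 1‖ / Fintype.card G * ∑ σ : G, ‖∑ a ∈ A, χ (a⁻¹ * σ)‖ ^ 2

lemma wt_nonneg {G : Type} [Group G] [Fintype G] (A : Finset G) (χ : G → ℂ) : 0 ≤ wt A χ := by
  unfold wt; positivity

/-- The convolution identity `χ ∗ χ = χ / χ(1)`. -/
lemma conv_self {G : Type} [Group G] [Fintype G] (χ : G → ℂ) (hχ : IsIrredChar G χ) (x : G) :
    ∑ g, χ g⁻¹ * χ (x * g) = Fintype.card G / χ 1 * χ x := by
  rw [conv_irred χ hχ (fun g => χ g⁻¹) _ x, irred_norm χ hχ]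
  intro g h
  have : (g * h * g⁻¹)⁻¹ = g * h⁻¹ * g⁻¹ := by group
  simp only [this, irred_conj χ hχ]

lemma wt_eq {G : Type} [Group G] [Fintype G] (A : Finset G) (χ : G → ℂ) (hχ : IsIrredChar G χ) :
    (wt A χ : ℂ) = ∑ a ∈ A, ∑ a' ∈ A, χ (a'⁻¹ * a) := by
  obtain ⟨d, hd, h1⟩ := irred_one χ hχ
  have hd' : (d : ℂ) ≠ 0 := by exact_mod_cast hd.ne'
  have hn : (Fintype.card G : ℂ) ≠ 0 := by simp
  have key : ((∑ σ : G, ‖∑ a ∈ A, χ (a⁻¹ * σ)‖ ^ 2 : ℝ) : ℂ) =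
      Fintype.card G / χ 1 * ∑ a ∈ A, ∑ a' ∈ A, χ (a'⁻¹ * a) := by
    push_cast
    simp only [← Complex.conj_mul', map_sum, ← irred_inv χ hχ, Finset.sum_mul_sum]
    rw [Finset.sum_comm, Finset.mul_sum]
    refine Finset.sum_congr rfl fun a _ => ?_
    rw [Finset.sum_comm, Finset.mul_sum]
    refine Finset.sum_congr rfl fun a' _ => ?_
    rw [← conv_self χ hχ]
    refine Fintype.sum_equiv (Equiv.mulLeft a⁻¹) _ _ fun σ => ?_
    simp [mul_assoc]
  unfold wt
  rw [Complex.ofReal_mul, key, h1]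
  simp
  field_simp

/-- `Re χ(x) ≤ χ(1)`, by the Cauchy-Schwarz inequality applied to `conv_self`. -/
lemma re_le {G : Type} [Group G] [Fintype G] (χ : G → ℂ) (hχ : IsIrredChar G χ) (x : G) :
    (χ x).re ≤ ‖χ 1‖ := by
  obtain ⟨d, hd, h1⟩ := irred_one χ hχ
  have hd' : (0 : ℝ) < d := by exact_mod_cast hd
  have hn : (0 : ℝ) < Fintype.card G := by exact_mod_cast Fintype.card_pos
  have e1 : ∑ g, ‖χ g‖ ^ 2 = (Fintype.card G : ℝ) := by
    have := irred_norm χ hχ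
    simp only [irred_inv χ hχ, Complex.conj_mul'] at this
    exact_mod_cast this
  have e2 : ∑ g, ‖χ (x * g)‖ ^ 2 = (Fintype.card G : ℝ) := by
    rw [← e1]
    exact Fintype.sum_equiv (Equiv.mulLeft x) _ _ fun σ => rfl
  have e3 := congrArg Complex.re (conv_self χ hχ x)
  have e4 : (Fintype.card G / χ 1 * χ x : ℂ).re = (Fintype.card G / d : ℝ) * (χ x).re := by
    rw [h1, ← Complex.re_ofReal_mul]; push_cast; rfl
  rw [e4, Complex.re_sum] at e3
  have e5 : ∑ g, (χ g⁻¹ * χ (x * g)).re ≤ ∑ g, (‖χ g‖ ^ 2 + ‖χ (x * g)‖ ^ 2) / 2 := by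
    refine Finset.sum_le_sum fun g _ => ?_
    have : ‖χ g⁻¹ * χ (x * g)‖ = ‖χ g‖ * ‖χ (x * g)‖ := by
      rw [norm_mul, irred_inv χ hχ, RCLike.norm_conj]
    have h2 := Complex.re_le_norm (χ g⁻¹ * χ (x * g))
    nlinarith [sq_nonneg (‖χ g‖ - ‖χ (x * g)‖)]
  rw [← Finset.sum_div, Finset.sum_add_distrib, e1, e2, e3] at e5
  rw [h1, Complex.norm_natCast]
  rw [div_mul_eq_mul_div, div_le_iff₀ hd'] at e5
  nlinarith

lemma wt_le {G : Type} [Group G] [Fintype G] (A : Finset G) (χ : G → ℂ) (hχ : IsIrredChar G χ) :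
    wt A χ ≤ ‖χ 1‖ * (A.card : ℝ) ^ 2 := by
  have h := congrArg Complex.re (wt_eq A χ hχ)
  rw [Complex.ofReal_re] at h
  rw [h]
  simp only [Complex.re_sum]
  calc _ ≤ ∑ a ∈ A, ∑ a' ∈ A, ‖χ 1‖ :=
        Finset.sum_le_sum fun a _ => Finset.sum_le_sum fun a' _ => re_le χ hχ _
    _ = _ := by simp; ring

/-- Parseval's identity for the indicator function of `B`: column orthogonality at `y = 1`. -/
lemma sum_wt {G : Type} [Group G] [Fintype G] (B : Finset G) :
    ∑ χ ∈ (irred_finite G).toFinset, ‖χ 1‖ * wt B χ = Fintype.card G * B.card := by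
  classical
  have : ((∑ χ ∈ (irred_finite G).toFinset, ‖χ 1‖ * wt B χ : ℝ) : ℂ) =
      Fintype.card G * B.card := by
    push_cast
    calc _ = ∑ χ ∈ (irred_finite G).toFinset, ∑ a ∈ B, ∑ a' ∈ B, χ (a'⁻¹ * a) * χ 1⁻¹ := by
          refine Finset.sum_congr rfl fun χ hχ => ?_
          have hχ' : IsIrredChar G χ := by simpa using hχ
          obtain ⟨d, hd, h1⟩ := irred_one χ hχ'
          rw [wt_eq B χ hχ', inv_one, h1]
          simp [Finset.mul_sum, mul_comm]
      _ = ∑ a ∈ B, ∑ a' ∈ B, ∑ χ ∈ (irred_finite G).toFinset, χ (a'⁻¹ * a) * χ 1⁻¹ := by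
          rw [Finset.sum_comm]
          exact Finset.sum_congr rfl fun a _ => Finset.sum_comm
      _ = ∑ a ∈ B, ∑ a' ∈ B, if a' = a then (Fintype.card G : ℂ) else 0 := by
          refine Finset.sum_congr rfl fun a _ => Finset.sum_congr rfl fun a' _ => ?_
          rw [column_orth]
          have : ∀ σ : G, σ⁻¹ * (a'⁻¹ * a) * σ = 1 ↔ a' = a := fun σ => by
            rw [mul_assoc, inv_mul_eq_one, right_eq_mul, inv_mul_eq_one]
          simp [this]
      _ = _ := by
          simp [mul_comm]
  exact_mod_cast this

/-- The total multiplicative energy of the conjugates of `A` with `B`, in terms of weights. A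
coincidence `(σ⁻¹aσ) b = (σ⁻¹a'σ) b'` says that `σ` conjugates `a'⁻¹a` to `b'b⁻¹`, and column
orthogonality counts such `σ`. -/
lemma sum_energy {G : Type} [Group G] [Fintype G] [DecidableEq G] (A B : Finset G) :
    ∑ σ : G, (Finset.mulEnergy (conjFinset A σ) B : ℝ) =
      ∑ χ ∈ (irred_finite G).toFinset, wt A χ * wt B χ := by
  have hE : ∀ σ : G, (Finset.mulEnergy (conjFinset A σ) B : ℂ) =
      ∑ a ∈ A, ∑ a' ∈ A, ∑ b ∈ B, ∑ b' ∈ B,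
        if σ⁻¹ * (a'⁻¹ * a) * σ = b' * b⁻¹ then 1 else 0 := by
    intro σ
    have hinj : Function.Injective fun a : G => σ⁻¹ * a * σ := fun a b h => by simpa using h
    simp only [Finset.mulEnergy, Finset.card_filter, Finset.sum_product, conjFinset,
      Finset.sum_image hinj.injOn]
    push_cast
    refine Finset.sum_congr rfl fun a _ => Finset.sum_congr rfl fun a' _ =>
      Finset.sum_congr rfl fun b _ => Finset.sum_congr rfl fun b' _ => ?_
    congr 1
    rw [eq_mul_inv_iff_mul_eq, eq_iff_iff, ← inv_mul_eq_iff_eq_mul]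
    simp [mul_assoc]
  have : ((∑ σ : G, (Finset.mulEnergy (conjFinset A σ) B : ℝ) : ℝ) : ℂ) =
      ((∑ χ ∈ (irred_finite G).toFinset, wt A χ * wt B χ : ℝ) : ℂ) := by
    push_cast
    calc _ = ∑ a ∈ A, ∑ a' ∈ A, ∑ b ∈ B, ∑ b' ∈ B, ∑ χ ∈ (irred_finite G).toFinset,
          χ (a'⁻¹ * a) * χ (b' * b⁻¹)⁻¹ := by
          simp only [hE, column_orth]
          rw [Finset.sum_comm]
          refine Finset.sum_congr rfl fun a _ => ?_
          rw [Finset.sum_comm]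
          refine Finset.sum_congr rfl fun a' _ => ?_
          rw [Finset.sum_comm]
          refine Finset.sum_congr rfl fun b _ => ?_
          rw [Finset.sum_comm]
      _ = ∑ χ ∈ (irred_finite G).toFinset, ∑ a ∈ A, ∑ a' ∈ A, ∑ b ∈ B, ∑ b' ∈ B,
          χ (a'⁻¹ * a) * χ (b' * b⁻¹)⁻¹ := by
          symm
          rw [Finset.sum_comm]
          refine Finset.sum_congr rfl fun a _ => ?_
          rw [Finset.sum_comm]
          refine Finset.sum_congr rfl fun a' _ => ?_
          rw [Finset.sum_comm]
          refine Finset.sum_congr rfl fun b _ => ?_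
          rw [Finset.sum_comm]
      _ = _ := by
          refine Finset.sum_congr rfl fun χ hχ => ?_
          have hχ' : IsIrredChar G χ := by simpa using hχ
          have hc : ∀ b b', χ (b' * b⁻¹)⁻¹ = χ (b'⁻¹ * b) := fun b b' => by
            rw [← irred_conj χ hχ' b' (b'⁻¹ * b)]
            congr 1; group
          simp only [hc]
          rw [wt_eq A χ hχ', wt_eq B χ hχ']
          simp only [Finset.sum_mul]
          simp only [Finset.mul_sum]
  exact_mod_cast this

/-! ### The average over conjugates -/

theorem wrapping_up (G : Type) [Group G] [Fintype G] [DecidableEq G]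
    (A B : Finset G) (hA : A.Nonempty) (hB : B.Nonempty)
    (f : G → ℂ) (hf : ∀ x : G, f x = if x ∈ A then (Fintype.card G : ℂ) / (A.card : ℂ) else 0)
    (K δ : ℝ) (hK : 1 < K) (hδ : 0 < δ)
    (S : Set (G → ℂ)) (hS : ∀ χ ∈ S, IsIrredChar G χ)
    (hproj : ∀ χ ∈ S,
      (Fintype.card G : ℝ)⁻¹ * ∑ σ : G, ‖χ 1 * conv f χ σ‖ ^ 2 ≤ ‖χ 1‖ ^ 2 / K)
    (hsum : ∑ᶠ χ ∈ {χ : G → ℂ | IsIrredChar G χ ∧ χ ∉ S}, ‖χ 1‖ ^ 2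
      ≤ δ * (Fintype.card G : ℝ) / (K * (B.card : ℝ))) :
    ((Fintype.card G : ℝ)⁻¹ * ∑ σ : G, ((conjFinset A σ * B).card : ℝ)⁻¹
        ≤ (1 + δ) / (K * (B.card : ℝ))) ∧
      ∃ σ : G, ((conjFinset A σ * B).card : ℝ) ≥ (K / (1 + δ)) * (B.card : ℝ) := by
  classical
  have hα : (0 : ℝ) < A.card := by exact_mod_cast hA.card_pos
  have hβ : (0 : ℝ) < B.card := by exact_mod_cast hB.card_pos
  have hn : (0 : ℝ) < Fintype.card G := by exact_mod_cast Fintype.card_pos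
  have hK0 : 0 < K := by linarith
  have hcpos : ∀ σ : G, (0 : ℝ) < (conjFinset A σ * B).card := fun σ => by
    exact_mod_cast ((hA.image _).mul hB).card_pos
  have hcard : ∀ σ : G, (conjFinset A σ).card = A.card := fun σ =>
    Finset.card_image_of_injective _ fun a b h => by simpa using h
  have hwS : ∀ χ ∈ S, wt A χ ≤ (A.card : ℝ) ^ 2 / K * ‖χ 1‖ := by
    intro χ hχ
    obtain ⟨d, hd, h1⟩ := irred_one χ (hS χ hχ)
    have hd' : (0 : ℝ) < d := by exact_mod_cast hd
    have hc : ∀ σ, ‖χ 1 * conv f χ σ‖ ^ 2 =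
        (d : ℝ) ^ 2 / (A.card : ℝ) ^ 2 * ‖∑ a ∈ A, χ (a⁻¹ * σ)‖ ^ 2 := by
      intro σ
      have : conv f χ σ = (A.card : ℂ)⁻¹ * ∑ a ∈ A, χ (a⁻¹ * σ) := by
        have hnC : (Fintype.card G : ℂ) ≠ 0 := by simp
        simp only [conv, hf, ite_mul, zero_mul, Finset.sum_ite_mem, Finset.univ_inter,
          ← Finset.mul_sum]
        field_simp
      rw [this, h1]
      simp
      ring
    have h := hproj χ hχ
    simp only [hc, ← Finset.mul_sum] at h
    unfold wt
    rw [h1, Complex.norm_natCast] at h ⊢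
    -- The left side of `h` is `χ(1) * wt A χ / |A|²`.
    set T := ∑ σ : G, ‖∑ a ∈ A, χ (a⁻¹ * σ)‖ ^ 2
    have h' := mul_le_mul_of_nonneg_left h (show 0 ≤ (A.card : ℝ) ^ 2 / d by positivity)
    calc _ = (A.card : ℝ) ^ 2 / d * ((Fintype.card G : ℝ)⁻¹ * (d ^ 2 / A.card ^ 2 * T)) := by
          field_simp
      _ ≤ _ := h'
      _ = _ := by field_simp
  have hsum' : ∑ χ ∈ (irred_finite G).toFinset, (if χ ∈ S then 0 else ‖χ 1‖ ^ 2) ≤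
      δ * (Fintype.card G : ℝ) / (K * (B.card : ℝ)) := by
    have hset : {χ : G → ℂ | IsIrredChar G χ ∧ χ ∉ S} =
        (((irred_finite G).toFinset.filter (· ∉ S) : Finset (G → ℂ)) : Set (G → ℂ)) := by
      ext χ; simp
    rw [hset, finsum_mem_coe_finset, Finset.sum_filter] at hsum
    simpa [ite_not] using hsum
  have hE : ∑ χ ∈ (irred_finite G).toFinset, wt A χ * wt B χ ≤
      (A.card : ℝ) ^ 2 / K * (Fintype.card G * B.card) +
      (A.card : ℝ) ^ 2 * (B.card : ℝ) ^ 2 * (δ * (Fintype.card G : ℝ) / (K * (B.card : ℝ))) := by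
    calc _ ≤ ∑ χ ∈ (irred_finite G).toFinset, ((A.card : ℝ) ^ 2 / K * (‖χ 1‖ * wt B χ) +
          (A.card : ℝ) ^ 2 * (B.card : ℝ) ^ 2 * (if χ ∈ S then 0 else ‖χ 1‖ ^ 2)) := by
          refine Finset.sum_le_sum fun χ hχ => ?_
          have hχ' : IsIrredChar G χ := by simpa using hχ
          have hB0 := wt_nonneg B χ
          split_ifs with hs
          · have := mul_le_mul_of_nonneg_right (hwS χ hs) hB0
            linarith
          · have h1 := mul_le_mul (wt_le A χ hχ') (wt_le B χ hχ') hB0 (by positivity)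
            have h2 : 0 ≤ (A.card : ℝ) ^ 2 / K * (‖χ 1‖ * wt B χ) := by positivity
            nlinarith
      _ ≤ _ := by
          rw [Finset.sum_add_distrib, ← Finset.mul_sum, ← Finset.mul_sum, sum_wt]
          gcongr
  have hCS : ∀ σ : G, ((conjFinset A σ * B).card : ℝ)⁻¹ ≤
      ((A.card : ℝ) ^ 2 * (B.card : ℝ) ^ 2)⁻¹ * (Finset.mulEnergy (conjFinset A σ) B : ℝ) := by
    intro σ
    have h := Finset.le_card_mul_mul_mulEnergy (conjFinset A σ) B
    rw [hcard] at h
    have h' : (A.card : ℝ) ^ 2 * (B.card : ℝ) ^ 2 ≤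
      (conjFinset A σ * B).card * Finset.mulEnergy (conjFinset A σ) B := by exact_mod_cast h
    have := hcpos σ
    rw [inv_mul_eq_div, le_div_iff₀ (by positivity), inv_mul_le_iff₀ this]
    exact h'
  have main : (Fintype.card G : ℝ)⁻¹ * ∑ σ : G, ((conjFinset A σ * B).card : ℝ)⁻¹
        ≤ (1 + δ) / (K * (B.card : ℝ)) := by
    calc _ ≤ (Fintype.card G : ℝ)⁻¹ * ∑ σ : G, ((A.card : ℝ) ^ 2 * (B.card : ℝ) ^ 2)⁻¹ *
            (Finset.mulEnergy (conjFinset A σ) B : ℝ) := by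
          gcongr with σ; exact hCS σ
      _ ≤ (Fintype.card G : ℝ)⁻¹ * (((A.card : ℝ) ^ 2 * (B.card : ℝ) ^ 2)⁻¹ *
            ((A.card : ℝ) ^ 2 / K * (Fintype.card G * B.card) +
      (A.card : ℝ) ^ 2 * (B.card : ℝ) ^ 2 * (δ * (Fintype.card G : ℝ) / (K * (B.card : ℝ))))) := by
          rw [← Finset.mul_sum, sum_energy]
          gcongr
      _ = _ := by field_simp
  refine ⟨main, ?_⟩
  by_contra! hcon
  have hlt : ∑ σ : G, (1 + δ) / (K * (B.card : ℝ)) <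
      ∑ σ : G, ((conjFinset A σ * B).card : ℝ)⁻¹ := by
    refine Finset.sum_lt_sum_of_nonempty Finset.univ_nonempty fun σ _ => ?_
    have h1 : (1 + δ) / (K * (B.card : ℝ)) = (K / (1 + δ) * B.card)⁻¹ := by
      field_simp
    rw [h1]
    exact inv_strictAnti₀ (hcpos σ) (hcon σ)
  rw [Finset.sum_const, Finset.card_univ, nsmul_eq_mul] at hlt
  rw [inv_mul_le_iff₀ hn] at main
  linarith
end

section
/- There exists an absolute constant c > 0 such that the following holds. Let ε ∈ (0, 1/4), let G be a finite group, and let A ⊆ G be a subset such that there exists g ∈ A⁻¹A with |χ(g)| ≤ (1−ε)·χ(1) for every nontrivial complex irreducible character χ of G. Then for every nonempty subset B ⊆ G with |B|/|G| < c·ε, there exists σ ∈ G with |A^σ B| ≥ (1−ε)^{−c}·|B|. -/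
/-! The union of the two translates `a^σ B` and `b^σ B` lies in `A^σ B`, so it suffices to find `σ`
for which they overlap little, i.e. to bound `|B ∩ g^σ B|` for `g = a⁻¹b`. On average over `σ` this
overlap is `⟪T 1_B, 1_B⟫`, with `T` the average of the translations by the conjugates of `g`. As a
central element of the group algebra, `T` is the scalar `χ(g)/χ(1)` on an irreducible constituent
with character `χ`, and the hypothesis bounds it by `1 - ε` off the trivial character.

Concretely, `centralOp ρ g = ∑_σ (ρ(σ⁻¹gσ) + ρ(σ⁻¹g⁻¹σ) - 2ρ(σ))` is a symmetric `G`-equivariant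
operator. The added inverses make it symmetric, and the last term kills the trivial
constituent. Its largest Rayleigh quotient is an eigenvalue (`re_inner_le_of_eigenvalue_le`), the
eigenspace contains an irreducible subrepresentation (`exists_irreducible_le`), and the trace there
shows that the eigenvalue is at most `2|G|(1 - ε)` (`eigenvalue_le`). In the regular
representation at `1_B` this gives some `σ` with `|B ∩ g^σ B| ≤ (1 - ε)|B| + |B|²/|G|`, whence
`|A^σ B| ≥ (1 + ε - |B|/|G|)|B|`; with `c = 1/4` the factor is at least `(1 - ε)^(-1/4)`. -/

open scoped Pointwise

/-! ### Irreducible characters and subrepresentations -/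

section Characters

variable {G : Type} [Group G] [Fintype G]

lemma isIrredChar_of_isIrreducible {V : Type} [AddCommGroup V] [Module ℂ V] [FiniteDimensional ℂ V]
    (ρ : Representation ℂ G V) [ρ.IsIrreducible] : IsIrredChar G ρ.character := by
  have : Invertible (Nat.card G : ℂ) := invertibleOfNonzero (by simp)
  refine ⟨FDRep.of ρ, ?_, rfl⟩
  rw [FDRep.simple_iff_char_is_norm_one]
  have h := Representation.char_orthonormal ρ ρ
  rw [if_pos ⟨Representation.Equiv.refl ρ⟩, inv_mul_eq_one₀ (by simp)] at h
  exact h.symm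

/-- The character of the dual of an irreducible representation is irreducible. -/
lemma IsIrredChar.inv {χ : G → ℂ} (h : IsIrredChar G χ) : IsIrredChar G (fun g => χ g⁻¹) := by
  obtain ⟨V, hV, rfl⟩ := h
  refine ⟨FDRep.of (Representation.dual V.ρ), ?_, funext fun g => FDRep.char_dual V g⟩
  rw [FDRep.simple_iff_char_is_norm_one] at hV ⊢
  simp only [FDRep.char_dual]
  rw [← hV]
  exact Finset.sum_congr rfl fun g _ => by rw [mul_comm, inv_inv]

omit [Fintype G] in
lemma exists_irreducible_le {V : Type} [AddCommGroup V] [Module ℂ V] [FiniteDimensional ℂ V]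
    (ρ : Representation ℂ G V) (E : Subrepresentation ρ) (hE : E.toSubmodule ≠ ⊥) :
    ∃ W : Subrepresentation ρ, W.toSubmodule ≤ E.toSubmodule ∧
      W.toRepresentation.IsIrreducible := by
  -- `W` is a nonzero subrepresentation of `E` of minimal dimension.
  obtain ⟨W, ⟨hWE, hW0⟩, hmin⟩ := (measure fun W : Subrepresentation ρ =>
    Module.finrank ℂ W.toSubmodule).wf.has_min
    {W | W.toSubmodule ≤ E.toSubmodule ∧ W.toSubmodule ≠ ⊥} ⟨E, le_rfl, hE⟩
  refine ⟨W, hWE, ?_⟩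
  have hne : (⊥ : Subrepresentation W.toRepresentation) ≠ ⊤ := fun h => by
    have h1 : (⊥ : Submodule ℂ W.toSubmodule) = ⊤ := congrArg Subrepresentation.toSubmodule h
    apply hW0
    rw [← Submodule.map_subtype_top W.toSubmodule, ← h1, Submodule.map_bot]
  have : Nontrivial (Subrepresentation W.toRepresentation) := ⟨⟨_, _, hne⟩⟩
  refine IsSimpleOrder.mk fun U => ?_
  by_cases hU : U.toSubmodule = ⊥
  · exact Or.inl (Subrepresentation.toSubmodule_injective hU)
  right
  let U' : Subrepresentation ρ :=
    { toSubmodule := U.toSubmodule.map W.toSubmodule.subtype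
      apply_mem_toSubmodule := by
        rintro g _ ⟨u, hu, rfl⟩
        exact ⟨_, U.apply_mem_toSubmodule g hu, rfl⟩ }
  have hle : U'.toSubmodule ≤ W.toSubmodule := Submodule.map_subtype_le _ _
  have h0 : U'.toSubmodule ≠ ⊥ := fun h =>
    hU (Submodule.map_injective_of_injective W.toSubmodule.injective_subtype
      (h.trans (Submodule.map_bot _).symm))
  have h1 : U'.toSubmodule = W.toSubmodule :=
    Submodule.eq_of_le_of_finrank_le hle (not_lt.1 (hmin U' ⟨hle.trans hWE, h0⟩))
  apply Subrepresentation.toSubmodule_injective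
  apply Submodule.map_injective_of_injective W.toSubmodule.injective_subtype
  exact h1.trans (Submodule.map_subtype_top _).symm

end Characters

/-! ### The averaging operator and its spectrum -/

section Operator

variable {G : Type} [Group G] [Fintype G]

/-- The operator `∑_σ (ρ(σ⁻¹gσ) + ρ(σ⁻¹g⁻¹σ) - 2ρ(σ))`, the action under `ρ` of a central element
of the group algebra. It is not divided by `|G|`. -/
noncomputable def centralOp {V : Type} [AddCommGroup V] [Module ℂ V] (ρ : Representation ℂ G V)
    (g : G) : V →ₗ[ℂ] V :=
  ∑ σ : G, (ρ (σ⁻¹ * g * σ) + ρ (σ⁻¹ * g⁻¹ * σ) - (2 : ℂ) • ρ σ)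

lemma centralOp_apply {V : Type} [AddCommGroup V] [Module ℂ V] (ρ : Representation ℂ G V)
    (g : G) (v : V) : centralOp ρ g v =
      ∑ σ : G, (ρ (σ⁻¹ * g * σ) v + ρ (σ⁻¹ * g⁻¹ * σ) v - (2 : ℂ) • ρ σ v) := by
  simp [centralOp]

lemma centralOp_comm {V : Type} [AddCommGroup V] [Module ℂ V] (ρ : Representation ℂ G V)
    (g k : G) (v : V) : centralOp ρ g (ρ k v) = ρ k (centralOp ρ g v) := by
  have hmul : ∀ a b : G, ∀ w : V, ρ a (ρ b w) = ρ (a * b) w := fun a b w => by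
    rw [map_mul]; rfl
  simp only [centralOp_apply, map_sum, map_add, map_sub, map_smul, hmul, Finset.sum_add_distrib,
    Finset.sum_sub_distrib]
  have key : ∀ h : G, ∑ σ : G, ρ (σ⁻¹ * h * σ * k) v = ∑ σ : G, ρ (k * (σ⁻¹ * h * σ)) v :=
    fun h => Fintype.sum_equiv (Equiv.mulRight k) _ _ fun σ => by
      simp [mul_assoc]
  congr 1
  · rw [key, key]
  · rw [← Finset.smul_sum, ← Finset.smul_sum]
    congr 1
    exact (Equiv.sum_comp (Equiv.mulRight k) fun σ => ρ σ v).trans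
      (Equiv.sum_comp (Equiv.mulLeft k) fun σ => ρ σ v).symm

lemma trace_centralOp {V : Type} [AddCommGroup V] [Module ℂ V]
    (ρ : Representation ℂ G V) (g : G) :
    LinearMap.trace ℂ V (centralOp ρ g) =
      Fintype.card G * (ρ.character g + ρ.character g⁻¹) - 2 * ∑ σ : G, ρ.character σ := by
  have hc : ∀ h σ : G, LinearMap.trace ℂ V (ρ (σ⁻¹ * h * σ)) = ρ.character h := fun h σ => by
    have := ρ.char_conj h σ⁻¹
    rwa [inv_inv] at this
  simp only [centralOp, map_sum, map_add, map_sub, map_smul, hc, Finset.sum_sub_distrib,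
    Finset.sum_const, Finset.card_univ, nsmul_eq_mul, smul_eq_mul, Finset.mul_sum]
  rfl

lemma centralOp_isSymmetric {V : Type} [NormedAddCommGroup V] [InnerProductSpace ℂ V]
    (ρ : Representation ℂ G V) (hρ : ∀ h x y, inner ℂ (ρ h x) y = inner ℂ x (ρ h⁻¹ y)) (g : G) :
    (centralOp ρ g).IsSymmetric := by
  intro x y
  simp only [centralOp_apply, sum_inner, inner_sum, inner_add_left, inner_add_right,
    inner_sub_left, inner_sub_right, inner_smul_left, inner_smul_right, hρ,
    Finset.sum_sub_distrib, Finset.sum_add_distrib, ← Finset.mul_sum]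
  have e : ∑ σ : G, inner ℂ x (ρ σ⁻¹ y) = ∑ σ : G, inner ℂ x (ρ σ y) :=
    Fintype.sum_equiv (Equiv.inv G) _ _ fun _ => rfl
  rw [e]
  simp [mul_assoc, add_comm, Complex.conj_ofNat]

/-- A symmetric operator whose real eigenvalues are at most `C` has quadratic form at most `C`. -/
lemma re_inner_le_of_eigenvalue_le {V : Type} [NormedAddCommGroup V] [InnerProductSpace ℂ V]
    [FiniteDimensional ℂ V] {T : V →ₗ[ℂ] V} (hT : T.IsSymmetric) {C : ℝ}
    (hC : ∀ μ : ℝ, Module.End.HasEigenvalue T (μ : ℂ) → μ ≤ C) (x : V) :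
    (inner ℂ (T x) x).re ≤ C * ‖x‖ ^ 2 := by
  by_cases hx : x = 0
  · simp [hx]
  have : Nontrivial V := ⟨⟨x, 0, hx⟩⟩
  have h := hC _ hT.hasEigenvalue_iSup_of_finiteDimensional
  have hb : BddAbove (Set.range fun x : {x : V // x ≠ 0} =>
      RCLike.re (inner ℂ (T x) (x : V)) / ‖(x : V)‖ ^ 2) := by
    refine ⟨‖LinearMap.toContinuousLinearMap T‖, ?_⟩
    rintro _ ⟨y, rfl⟩
    exact (le_abs_self _).trans ((LinearMap.toContinuousLinearMap T).rayleighQuotient_le_norm y)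
  have h2 := (le_ciSup hb ⟨x, hx⟩).trans h
  have hpos : 0 < ‖x‖ ^ 2 := by positivity
  exact (div_le_iff₀ hpos).1 h2

/-- The trace on an irreducible piece of the eigenspace bounds the eigenvalue: for a nontrivial
character the sum of its values is a nonnegative multiple of `|G|`, and for the trivial
character the eigenvalue is `0`. -/
lemma eigenvalue_le {V : Type} [AddCommGroup V] [Module ℂ V] [FiniteDimensional ℂ V]
    (ρ : Representation ℂ G V) {g : G} {ε : ℝ} (hε : ε ≤ 1)
    (hg : ∀ χ : G → ℂ, IsIrredChar G χ → χ ≠ (fun _ => 1) → ‖χ g‖ ≤ (1 - ε) * ‖χ 1‖)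
    {μ : ℝ} (hμ : Module.End.HasEigenvalue (centralOp ρ g) (μ : ℂ)) :
    μ ≤ 2 * Fintype.card G * (1 - ε) := by
  have : Invertible (Nat.card G : ℂ) := invertibleOfNonzero (by simp)
  let E : Subrepresentation ρ :=
    { toSubmodule := Module.End.eigenspace (centralOp ρ g) (μ : ℂ)
      apply_mem_toSubmodule := fun k v hv => by
        rw [Module.End.mem_eigenspace_iff] at hv ⊢
        rw [centralOp_comm, hv, map_smul] }
  obtain ⟨W, hWE, hW⟩ := exists_irreducible_le ρ E hμ
  set τ := W.toRepresentation
  have hop : centralOp τ g = (μ : ℂ) • LinearMap.id := by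
    ext w
    have h1 : centralOp ρ g (w : V) = (μ : ℂ) • (w : V) :=
      Module.End.mem_eigenspace_iff.1 (hWE w.2)
    rw [centralOp_apply] at h1
    rw [centralOp_apply]
    simp only [LinearMap.smul_apply, LinearMap.id_apply, Submodule.coe_smul, ← h1]
    push_cast
    rfl
  have htr := trace_centralOp τ g
  have hirr := isIrredChar_of_isIrreducible τ
  have hone : τ.character 1 = (Module.finrank ℂ W.toSubmodule : ℂ) := τ.char_one
  have hd : 0 < Module.finrank ℂ W.toSubmodule := by
    rw [Module.finrank_pos_iff]
    by_contra hn
    rw [not_nontrivial_iff_subsingleton] at hn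
    apply bot_ne_top (α := Subrepresentation τ)
    apply Subrepresentation.toSubmodule_injective
    exact Subsingleton.elim (α := Submodule ℂ W.toSubmodule) _ _
  have hsum := τ.card_inv_mul_sum_char_eq_finrank
  have hG : (0 : ℝ) < Fintype.card G := by exact_mod_cast Fintype.card_pos
  have hGc : (Fintype.card G : ℂ) ≠ 0 := by exact_mod_cast hG.ne'
  rw [hop, map_smul, LinearMap.trace_id, smul_eq_mul] at htr
  rw [Nat.card_eq_fintype_card, inv_mul_eq_iff_eq_mul₀ hGc] at hsum
  by_cases hχ : τ.character = fun _ => 1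
  · rw [hχ] at hone htr
    simp only at hone
    rw [← hone] at htr
    simp only [Finset.sum_const, Finset.card_univ, nsmul_eq_mul] at htr
    have : (μ : ℂ) = 0 := by linear_combination htr
    rw [Complex.ofReal_eq_zero.1 this]
    have : 0 ≤ 1 - ε := by linarith
    positivity
  · have hχ' : (fun h => τ.character h⁻¹) ≠ fun _ => 1 := fun h =>
      hχ (funext fun x => by simpa using congrFun h x⁻¹)
    have h1 := (Complex.re_le_norm _).trans (hg _ hirr hχ)
    have h2 := (Complex.re_le_norm _).trans (hg _ hirr.inv hχ')
    simp only [inv_one] at h2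
    rw [hone, Complex.norm_natCast] at h1 h2
    rw [hsum] at htr
    have hre := congrArg Complex.re htr
    have hd' : (0 : ℝ) < Module.finrank ℂ W.toSubmodule := by exact_mod_cast hd
    have e1 : ((μ : ℂ) * (Module.finrank ℂ W.toSubmodule : ℂ)).re =
        μ * Module.finrank ℂ W.toSubmodule := by
      rw [Complex.re_ofReal_mul, Complex.natCast_re]
    have e2 : ((Fintype.card G : ℂ) * (τ.character g + τ.character g⁻¹) -
        2 * ((Fintype.card G : ℂ) * (Module.finrank ℂ τ.invariants : ℂ))).re =
        Fintype.card G * ((τ.character g).re + (τ.character g⁻¹).re) -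
        2 * (Fintype.card G * Module.finrank ℂ τ.invariants) := by
      simp
    rw [e1, e2] at hre
    refine le_of_mul_le_mul_right ?_ hd'
    rw [hre]
    have h3 := mul_le_mul_of_nonneg_left (add_le_add h1 h2) hG.le
    have h4 : (0 : ℝ) ≤ Fintype.card G * Module.finrank ℂ τ.invariants := by positivity
    nlinarith

end Operator

/-! ### The regular representation and overlaps of translates -/

section Regular

variable {G : Type} [Group G] [Fintype G]

/-- The left regular representation of `G` on `ℓ²(G)`: `(ρ(h) f)(x) = f(h⁻¹ x)`. -/
noncomputable def regularRep (G : Type) [Group G] [Fintype G] :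
    Representation ℂ G (EuclideanSpace ℂ G) where
  toFun h :=
    { toFun := fun f => WithLp.toLp 2 fun x => f (h⁻¹ * x)
      map_add' := fun _ _ => rfl
      map_smul' := fun _ _ => rfl }
  map_one' := by ext f x; simp
  map_mul' a b := by
    ext f x
    change f ((a * b)⁻¹ * x) = f (b⁻¹ * (a⁻¹ * x))
    simp [mul_assoc]

@[simp] lemma regularRep_apply (h : G) (f : EuclideanSpace ℂ G) (x : G) :
    regularRep G h f x = f (h⁻¹ * x) := rfl

lemma regularRep_unitary (h : G) (x y : EuclideanSpace ℂ G) :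
    inner ℂ (regularRep G h x) y = inner ℂ x (regularRep G h⁻¹ y) := by
  simp only [PiLp.inner_apply, regularRep_apply]
  exact Fintype.sum_equiv (Equiv.mulLeft h⁻¹) _ _ fun z => by simp

variable [DecidableEq G]

/-- The overlap `|B ∩ hB|`. -/
def overlap (B : Finset G) (h : G) : ℕ := (B.filter fun x => h⁻¹ * x ∈ B).card

/-- The indicator function of `B` as a vector of `ℓ²(G)`. -/
noncomputable def indicatorVec (B : Finset G) : EuclideanSpace ℂ G :=
  WithLp.toLp 2 fun x => if x ∈ B then 1 else 0

lemma inner_regularRep_indicatorVec (B : Finset G) (h : G) :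
    inner ℂ (regularRep G h (indicatorVec B)) (indicatorVec B) = (overlap B h : ℂ) := by
  simp only [PiLp.inner_apply, regularRep_apply, indicatorVec, overlap, Finset.card_filter]
  push_cast
  rw [← Finset.sum_subset (Finset.subset_univ B) fun x _ hx => by simp [hx]]
  exact Finset.sum_congr rfl fun x hx => by simp [hx]

omit [Group G] in
lemma norm_indicatorVec_sq (B : Finset G) : ‖indicatorVec B‖ ^ 2 = (B.card : ℝ) := by
  rw [EuclideanSpace.norm_sq_eq]
  simp [indicatorVec, apply_ite]

omit [Fintype G] in
lemma overlap_inv (B : Finset G) (h : G) : overlap B h⁻¹ = overlap B h := by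
  refine Finset.card_bij' (fun x _ => h * x) (fun x _ => h⁻¹ * x) ?_ ?_ ?_ ?_ <;>
    simp +contextual

lemma sum_overlap (B : Finset G) : ∑ h : G, overlap B h = B.card ^ 2 := by
  simp only [overlap, Finset.card_filter]
  rw [Finset.sum_comm]
  have : ∀ x ∈ B, ∑ h : G, (if h⁻¹ * x ∈ B then 1 else 0) = B.card := fun x _ => by
    have e := Fintype.sum_equiv ((Equiv.inv G).trans (Equiv.mulRight x))
      (fun h => if h⁻¹ * x ∈ B then 1 else 0) (fun y => if y ∈ B then 1 else 0) fun h => by simp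
    rw [e]; simp
  rw [Finset.sum_congr rfl this]
  simp [sq]

lemma exists_overlap_le {g : G} {ε : ℝ} (hε : ε ≤ 1)
    (hg : ∀ χ : G → ℂ, IsIrredChar G χ → χ ≠ (fun _ => 1) → ‖χ g‖ ≤ (1 - ε) * ‖χ 1‖)
    (B : Finset G) :
    ∃ σ : G, (overlap B (σ⁻¹ * g * σ) : ℝ) ≤
      (1 - ε) * B.card + B.card / Fintype.card G * B.card := by
  have hq := re_inner_le_of_eigenvalue_le (centralOp_isSymmetric _ regularRep_unitary g)
    (fun μ => eigenvalue_le (regularRep G) hε hg) (indicatorVec B)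
  have hinv : ∀ σ : G, overlap B (σ⁻¹ * g⁻¹ * σ) = overlap B (σ⁻¹ * g * σ) := fun σ => by
    rw [← overlap_inv]; congr 1; group
  have hs : (∑ h : G, (overlap B h : ℝ)) = (B.card : ℝ) ^ 2 := by exact_mod_cast sum_overlap B
  have hl : (inner ℂ (centralOp (regularRep G) g (indicatorVec B)) (indicatorVec B)).re =
      2 * ∑ σ : G, (overlap B (σ⁻¹ * g * σ) : ℝ) - 2 * (B.card : ℝ) ^ 2 := by
    simp only [centralOp_apply, sum_inner, inner_add_left, inner_sub_left, inner_smul_left,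
      inner_regularRep_indicatorVec, hinv, Complex.re_sum]
    simp [Finset.sum_sub_distrib, Finset.sum_add_distrib, ← Finset.mul_sum, hs]
    ring
  rw [hl, norm_indicatorVec_sq] at hq
  have hG : (0 : ℝ) < Fintype.card G := by exact_mod_cast Fintype.card_pos
  obtain ⟨σ, -, hσ⟩ := Finset.exists_le_of_sum_le (s := (Finset.univ : Finset G))
    (f := fun σ => (overlap B (σ⁻¹ * g * σ) : ℝ))
    (g := fun _ => (1 - ε) * B.card + B.card / Fintype.card G * B.card) Finset.univ_nonempty (by
      rw [Finset.sum_const, Finset.card_univ, nsmul_eq_mul]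
      have : (Fintype.card G : ℝ) * ((1 - ε) * B.card + B.card / Fintype.card G * B.card) =
          Fintype.card G * (1 - ε) * B.card + (B.card : ℝ) ^ 2 := by
        field_simp
      rw [this]
      linarith)
  exact ⟨σ, hσ⟩

omit [Fintype G] in
/-- `A^σ B` contains `a^σ B ∪ b^σ B`, and `a^σ B ∩ b^σ B` is a translate of `B ∩ g^σ B` for
`g = a⁻¹b`. -/
lemma two_mul_card_le {A B : Finset G} {a b : G} (ha : a ∈ A) (hb : b ∈ A) (σ : G) :
    2 * B.card ≤ (conjFinset A σ * B).card + overlap B (σ⁻¹ * (a⁻¹ * b) * σ) := by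
  have hsub : ∀ c ∈ A, B.image (fun x => σ⁻¹ * c * σ * x) ⊆ conjFinset A σ * B := by
    intro c hc y hy
    obtain ⟨x, hx, rfl⟩ := Finset.mem_image.1 hy
    exact Finset.mul_mem_mul (Finset.mem_image_of_mem _ hc) hx
  have hcard : ∀ c : G, (B.image fun x => σ⁻¹ * c * σ * x).card = B.card := fun c =>
    Finset.card_image_of_injective _ (mul_right_injective _)
  have hu := Finset.card_le_card (Finset.union_subset (hsub a ha) (hsub b hb))
  have hi := Finset.card_union_add_card_inter (B.image fun x => σ⁻¹ * a * σ * x)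
    (B.image fun x => σ⁻¹ * b * σ * x)
  have ho : (B.image (fun x => σ⁻¹ * a * σ * x) ∩ B.image (fun x => σ⁻¹ * b * σ * x)).card ≤
      overlap B (σ⁻¹ * (a⁻¹ * b) * σ) := by
    rw [overlap, ← Finset.card_image_of_injective (B.filter _)
      (mul_right_injective (σ⁻¹ * a * σ))]
    refine Finset.card_le_card fun y hy => ?_
    obtain ⟨h1, h2⟩ := Finset.mem_inter.1 hy
    obtain ⟨x, hx, rfl⟩ := Finset.mem_image.1 h1
    obtain ⟨z, hz, hzx⟩ := Finset.mem_image.1 h2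
    refine Finset.mem_image_of_mem _ (Finset.mem_filter.2 ⟨hx, ?_⟩)
    have : (σ⁻¹ * (a⁻¹ * b) * σ)⁻¹ * x = z := by
      have hz' : z = (σ⁻¹ * b * σ)⁻¹ * (σ⁻¹ * a * σ * x) := by rw [← hzx]; group
      rw [hz']; group
    rwa [this]
  rw [hcard, hcard] at hi
  omega

end Regular

lemma rpow_neg_quarter_le {ε : ℝ} (h0 : 0 < ε) (h1 : ε < 1 / 4) :
    (1 - ε) ^ (-(1 / 4) : ℝ) ≤ 1 + 3 / 4 * ε := by
  have hpos : 0 < 1 - ε := by linarith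
  refine le_of_pow_le_pow_left₀ (n := 4) (by norm_num) (by linarith) ?_
  rw [← Real.rpow_natCast, ← Real.rpow_mul hpos.le]
  norm_num
  rw [Real.rpow_neg_one]
  refine (inv_le_iff_one_le_mul₀ hpos).2 ?_
  have hb : 1 + 3 * ε ≤ (1 + 3 / 4 * ε) ^ 4 := by
    have := one_add_mul_le_pow (a := 3 / 4 * ε) (by linarith) 4
    push_cast at this
    linarith
  nlinarith [mul_le_mul_of_nonneg_right hb hpos.le]

theorem general_LNS :
    ∃ c : ℝ, c > 0 ∧
      ∀ (G : Type) [Group G] [Fintype G] [DecidableEq G] (ε : ℝ),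
        ε ∈ Set.Ioo (0 : ℝ) (1 / 4) →
        ∀ A : Finset G,
          (∃ g : G, (∃ a ∈ A, ∃ b ∈ A, g = a⁻¹ * b) ∧
            ∀ χ : G → ℂ, IsIrredChar G χ → χ ≠ (fun _ => 1) →
              ‖χ g‖ ≤ (1 - ε) * ‖χ 1‖) →
          ∀ B : Finset G, B.Nonempty →
            (B.card : ℝ) / (Fintype.card G : ℝ) < c * ε →
            ∃ σ : G, ((conjFinset A σ * B).card : ℝ) ≥ (1 - ε) ^ (-c) * (B.card : ℝ) := by
  refine ⟨1 / 4, by norm_num, ?_⟩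
  rintro G _ _ _ ε ⟨h0, h1⟩ A ⟨g, ⟨a, ha, b, hb, rfl⟩, hg⟩ B - hB
  obtain ⟨σ, hσ⟩ := exists_overlap_le (by linarith) hg B
  refine ⟨σ, ?_⟩
  have hc : 2 * (B.card : ℝ) ≤ (conjFinset A σ * B).card +
      overlap B (σ⁻¹ * (a⁻¹ * b) * σ) := by
    exact_mod_cast two_mul_card_le ha hb σ
  have hB0 : (0 : ℝ) ≤ B.card := Nat.cast_nonneg _
  have h2 := mul_le_mul_of_nonneg_right hB.le hB0
  have h3 := mul_le_mul_of_nonneg_right (rpow_neg_quarter_le h0 h1) hB0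
  linarith
end

section
/- There exists an absolute constant C > 0 such that the following holds. Let n be a positive integer, let m, r ≤ n/4, and let σ₁, σ₂ ∈ Aₙ be permutations with disjoint supports, where σ₁ has support of size m and σ₂ has support of size r. Suppose A is a subset of the conjugacy class σ₁^{Aₙ} with |A| ≥ C^m, and B is a nonempty subset of the conjugacy class σ₂^{Aₙ}. Then there exists σ ∈ Aₙ such that |A^σ B ∩ (σ₁σ₂)^{Aₙ}| ≥ |A|^{1/3}·|B|. -/
open scoped Pointwise Classical

/-!
The proof is a second moment argument over a uniformly random even permutation `τ = σ⁻¹`, so that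
`a^σ = τ a τ⁻¹`. Call `(a, b) ∈ A × B` good for `τ` if `τ (supp a)` is disjoint from `supp b`. Then
`τ a τ⁻¹ b` has the cycle type of `σ₁σ₂`, and since `σ₁σ₂` has at least two fixed points it is
conjugate to `σ₁σ₂` in `Aₙ`. As `m, r ≤ n/4`, a pair is good with probability at least `2⁻ᵐ`, up to
a constant (`card_even_avoiding`), so the expected number `N τ` of good pairs is at least about
`2⁻ᵐ |A| |B|`.

The number of distinct products is at least `(N τ)² / E τ`, where `E τ` counts collisions
`τ a τ⁻¹ b = τ a' τ⁻¹ b'` between good pairs. In a collision `a'` agrees with `a` on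
`supp a' ∩ supp a`, and on the remainder `D = supp a' \ supp a`, of size `j` say, `τ` intertwines
`a'` with `b` (`collision_structure`). Two estimates now balance each other:

* such a `τ` is determined on `D` by its values at one point of each `a'`-cycle in `D`, hence by at
  most `j/2` values, and so it occurs with probability at most `2ʲ n^(-j/2)`
  (`card_intertwines_sq_le`);
* there are at most `Kⱼ ≤ 2ᵐ nʲ` elements `a'` with a given `j` (`card_agreeOnOverlap_le`).

Since also `Kⱼ ≤ |A|`, the contribution of each `j` is at most
`Kⱼ 2ʲ n^(-j/2) ≤ 2ʲ √(2ᵐ Kⱼ) ≤ 4ᵐ √|A|`. So the expectation of `E τ` is at most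
`8ᵐ |A|^(3/2) |B|` up to a constant, and by Cauchy-Schwarz some `τ` gives at least
`√|A| |B| / (4 · 32ᵐ)` distinct products (`sqrt_card_mul_card_le`). When `|A| ≥ Cᵐ`, the loss
`4 · 32ᵐ` is absorbed by lowering the exponent from `1/2` to `1/3`.
-/

open Equiv Finset

/-! ### Counting permutations with prescribed values -/

theorem card_perm_fixing {n : ℕ} (S : Finset (Fin n)) :
    #{ρ : Perm (Fin n) | ∀ x ∈ S, ρ x = x} = (n - #S).factorial := by
  have h := Fintype.card_congr (Equiv.Perm.subtypeEquivSubtypePerm (fun x : Fin n => x ∉ S))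
  rw [Fintype.card_perm, Fintype.card_subtype_compl, Fintype.card_coe, Fintype.card_fin] at h
  rw [h, Fintype.card_subtype]
  congr 1
  ext ρ
  simp

theorem card_perm_agreeing {n : ℕ} (S : Finset (Fin n)) (τ₀ : Perm (Fin n)) :
    #{τ : Perm (Fin n) | ∀ x ∈ S, τ x = τ₀ x} = (n - #S).factorial := by
  rw [← card_perm_fixing S]
  refine card_bij' (fun τ _ => τ₀⁻¹ * τ) (fun ρ _ => τ₀ * ρ) ?_ ?_ ?_ ?_
  · intro τ hτ
    simp only [mem_filter, mem_univ, true_and, Perm.mul_apply] at hτ ⊢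
    intro x hx
    simp [hτ x hx]
  · intro τ hτ
    simp only [mem_filter, mem_univ, true_and, Perm.mul_apply] at hτ ⊢
    intro x hx
    rw [hτ x hx]
  · intro τ _; simp
  · intro τ _; simp

theorem pow_le_two_pow_mul_descFactorial {n k j : ℕ} (h : n ≤ 2 * (k + 1 - j)) :
    n ^ j ≤ 2 ^ j * k.descFactorial j :=
  calc n ^ j ≤ (2 * (k + 1 - j)) ^ j := Nat.pow_le_pow_left h j
    _ = 2 ^ j * (k + 1 - j) ^ j := mul_pow _ _ _
    _ ≤ _ := Nat.mul_le_mul_left _ (Nat.pow_sub_le_descFactorial k j)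

/-- A permutation `τ` intertwining `d` with `b` on `supp d` is determined on `supp d` by its values
at one representative of each nontrivial cycle of `d`; here `t` is the number of these cycles. -/
theorem card_intertwining_le {n : ℕ} (d b : Perm (Fin n)) :
    ∃ t, 2 * t ≤ #d.support ∧
      #{τ : Perm (Fin n) | ∀ x ∈ d.support, τ (d x) = b (τ x)} ≤
        (n - #d.support).factorial * n ^ t := by
  refine ⟨#d.cycleFactorsFinset, ?_, ?_⟩
  · have h := Multiset.card_nsmul_le_sum (s := d.cycleType) (a := 2)
      (fun x hx => Perm.two_le_of_mem_cycleType hx)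
    rw [Perm.sum_cycleType, Perm.cycleType_def, Multiset.card_map, smul_eq_mul, mul_comm] at h
    exact h
  have hrep : ∀ c : d.cycleFactorsFinset, ∃ x, x ∈ c.1.support := fun c =>
    ((Perm.mem_cycleFactorsFinset_iff.1 c.2).1.nonempty_support)
  choose rep h_rep using hrep
  have key : ∀ τ : Perm (Fin n), (∀ x ∈ d.support, τ (d x) = b (τ x)) →
      ∀ x ∈ d.support, ∀ k : ℕ, τ ((d ^ k) x) = (b ^ k) (τ x) := by
    intro τ hτ x hx k
    induction k with
    | zero => simp
    | succ k ih =>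
      rw [pow_succ', pow_succ', Perm.mul_apply, Perm.mul_apply,
        hτ _ (Perm.pow_apply_mem_support.2 hx), ih]
  refine (card_le_mul_card_image (f := fun (τ : Perm (Fin n)) c => τ (rep c)) _
    (n - #d.support).factorial ?_).trans (Nat.mul_le_mul_left _ ?_)
  · intro f hf
    obtain ⟨τ₀, hτ₀, rfl⟩ := mem_image.1 hf
    rw [mem_filter] at hτ₀
    rw [← card_perm_agreeing d.support τ₀]
    refine card_le_card fun τ hτ => ?_
    simp only [mem_filter, mem_univ, true_and] at hτ hτ₀ ⊢
    intro x hx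
    have hc := Perm.cycleOf_mem_cycleFactorsFinset_iff.2 hx
    obtain ⟨hs, -⟩ := Perm.mem_support_cycleOf_iff.1 (h_rep ⟨_, hc⟩)
    set y := rep ⟨_, hc⟩ with hy
    have hyd : y ∈ d.support := hs.mem_support_iff.1 hx
    obtain ⟨k, hk⟩ := hs.symm.exists_nat_pow_eq
    rw [← hk, key τ hτ.1 y hyd, key τ₀ hτ₀ y hyd]
    have := congrFun hτ.2 ⟨_, hc⟩
    simp only [← hy] at this
    rw [this]
  · refine (card_le_univ _).trans ?_
    simp

/-- The probability of intertwining `d` with `b` is at most `2ʲ n^(-j/2)`, where `j = |supp d|`. The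
inequality is squared to avoid the half-integral exponent. -/
theorem card_intertwining_sq_le {n : ℕ} (d b : Perm (Fin n)) (hn : 2 * #d.support ≤ n) :
    #{τ : Perm (Fin n) | ∀ x ∈ d.support, τ (d x) = b (τ x)} ^ 2 * n ^ #d.support ≤
      n.factorial ^ 2 * 4 ^ #d.support := by
  obtain ⟨t, ht, hc⟩ := card_intertwining_le d b
  set c := #{τ : Perm (Fin n) | ∀ x ∈ d.support, τ (d x) = b (τ x)}
  set j := #d.support
  rcases Nat.eq_zero_or_pos n with rfl | hn0
  · have : j = 0 := by omega
    have ht : t = 0 := by omega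
    simp [this, ht] at hc ⊢
    exact hc
  have h1 : n ^ j ≤ 2 ^ j * n.descFactorial j := pow_le_two_pow_mul_descFactorial (by omega)
  have h2 : (n - j).factorial * n.descFactorial j = n.factorial :=
    Nat.factorial_mul_descFactorial (by omega)
  have h3 : c * n ^ j ≤ n.factorial * 2 ^ j * n ^ t :=
    calc c * n ^ j ≤ ((n - j).factorial * n ^ t) * (2 ^ j * n.descFactorial j) :=
          Nat.mul_le_mul hc h1
      _ = _ := by rw [← h2]; ring
  have h4 : n ^ (2 * t) ≤ n ^ j := Nat.pow_le_pow_right hn0 ht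
  refine Nat.le_of_mul_le_mul_right ?_ (pow_pos hn0 j)
  calc c ^ 2 * n ^ j * n ^ j = (c * n ^ j) ^ 2 := by ring
    _ ≤ (n.factorial * 2 ^ j * n ^ t) ^ 2 := Nat.pow_le_pow_left h3 2
    _ = n.factorial ^ 2 * 4 ^ j * n ^ (2 * t) := by
        rw [show 4 = 2 ^ 2 by norm_num, ← pow_mul]; ring
    _ ≤ _ := Nat.mul_le_mul_left _ h4

/-- The left-hand side counts pairs of an injection `S → Tᶜ` and an extension of it to a
permutation. -/
theorem card_avoiding {n : ℕ} (S T : Finset (Fin n)) :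
    (n - #S).factorial * (n - #T).descFactorial #S ≤
      #{τ : Perm (Fin n) | ∀ x ∈ S, τ x ∉ T} := by
  have himg : (n - #T).descFactorial #S ≤
      #(image (fun (τ : Perm (Fin n)) (x : S) => τ x)
        {τ : Perm (Fin n) | ∀ x ∈ S, τ x ∉ T}) := by
    have hcard : Fintype.card (S ↪ {y // y ∉ T}) = (n - #T).descFactorial #S := by
      rw [Fintype.card_embedding_eq, Fintype.card_subtype_compl, Fintype.card_coe,
        Fintype.card_coe, Fintype.card_fin]
    rw [← hcard, ← Finset.card_univ]
    refine card_le_card_of_injOn (fun e x => (e x).1) ?_ ?_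
    · intro e _
      let τ : Perm (Fin n) := (Equiv.ofInjective (fun x : S => (e x).1)
        (Subtype.val_injective.comp e.injective)).extendSubtype
      have hτ : ∀ x (hx : x ∈ S), τ x = e ⟨x, hx⟩ := fun x hx =>
        Equiv.extendSubtype_apply_of_mem _ x hx
      refine mem_coe.2 (mem_image.2 ⟨τ, ?_, ?_⟩)
      · simp only [mem_filter, mem_univ, true_and]
        intro x hx
        rw [hτ x hx]
        exact (e ⟨x, hx⟩).2
      · funext x
        exact hτ x.1 x.2
    · intro e _ e' _ h
      ext x
      exact congrArg Fin.val (congrFun h x)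
  refine (Nat.mul_le_mul_left _ himg).trans (mul_card_image_le_card _ _ ?_)
  intro f hf
  obtain ⟨τ₀, hτ₀, rfl⟩ := mem_image.1 hf
  rw [← card_perm_agreeing S τ₀]
  refine card_le_card fun τ hτ => ?_
  simp only [mem_filter, mem_univ, true_and] at hτ hτ₀ ⊢
  refine ⟨fun x hx => by rw [hτ x hx]; exact hτ₀ x hx, ?_⟩
  funext x
  exact hτ x.1 x.2

/-- A random even permutation moves `S` off `T` with probability at least `2^(-|S|)`. -/
theorem card_even_avoiding {n : ℕ} (S T : Finset (Fin n)) (hn : 4 * #S ≤ n) (hT : 4 * #T ≤ n)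
    (hS : 0 < #S) :
    n.factorial ≤ 2 ^ (#S + 1) *
      #{τ : Perm (Fin n) | Perm.sign τ = 1 ∧ ∀ x ∈ S, τ x ∉ T} := by
  set m := #S with hm
  set g : Perm (Fin n) → Prop := fun τ => ∀ x ∈ S, τ x ∉ T with hg
  have h1 : n ^ m ≤ 2 ^ m * (n - #T).descFactorial m :=
    pow_le_two_pow_mul_descFactorial (by omega)
  have h2 : (n - m).factorial * n.descFactorial m = n.factorial :=
    Nat.factorial_mul_descFactorial (by omega)
  have h3 := card_avoiding S T
  have h4 : n.factorial ≤ 2 ^ m * #{τ : Perm (Fin n) | g τ} :=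
    calc n.factorial ≤ (n - m).factorial * n ^ m := by
          rw [← h2]; exact Nat.mul_le_mul_left _ (Nat.descFactorial_le_pow n m)
      _ ≤ (n - m).factorial * (2 ^ m * (n - #T).descFactorial m) := Nat.mul_le_mul_left _ h1
      _ = 2 ^ m * ((n - m).factorial * (n - #T).descFactorial m) := by ring
      _ ≤ _ := Nat.mul_le_mul_left _ h3
  have hcompl : 1 < #Sᶜ := by rw [card_compl, Fintype.card_fin]; omega
  obtain ⟨u, hu, v, hv, huv⟩ := one_lt_card.1 hcompl
  rw [mem_compl] at hu hv
  -- precomposing with the transposition `(u v)` changes the sign and not the restriction to `S`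
  have h5 : #{τ : Perm (Fin n) | g τ ∧ ¬ Perm.sign τ = 1} ≤
      #{τ : Perm (Fin n) | Perm.sign τ = 1 ∧ g τ} := by
    refine card_le_card_of_injOn (fun τ => τ * swap u v) ?_ ?_
    · intro τ hτ
      simp only [coe_filter, mem_univ, true_and, Set.mem_ofPred_eq, Perm.sign_mul,
        Perm.sign_swap huv] at hτ ⊢
      refine ⟨?_, fun x hx => ?_⟩
      · rw [(Int.units_eq_one_or _).resolve_left hτ.2]; rfl
      · rw [Perm.mul_apply, swap_apply_of_ne_of_ne (by rintro rfl; exact hu hx)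
          (by rintro rfl; exact hv hx)]
        exact hτ.1 x hx
    · intro τ _ τ' _ h
      exact mul_right_cancel h
  have h6 := card_filter_add_card_filter_not (s := ({τ : Perm (Fin n) | g τ} : Finset _))
    (fun τ => Perm.sign τ = 1)
  rw [filter_filter, filter_filter] at h6
  have h7 : #{τ : Perm (Fin n) | g τ ∧ Perm.sign τ = 1} =
      #{τ : Perm (Fin n) | Perm.sign τ = 1 ∧ g τ} := by simp only [and_comm]
  calc n.factorial ≤ 2 ^ m * #{τ : Perm (Fin n) | g τ} := h4
    _ ≤ 2 ^ m * (2 * #{τ : Perm (Fin n) | Perm.sign τ = 1 ∧ g τ}) :=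
        Nat.mul_le_mul_left _ (by omega)
    _ = _ := by ring

/-- A permutation with support `D` is one of the `j!` permutations of
`D`, and `(n choose j) j! = n (n - 1) ⋯ (n - j + 1)`. -/
theorem card_perm_support {n j : ℕ} :
    #{d : Perm (Fin n) | #d.support = j} ≤ n ^ j := by
  have hfib : ∀ D : Finset (Fin n), #{d : Perm (Fin n) | d.support = D} ≤ (#D).factorial := by
    intro D
    have h := card_perm_fixing Dᶜ
    have hD : n - #Dᶜ = #D := by
      have := card_le_univ D
      rw [Fintype.card_fin] at this
      rw [card_compl, Fintype.card_fin]; omega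
    rw [hD] at h
    rw [← h]
    refine card_le_card fun d hd => ?_
    simp only [mem_filter, mem_univ, true_and, mem_compl] at hd ⊢
    intro x hx
    rwa [← hd, Perm.notMem_support] at hx
  have h := card_eq_sum_card_fiberwise (s := ({d : Perm (Fin n) | #d.support = j} : Finset _))
    (t := powersetCard j univ) (f := fun d => d.support) (by
      intro d hd
      simpa using hd)
  rw [h]
  calc _ ≤ ∑ D ∈ powersetCard j (univ : Finset (Fin n)), j.factorial := by
        refine sum_le_sum fun D hD => ?_
        rw [← (mem_powersetCard.1 hD).2]
        refine le_trans (card_le_card ?_) (hfib D)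
        intro d hd
        simp only [mem_filter, mem_univ, true_and] at hd ⊢
        exact hd.2
    _ = n.descFactorial j := by
        rw [sum_const, card_powersetCard, card_univ, Fintype.card_fin, smul_eq_mul, mul_comm,
          Nat.descFactorial_eq_factorial_mul_choose]
    _ ≤ n ^ j := Nat.descFactorial_le_pow n j

/-! ### Structure and number of collisions -/

/-- `a'` and `a` take the same values at all points moved by both. -/
def AgreeOnOverlap {n : ℕ} (a a' : Perm (Fin n)) : Prop :=
  ∀ x ∈ a'.support, x ∈ a.support → a' x = a x

/-- `τ` carries the action of `a'` on `supp a' \ supp a` to the action of `b`. -/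
def Intertwines {n : ℕ} (τ a b a' : Perm (Fin n)) : Prop :=
  ∀ x ∈ a'.support, x ∉ a.support → τ (a' x) = b (τ x)

/-- If `a'` agrees with `a` on the overlap of their supports, then `supp a' \ supp a` is invariant
under `a'`, so the restriction of `a'` to it is a permutation `d`. -/
theorem AgreeOnOverlap.exists_remainder {n : ℕ} {a a' : Perm (Fin n)} (h : AgreeOnOverlap a a') :
    ∃ d : Perm (Fin n), d.support = a'.support \ a.support ∧
      ∀ x ∈ a'.support \ a.support, d x = a' x := by
  have hmem : ∀ x ∈ a'.support ∩ a.support, a' x ∈ a'.support ∩ a.support := by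
    intro x hx
    rw [mem_inter] at hx ⊢
    refine ⟨Perm.apply_mem_support.2 hx.1, ?_⟩
    rw [h x hx.1 hx.2]
    exact Perm.apply_mem_support.2 hx.2
  -- an injective self-map of the finite set `supp a' ∩ supp a` is onto
  have hiff : ∀ x, a' x ∈ a'.support ∩ a.support ↔ x ∈ a'.support ∩ a.support := by
    intro x
    refine ⟨fun hx => ?_, hmem x⟩
    obtain ⟨y, hy, hyx⟩ := surj_on_of_inj_on_of_card_le (s := a'.support ∩ a.support)
      (fun y _ => a' y) hmem (fun _ _ _ _ e => a'.injective e) le_rfl _ hx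
    rwa [a'.injective hyx]
  have hD : ∀ x, a' x ∈ a'.support \ a.support ↔ x ∈ a'.support \ a.support := by
    intro x
    have h1 := hiff x
    have h2 : a' x ∈ a'.support ↔ x ∈ a'.support := Perm.apply_mem_support
    simp only [mem_inter, mem_sdiff] at h1 ⊢
    tauto
  refine ⟨Perm.ofSubtype (a'.subtypePerm hD), ?_, ?_⟩
  · ext x
    by_cases hx : x ∈ a'.support \ a.support
    · rw [Perm.mem_support, Perm.ofSubtype_apply_of_mem _ hx]
      simpa [hx] using (Perm.mem_support.1 (mem_sdiff.1 hx).1)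
    · rw [Perm.mem_support, Perm.ofSubtype_apply_of_not_mem _ hx]
      simp [hx]
  · intro x hx
    rw [Perm.ofSubtype_apply_of_mem _ hx]
    rfl

/-- Given `a`, such an `a'` is determined by the set `supp a' ∩ supp a` and by its restriction to
`supp a' \ supp a`. -/
theorem card_agreeOnOverlap_le {n : ℕ} (a : Perm (Fin n)) (j : ℕ) :
    #{a' : Perm (Fin n) | AgreeOnOverlap a a' ∧ #(a'.support \ a.support) = j} ≤
      2 ^ #a.support * n ^ j := by
  have hex : ∀ a' : Perm (Fin n), ∃ d : Perm (Fin n), AgreeOnOverlap a a' →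
      d.support = a'.support \ a.support ∧ ∀ x ∈ a'.support \ a.support, d x = a' x := by
    intro a'
    by_cases h : AgreeOnOverlap a a'
    · obtain ⟨d, hd⟩ := h.exists_remainder
      exact ⟨d, fun _ => hd⟩
    · exact ⟨1, fun h' => absurd h' h⟩
  choose d hd using hex
  calc _ ≤ #(a.support.powerset ×ˢ ({d : Perm (Fin n) | #d.support = j} : Finset _)) := by
        refine card_le_card_of_injOn (fun a' => (a'.support ∩ a.support, d a')) ?_ ?_
        · intro a' ha'
          simp only [coe_filter, mem_univ, true_and, Set.mem_ofPred_eq] at ha'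
          simp only [coe_product, Set.mem_prod, mem_coe, mem_powerset, mem_filter, mem_univ,
            true_and]
          exact ⟨inter_subset_right, by rw [(hd a' ha'.1).1, ha'.2]⟩
        · intro a' ha' a'' ha'' he
          simp only [coe_filter, mem_univ, true_and, Set.mem_ofPred_eq] at ha' ha''
          obtain ⟨hI, hdd⟩ := Prod.mk.inj he
          obtain ⟨hs', hv'⟩ := hd a' ha'.1
          obtain ⟨hs'', hv''⟩ := hd a'' ha''.1
          have hD : a'.support \ a.support = a''.support \ a.support := by rw [← hs', ← hs'', hdd]
          have hsupp : a'.support = a''.support := by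
            rw [← sdiff_union_inter a'.support a.support, hD, hI, sdiff_union_inter]
          ext x
          congr 1
          by_cases hx : x ∈ a'.support
          · by_cases hxa : x ∈ a.support
            · rw [ha'.1 x hx hxa, ha''.1 x (hsupp ▸ hx) hxa]
            · have h1 : x ∈ a'.support \ a.support := mem_sdiff.2 ⟨hx, hxa⟩
              rw [← hv' x h1, ← hv'' x (hD ▸ h1), hdd]
          · rw [Perm.notMem_support.1 hx, Perm.notMem_support.1 (hsupp ▸ hx)]
    _ ≤ _ := by
        rw [card_product, card_powerset]
        exact Nat.mul_le_mul_left _ card_perm_support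

/-- Evaluate both sides at `τ x` for `x ∈ supp a'`: there `b'` is trivial, and whichever of `a`, `b`
is relevant acts alone. -/
theorem collision_structure {n : ℕ} {τ a b a' b' : Perm (Fin n)}
    (h : ∀ x ∈ a.support, τ x ∉ b.support) (h' : ∀ x ∈ a'.support, τ x ∉ b'.support)
    (he : τ * a * τ⁻¹ * b = τ * a' * τ⁻¹ * b') :
    AgreeOnOverlap a a' ∧ Intertwines τ a b a' := by
  have hval : ∀ x ∈ a'.support, τ (a (τ⁻¹ (b (τ x)))) = τ (a' x) := by
    intro x hx
    have := congrArg (fun p : Perm (Fin n) => p (τ x)) he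
    simpa only [Perm.mul_apply, Perm.notMem_support.1 (h' x hx), Perm.inv_def,
      Equiv.symm_apply_apply] using this
  refine ⟨fun x hx hxa => ?_, fun x hx hxa => ?_⟩
  · have := hval x hx
    rw [Perm.notMem_support.1 (h x hxa), Perm.inv_def, Equiv.symm_apply_apply] at this
    exact (τ.injective this).symm
  · rw [← hval x hx]
    have hfix : a (τ⁻¹ (b (τ x))) = τ⁻¹ (b (τ x)) := by
      rw [← Perm.notMem_support]
      by_cases hb : τ x ∈ b.support
      · intro hy
        refine h _ hy ?_
        rw [Perm.inv_def, Equiv.apply_symm_apply]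
        exact Perm.apply_mem_support.2 hb
      · rwa [Perm.notMem_support.1 hb, Perm.inv_def, Equiv.symm_apply_apply]
    rw [hfix, Perm.inv_def, Equiv.apply_symm_apply]

theorem card_intertwines_sq_le {n : ℕ} {a a' : Perm (Fin n)} (b : Perm (Fin n))
    (h : AgreeOnOverlap a a') (hn : 2 * #a'.support ≤ n) :
    #{τ : Perm (Fin n) | Intertwines τ a b a'} ^ 2 * n ^ #(a'.support \ a.support) ≤
      n.factorial ^ 2 * 4 ^ #(a'.support \ a.support) := by
  obtain ⟨d, hd, hv⟩ := h.exists_remainder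
  have h1 := card_intertwining_sq_le d b
    (by rw [hd]; exact le_trans (Nat.mul_le_mul_left 2 (card_le_card sdiff_subset)) hn)
  rw [hd] at h1
  have h2 : ({τ : Perm (Fin n) | Intertwines τ a b a'} : Finset _) =
      ({τ : Perm (Fin n) | ∀ x ∈ a'.support \ a.support, τ (d x) = b (τ x)} : Finset _) := by
    ext τ
    rw [mem_filter, mem_filter]
    refine and_congr_right fun _ => ⟨fun hτ x hx => ?_, fun hτ x hx hxa => ?_⟩
    · rw [hv x hx]
      exact hτ x (mem_sdiff.1 hx).1 (mem_sdiff.1 hx).2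
    · rw [← hv x (mem_sdiff.2 ⟨hx, hxa⟩)]
      exact hτ x (mem_sdiff.2 ⟨hx, hxa⟩)
  rwa [h2]

/-- For fixed `a` and `b`, the average over `τ` of the number of `a' ∈ A` that can collide with
`(a, b)` is at most `8ᵐ √|A|`. -/
theorem sum_intertwines_le {n m : ℕ} (hn : 4 * m ≤ n) (hn0 : 0 < n) (A : Finset (Perm (Fin n)))
    (hA : ∀ a ∈ A, #a.support = m) {a : Perm (Fin n)} (ha : a ∈ A) (b : Perm (Fin n)) :
    ((∑ a' ∈ A with AgreeOnOverlap a a', #{τ : Perm (Fin n) | Intertwines τ a b a'} : ℕ) : ℝ) ≤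
      n.factorial * 8 ^ m * √(#A : ℝ) := by
  set c : Perm (Fin n) → ℕ := fun a' => #{τ : Perm (Fin n) | Intertwines τ a b a'} with hc
  set F : ℕ → Finset (Perm (Fin n)) := fun j =>
    {a' ∈ {a' ∈ A | AgreeOnOverlap a a'} | #(a'.support \ a.support) = j} with hF
  have hsplit := sum_fiberwise_of_maps_to (s := {a' ∈ A | AgreeOnOverlap a a'})
    (t := range (m + 1)) (g := fun a' => #(a'.support \ a.support)) (by
      intro a' ha'
      rw [mem_range, Nat.lt_succ_iff, ← hA a' (mem_filter.1 ha').1]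
      exact card_le_card sdiff_subset) (fun a' => (c a' : ℝ))
  push_cast
  rw [← hsplit]
  have hnpos : (0 : ℝ) < n := by exact_mod_cast hn0
  -- `Kⱼ ≤ |A|` is used for one factor `Kⱼ = |F j|` of the square and `Kⱼ ≤ 2ᵐ nʲ` for the other
  have hterm : ∀ j ∈ range (m + 1), ∑ a' ∈ F j, (c a' : ℝ) ≤ n.factorial * 4 ^ m * √(#A : ℝ) := by
    intro j hj
    rw [mem_range, Nat.lt_succ_iff] at hj
    have hcs : (∑ a' ∈ F j, (c a' : ℝ)) ^ 2 ≤ #(F j) * ∑ a' ∈ F j, (c a' : ℝ) ^ 2 :=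
      sq_sum_le_card_mul_sum_sq
    have hc1 : ∀ a' ∈ F j, (c a' : ℝ) ^ 2 ≤ (n.factorial : ℝ) ^ 2 * 4 ^ j / n ^ j := by
      intro a' ha'
      simp only [hF, mem_filter] at ha'
      rw [le_div_iff₀ (pow_pos hnpos j)]
      have := card_intertwines_sq_le b ha'.1.2 (by rw [hA a' ha'.1.1]; omega)
      rw [ha'.2] at this
      exact_mod_cast this
    have hK1 : (#(F j) : ℝ) ≤ 2 ^ m * n ^ j := by
      have h1 := card_agreeOnOverlap_le a j
      rw [hA a ha] at h1
      have h2 : #(F j) ≤ 2 ^ m * n ^ j := by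
        refine (card_le_card ?_).trans h1
        intro a' ha'
        simp only [hF, mem_filter, mem_univ, true_and] at ha' ⊢
        exact ⟨ha'.1.2, ha'.2⟩
      exact_mod_cast h2
    have hK2 : (#(F j) : ℝ) ≤ #A := by
      exact_mod_cast card_le_card ((filter_subset _ _).trans (filter_subset _ _))
    have h4 : (4 : ℝ) ^ j ≤ 4 ^ m := pow_le_pow_right₀ (by norm_num) hj
    refine le_of_sq_le_sq ?_ (by positivity)
    calc (∑ a' ∈ F j, (c a' : ℝ)) ^ 2
        ≤ #(F j) * (#(F j) * ((n.factorial : ℝ) ^ 2 * 4 ^ j / n ^ j)) := by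
          refine hcs.trans (mul_le_mul_of_nonneg_left ?_ (Nat.cast_nonneg _))
          rw [← nsmul_eq_mul]
          exact sum_le_card_nsmul _ _ _ hc1
      _ ≤ #A * ((2 ^ m * n ^ j) * ((n.factorial : ℝ) ^ 2 * 4 ^ m / n ^ j)) := by gcongr
      _ = (n.factorial : ℝ) ^ 2 * (2 ^ m * 4 ^ m) * #A := by field_simp
      _ ≤ (n.factorial : ℝ) ^ 2 * (4 ^ m * 4 ^ m) * #A := by gcongr; norm_num
      _ = (n.factorial * 4 ^ m * √(#A : ℝ)) ^ 2 := by
          rw [mul_pow, Real.sq_sqrt (Nat.cast_nonneg _)]; ring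
  refine (sum_le_sum hterm).trans ?_
  rw [sum_const, card_range, nsmul_eq_mul]
  have hm : ((m + 1 : ℕ) : ℝ) ≤ 2 ^ m := by exact_mod_cast Nat.lt_two_pow_self
  calc _ ≤ (2 : ℝ) ^ m * (n.factorial * 4 ^ m * √(#A : ℝ)) := by gcongr
    _ = n.factorial * (2 * 4) ^ m * √(#A : ℝ) := by rw [mul_pow]; ring
    _ = _ := by norm_num

/-- Cauchy-Schwarz over the fibres of `f`: few collisions force a large image. -/
theorem card_sq_le_card_image_mul {ι κ : Type*} [DecidableEq κ] (s : Finset ι) (f : ι → κ) :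
    #s ^ 2 ≤ #(s.image f) * #{p ∈ s ×ˢ s | f p.1 = f p.2} := by
  have h1 : #s = ∑ y ∈ s.image f, #{x ∈ s | f x = y} :=
    card_eq_sum_card_fiberwise fun x hx => mem_image_of_mem f hx
  have h2 : #{p ∈ s ×ˢ s | f p.1 = f p.2} = ∑ y ∈ s.image f, #{x ∈ s | f x = y} ^ 2 := by
    rw [card_eq_sum_card_fiberwise (f := fun p : ι × ι => f p.1) (t := s.image f)]
    · refine sum_congr rfl fun y _ => ?_
      rw [sq, ← card_product]
      congr 1
      ext ⟨x, x'⟩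
      simp only [mem_filter, mem_product]
      constructor
      · rintro ⟨⟨⟨h, h'⟩, e⟩, rfl⟩; exact ⟨⟨h, rfl⟩, h', e.symm⟩
      · rintro ⟨⟨h, rfl⟩, h', e⟩; exact ⟨⟨⟨h, h'⟩, e.symm⟩, rfl⟩
    · intro p hp
      simp only [coe_filter, mem_product, Set.mem_ofPred_eq] at hp
      exact mem_image_of_mem f hp.1.1
  rw [h2]
  nth_rewrite 1 [h1]
  exact sq_sum_le_card_mul_sum_sq

/-! ### The second moment argument -/

/-- For `p = (a, b)`, the supports of `τ a τ⁻¹` and `b` are disjoint. -/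
def Separates {n : ℕ} (τ : Perm (Fin n)) (p : Perm (Fin n) × Perm (Fin n)) : Prop :=
  ∀ x ∈ p.1.support, τ x ∉ p.2.support

/-- The product `τ a τ⁻¹ b` for `p = (a, b)`. -/
def skewMul {n : ℕ} (τ : Perm (Fin n)) (p : Perm (Fin n) × Perm (Fin n)) : Perm (Fin n) :=
  τ * p.1 * τ⁻¹ * p.2

/-- In a collision, `b'` is determined by `τ`, `a`, `b` and `a'`. -/
theorem card_collisions_le {n : ℕ} (τ : Perm (Fin n)) (A B : Finset (Perm (Fin n))) :
    #{q ∈ {p ∈ A ×ˢ B | Separates τ p} ×ˢ {p ∈ A ×ˢ B | Separates τ p} |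
        skewMul τ q.1 = skewMul τ q.2} ≤
      #{w ∈ {w ∈ (A ×ˢ B) ×ˢ A | AgreeOnOverlap w.1.1 w.2} |
        Intertwines τ w.1.1 w.1.2 w.2} := by
  refine card_le_card_of_injOn (fun q => (q.1, q.2.1)) ?_ ?_
  · rintro ⟨⟨a, b⟩, ⟨a', b'⟩⟩ hq
    simp only [coe_filter, mem_product, mem_filter, Set.mem_ofPred_eq] at hq ⊢
    obtain ⟨hA, hI⟩ := collision_structure hq.1.1.2 hq.1.2.2 hq.2
    exact ⟨⟨⟨hq.1.1.1, hq.1.2.1.1⟩, hA⟩, hI⟩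
  · rintro ⟨⟨a, b⟩, ⟨a', b'⟩⟩ hq ⟨⟨c, d⟩, ⟨c', d'⟩⟩ hr he
    simp only [Prod.mk.injEq] at he
    obtain ⟨⟨rfl, rfl⟩, rfl⟩ := he
    simp only [coe_filter, Set.mem_ofPred_eq] at hq hr
    have h : skewMul τ (a', b') = skewMul τ (a', d') := hq.2.symm.trans hr.2
    have hb : b' = d' := mul_left_cancel h
    rw [hb]

/-- The numerical form of the second moment argument. Here `M = n!`, `α = |A|`, `β = |B|`, `ω` is the
number of even permutations, `SN`, `SN2` and `SE` are the sums of `N τ`, `(N τ)²` and `E τ` over them,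
and `X` bounds the number of products for each `τ`. -/
theorem le_of_second_moment {M α β X SN SN2 SE ω : ℝ} {m : ℕ} (hM : 0 < M) (hα : 0 < α)
    (hβ : 0 < β) (hX : 0 ≤ X) (hω0 : 0 ≤ ω) (hω : ω ≤ M) (hSN : α * β * M ≤ 2 ^ (m + 1) * SN)
    (hCS : SN ^ 2 ≤ ω * SN2) (hSN2 : SN2 ≤ X * SE) (hSE0 : 0 ≤ SE)
    (hSE : SE ≤ α * β * (M * 8 ^ m * √α)) :
    √α * β ≤ 4 * 32 ^ m * X := by
  have hNsq : SN ^ 2 ≤ M * (X * (α * β * (M * 8 ^ m * √α))) :=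
    calc SN ^ 2 ≤ ω * SN2 := hCS
      _ ≤ ω * (X * SE) := by gcongr
      _ ≤ _ := by gcongr
  set s := √α with hs
  have hs0 : 0 < s := Real.sqrt_pos.2 hα
  have hss : α = s * s := (Real.mul_self_sqrt hα.le).symm
  refine le_of_mul_le_mul_left (a := α * β * s * M ^ 2) ?_ (by positivity)
  calc α * β * s * M ^ 2 * (s * β) = (α * β * M) ^ 2 := by rw [hss]; ring
    _ ≤ (2 ^ (m + 1) * SN) ^ 2 := by gcongr
    _ = 4 * (2 ^ m * 2 ^ m) * SN ^ 2 := by ring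
    _ ≤ 4 * (2 ^ m * 2 ^ m) * (M * (X * (α * β * (M * 8 ^ m * s)))) := by gcongr
    _ = α * β * s * M ^ 2 * (4 * (2 * 2 * 8) ^ m * X) := by
        rw [mul_pow, mul_pow]; ring
    _ = _ := by norm_num

/-- If every even `τ` yields at most `X` distinct products of good pairs, then `X` is at least
`√|A| |B| / (4 · 32ᵐ)`. -/
theorem sqrt_card_mul_card_le {n m : ℕ} (hn : 4 * m ≤ n) (hm : 0 < m)
    {A B : Finset (Perm (Fin n))} (hA : ∀ a ∈ A, #a.support = m)
    (hB : ∀ b ∈ B, 4 * #b.support ≤ n) (hAne : A.Nonempty) (hBne : B.Nonempty) {X : ℝ}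
    (hX : ∀ τ : Perm (Fin n), Perm.sign τ = 1 →
      (#({p ∈ A ×ˢ B | Separates τ p}.image (skewMul τ)) : ℝ) ≤ X) :
    √(#A : ℝ) * #B ≤ 4 * 32 ^ m * X := by
  set Ω : Finset (Perm (Fin n)) := {τ | Perm.sign τ = 1} with hΩ
  set N : Perm (Fin n) → ℕ := fun τ => #{p ∈ A ×ˢ B | Separates τ p} with hN
  set W : Finset ((Perm (Fin n) × Perm (Fin n)) × Perm (Fin n)) :=
    {w ∈ (A ×ˢ B) ×ˢ A | AgreeOnOverlap w.1.1 w.2} with hW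
  set E : Perm (Fin n) → ℕ := fun τ => #{w ∈ W | Intertwines τ w.1.1 w.1.2 w.2} with hE
  have hX0 : 0 ≤ X := le_trans (Nat.cast_nonneg _) (hX 1 (by simp))
  have hNE : ∀ τ ∈ Ω, (N τ : ℝ) ^ 2 ≤ X * E τ := by
    intro τ hτ
    have h1 := (card_sq_le_card_image_mul {p ∈ A ×ˢ B | Separates τ p} (skewMul τ)).trans
      (Nat.mul_le_mul_left _ (card_collisions_le τ A B))
    have h2 : (N τ : ℝ) ^ 2 ≤ #({p ∈ A ×ˢ B | Separates τ p}.image (skewMul τ)) * (E τ : ℝ) := by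
      exact_mod_cast h1
    exact h2.trans (mul_le_mul_of_nonneg_right (hX τ (mem_filter.1 hτ).2) (Nat.cast_nonneg _))
  have hEsum : (∑ τ ∈ Ω, (E τ : ℝ)) ≤ #A * #B * (n.factorial * 8 ^ m * √(#A : ℝ)) := by
    have h1 : ∑ τ ∈ Ω, E τ = ∑ w ∈ W, #{τ ∈ Ω | Intertwines τ w.1.1 w.1.2 w.2} :=
      sum_card_bipartiteAbove_eq_sum_card_bipartiteBelow
        (fun τ (w : (Perm (Fin n) × Perm (Fin n)) × Perm (Fin n)) =>
          Intertwines τ w.1.1 w.1.2 w.2)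
    have h2 : ∑ τ ∈ Ω, E τ ≤ ∑ p ∈ A ×ˢ B, ∑ a' ∈ A with AgreeOnOverlap p.1 a',
        #{τ : Perm (Fin n) | Intertwines τ p.1 p.2 a'} := by
      rw [h1, hW, sum_filter, sum_product]
      refine sum_le_sum fun p _ => ?_
      rw [← sum_filter]
      exact sum_le_sum fun a' _ => card_le_card (filter_subset_filter _ (subset_univ _))
    have h3 : (∑ τ ∈ Ω, (E τ : ℝ)) ≤ ∑ p ∈ A ×ˢ B, ((∑ a' ∈ A with AgreeOnOverlap p.1 a',
        #{τ : Perm (Fin n) | Intertwines τ p.1 p.2 a'} : ℕ) : ℝ) := by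
      exact_mod_cast h2
    refine h3.trans ((sum_le_card_nsmul _ _ _ fun p hp =>
      sum_intertwines_le hn (by omega) A hA (mem_product.1 hp).1 p.2).trans ?_)
    rw [nsmul_eq_mul, card_product]
    push_cast
    exact le_rfl
  have hNsum : (#A * #B : ℝ) * n.factorial ≤ 2 ^ (m + 1) * ∑ τ ∈ Ω, (N τ : ℝ) := by
    have h1 : ∑ τ ∈ Ω, N τ = ∑ p ∈ A ×ˢ B, #{τ ∈ Ω | Separates τ p} :=
      sum_card_bipartiteAbove_eq_sum_card_bipartiteBelow Separates
    have h2 : ∀ p ∈ A ×ˢ B, n.factorial ≤ 2 ^ (m + 1) * #{τ ∈ Ω | Separates τ p} := by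
      intro p hp
      obtain ⟨ha, hb⟩ := mem_product.1 hp
      have h := card_even_avoiding p.1.support p.2.support (by rw [hA _ ha]; exact hn)
        (hB _ hb) (by rw [hA _ ha]; exact hm)
      rw [hA _ ha] at h
      rw [hΩ, filter_filter]
      convert h
      exact Iff.rfl
    have h3 := card_nsmul_le_sum _ _ _ h2
    rw [← mul_sum, ← h1, card_product, smul_eq_mul] at h3
    exact_mod_cast h3
  have hΩcard : (#Ω : ℝ) ≤ n.factorial := by
    have := card_le_univ Ω
    rw [Fintype.card_perm, Fintype.card_fin] at this
    exact_mod_cast this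
  have hSN2 : ∑ τ ∈ Ω, (N τ : ℝ) ^ 2 ≤ X * ∑ τ ∈ Ω, (E τ : ℝ) := by
    rw [mul_sum]
    exact sum_le_sum hNE
  exact le_of_second_moment (by exact_mod_cast n.factorial_pos)
    (by exact_mod_cast hAne.card_pos) (by exact_mod_cast hBne.card_pos) hX0 (Nat.cast_nonneg _)
    hΩcard hNsum sq_sum_le_card_mul_sum_sq hSN2 (sum_nonneg fun _ _ => Nat.cast_nonneg _) hEsum

/-! ### Conjugacy in the alternating group and the choice of the constant -/

/-- Disjointness makes the cycle types add up, and two fixed points keep the `Sₙ`-class of `σ₁σ₂`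
from splitting in `Aₙ`. -/
theorem isConj_mul_of_disjoint {n : ℕ} {σ₁ σ₂ a b : alternatingGroup (Fin n)}
    (hσ : (σ₁ : Perm (Fin n)).Disjoint σ₂) (hab : (a : Perm (Fin n)).Disjoint b)
    (ha : IsConj σ₁ a) (hb : IsConj σ₂ b)
    (hn : #(σ₁ : Perm (Fin n)).support + #(σ₂ : Perm (Fin n)).support + 2 ≤ n) :
    IsConj (σ₁ * σ₂) (a * b) := by
  have ha' := Perm.isConj_iff_cycleType_eq.1 ((alternatingGroup (Fin n)).subtype.map_isConj ha)
  have hb' := Perm.isConj_iff_cycleType_eq.1 ((alternatingGroup (Fin n)).subtype.map_isConj hb)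
  simp only [Subgroup.subtype_apply] at ha' hb'
  refine alternatingGroup.isConj_of (Perm.isConj_iff_cycleType_eq.2 ?_) ?_
  · rw [Subgroup.coe_mul, Subgroup.coe_mul, hσ.cycleType_mul, hab.cycleType_mul, ha', hb']
  · rw [Subgroup.coe_mul, hσ.card_support_mul, Fintype.card_fin]
    exact hn

theorem card_support_eq_of_isConj {n : ℕ} {σ a : alternatingGroup (Fin n)} (h : IsConj σ a) :
    #(a : Perm (Fin n)).support = #(σ : Perm (Fin n)).support := by
  have h' := Perm.isConj_iff_cycleType_eq.1 ((alternatingGroup (Fin n)).subtype.map_isConj h)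
  simp only [Subgroup.subtype_apply] at h'
  rw [← Perm.sum_cycleType, ← Perm.sum_cycleType, h']

/-- `128⁶` is chosen so that `x^(1/6) > 128ᵐ ≥ 4 · 32ᵐ`. -/
theorem rpow_third_lt {x : ℝ} {m : ℕ} (hm : 0 < m) (hx : ((128 : ℝ) ^ 6) ^ m < x) :
    4 * 32 ^ m * x ^ ((1 : ℝ) / 3) < √x := by
  have hx0 : 0 < x := lt_trans (by positivity) hx
  have h1 : (128 : ℝ) ^ m < x ^ ((1 : ℝ) / 6) := by
    have h := Real.rpow_lt_rpow (by positivity) hx (show (0 : ℝ) < 1 / 6 by norm_num)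
    rw [← pow_mul, mul_comm 6 m, pow_mul, ← Real.rpow_natCast (_ ^ m) 6,
      ← Real.rpow_mul (by positivity)] at h
    norm_num at h ⊢
    exact h
  have h2 : (4 : ℝ) * 32 ^ m ≤ 128 ^ m := by
    have : (4 : ℝ) ≤ 4 ^ m := le_self_pow₀ (by norm_num) hm.ne'
    calc (4 : ℝ) * 32 ^ m ≤ 4 ^ m * 32 ^ m := by gcongr
      _ = 128 ^ m := by rw [← mul_pow]; norm_num
  calc 4 * 32 ^ m * x ^ ((1 : ℝ) / 3) < x ^ ((1 : ℝ) / 6) * x ^ ((1 : ℝ) / 3) := by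
        gcongr; exact h2.trans_lt h1
    _ = √x := by rw [← Real.rpow_add hx0, Real.sqrt_eq_rpow]; norm_num

theorem skew_product_small_support :
    ∃ C : ℝ, C > 0 ∧
      ∀ (n m r : ℕ), 0 < n → (m : ℝ) ≤ (n : ℝ) / 4 → (r : ℝ) ≤ (n : ℝ) / 4 →
        ∀ σ₁ σ₂ : alternatingGroup (Fin n),
          Disjoint (σ₁ : Equiv.Perm (Fin n)).support (σ₂ : Equiv.Perm (Fin n)).support →
          (σ₁ : Equiv.Perm (Fin n)).support.card = m →
          (σ₂ : Equiv.Perm (Fin n)).support.card = r →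
          ∀ A B : Finset (alternatingGroup (Fin n)),
            (∀ a ∈ A, IsConj σ₁ a) → (∀ b ∈ B, IsConj σ₂ b) →
            (A.card : ℝ) ≥ C ^ (m : ℝ) → B.Nonempty →
            ∃ σ : alternatingGroup (Fin n),
              ((((conjFinset A σ * B).filter (fun x => IsConj (σ₁ * σ₂) x)).card : ℝ)) ≥
                (A.card : ℝ) ^ ((1 : ℝ) / 3) * (B.card : ℝ) := by
  refine ⟨128 ^ 6 + 1, by norm_num, ?_⟩
  intro n m r hn0 hm hr σ₁ σ₂ hdisj hcm hcr A B hA hB hAcard hBne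
  have hm4 : 4 * m ≤ n := by
    have : (4 * m : ℝ) ≤ n := by linarith
    exact_mod_cast this
  have hr4 : 4 * r ≤ n := by
    have : (4 * r : ℝ) ≤ n := by linarith
    exact_mod_cast this
  rw [Real.rpow_natCast] at hAcard
  have hApos : (0 : ℝ) < #A := lt_of_lt_of_le (by positivity) hAcard
  have hAne : A.Nonempty := card_pos.1 (by exact_mod_cast hApos)
  rcases Nat.eq_zero_or_pos m with rfl | hmpos
  · -- here `σ₁ = 1`, so `A = {1}` and the product set is `B` itself
    have hσ₁ : σ₁ = 1 := by
      apply Subtype.ext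
      exact Perm.card_support_eq_zero.1 hcm
    subst hσ₁
    have hA1 : A = {1} := by
      refine (eq_singleton_iff_nonempty_unique_mem.2 ⟨hAne, fun a ha => ?_⟩)
      exact isConj_one_right.1 (hA a ha)
    refine ⟨1, ?_⟩
    have hBsub : B ⊆ (conjFinset A 1 * B).filter (fun x => IsConj (1 * σ₂) x) := by
      intro b hb
      rw [mem_filter, one_mul]
      refine ⟨?_, hB b hb⟩
      rw [← one_mul b]
      refine mul_mem_mul ?_ hb
      simp [conjFinset, hA1]
    have hle : (#B : ℝ) ≤ _ := Nat.cast_le.2 (card_le_card hBsub)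
    rw [hA1]
    rw [hA1] at hle
    simpa using hle
  -- otherwise every `τ` gives fewer than `|A|^(1/3) |B|` products, too few for the second moment
  by_contra! hcon
  have hval := Subtype.val_injective (p := fun τ => τ ∈ alternatingGroup (Fin n))
  set X : ℝ := (#A : ℝ) ^ ((1 : ℝ) / 3) * #B with hXdef
  have hmain := sqrt_card_mul_card_le (A := A.image Subtype.val) (B := B.image Subtype.val)
    hm4 hmpos (X := X) ?_ ?_ (hAne.image _) (hBne.image _) ?_
  · rw [card_image_of_injective _ hval, card_image_of_injective _ hval] at hmain
    have hlt : ((128 : ℝ) ^ 6) ^ m < #A :=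
      lt_of_lt_of_le (pow_lt_pow_left₀ (by norm_num) (by positivity) hmpos.ne') hAcard
    have hβ : (0 : ℝ) < #B := by exact_mod_cast hBne.card_pos
    have := mul_lt_mul_of_pos_right (rpow_third_lt hmpos hlt) hβ
    rw [hXdef, ← mul_assoc] at hmain
    exact absurd this (not_lt.2 hmain)
  · intro a' ha'
    obtain ⟨a, ha, rfl⟩ := mem_image.1 ha'
    rw [card_support_eq_of_isConj (hA a ha), hcm]
  · intro b' hb'
    obtain ⟨b, hb, rfl⟩ := mem_image.1 hb'
    rw [card_support_eq_of_isConj (hB b hb), hcr]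
    exact hr4
  · intro τ hτ
    set t : alternatingGroup (Fin n) := ⟨τ, Perm.mem_alternatingGroup.2 hτ⟩ with ht
    refine le_trans (Nat.cast_le.2 ?_) (hcon t⁻¹).le
    rw [← card_image_of_injective _ hval]
    refine card_le_card fun x hx => ?_
    obtain ⟨⟨_, _⟩, hp, rfl⟩ := mem_image.1 hx
    obtain ⟨hp, hsep⟩ := mem_filter.1 hp
    obtain ⟨ha', hb'⟩ := mem_product.1 hp
    obtain ⟨a, ha, rfl⟩ := mem_image.1 ha'
    obtain ⟨b, hb, rfl⟩ := mem_image.1 hb'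
    refine mem_image.2 ⟨t * a * t⁻¹ * b, mem_filter.2 ⟨mul_mem_mul ?_ hb, ?_⟩, rfl⟩
    · exact mem_image.2 ⟨a, ha, by rw [inv_inv]⟩
    · refine isConj_mul_of_disjoint (Perm.disjoint_iff_disjoint_support.2 hdisj) ?_
        ((hA a ha).trans (isConj_iff.2 ⟨t, rfl⟩)) (hB b hb) (by omega)
      intro x
      by_contra! hx
      have hy : τ⁻¹ x ∈ (a : Perm (Fin n)).support := by
        rw [Perm.mem_support]
        intro h
        refine hx.1 ?_
        change τ ((a : Perm (Fin n)) (τ⁻¹ x)) = x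
        rw [h]
        simp
      refine hsep _ hy ?_
      rw [Perm.mem_support]
      simpa using hx.2
end

section
/- Let ℓ < m be positive integers, let c, c' ∈ (0,1), let G be a finite group, and let 𝓔 be a collection of nonempty subsets of G. Suppose: (i) for every k and all A₁, ..., A_k ∈ 𝓔 each of size ≥ ℓ^{c'}, there exist σ₁, ..., σ_k ∈ G with |A₁^{σ₁} ⋯ A_k^{σ_k}| ≥ min(m, |A₁|^c ⋯ |A_k|^c); and (ii) for all subsets A, B ⊆ G with |A| ≥ ℓ and |B| ≤ m, either there exists σ ∈ G with |A^σ B| > |A|^c·|B|, or there exist σ ∈ G and A' ∈ 𝓔 with σA' ⊆ A and |A'| > |A|^{c'}. Then for every k and all subsets A₁, ..., A_k ⊆ G each of size at least ℓ, there exist σ₁, ..., σ_k ∈ G with |A₁^{σ₁} ⋯ A_k^{σ_k}| ≥ min(m, |A₁|^{cc'/2} ⋯ |A_k|^{cc'/2}). -/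
/-!
Call a set `X` *easy* if some left translate of a member of `𝓔` of size more than `|X| ^ c'` lies
in `X`. Two lower bounds for `|A₁^σ₁ ⋯ A_k^σ_k|` are available.

* `exists_conj_prod_growth`: discard the contribution of the easy factors. Building the product from
  the right, hypothesis (ii) makes every factor that is not easy multiply the size by at least
  `|A_j| ^ c`, as long as the size is below `m`, and left multiplication by an easy factor does not
  decrease the size.
* `exists_easy_reduction`: discard the contribution of the other factors. Replace each of them by a
  single element and each easy factor by a translate of a member of `𝓔`. All the translating elements
  can be moved to the far left at the cost of changing the conjugators, which are free, so
  hypothesis (i) bounds the size of what remains.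

The first bound is at least `min m S` and the second at least `min m T`, where `S` and `T` are the
products of `|A_j| ^ (c * c')` over the factors that are not easy and over the easy ones. Since
`max S T ≥ √(S * T) = ∏ j, |A_j| ^ (c * c' / 2)`, the better of the two suffices.
-/

open scoped Pointwise

/-- `X` contains a left translate of a member of `𝓔` that has more than `|X| ^ e` elements. -/
def IsEasy {G : Type*} [Group G] [DecidableEq G] (𝓔 : Set (Finset G)) (e : ℝ)
    (X : Finset G) : Prop :=
  ∃ (s : G) (Y : Finset G), Y ∈ 𝓔 ∧ (Y.image fun a => s * a) ⊆ X ∧ ((Y.card : ℝ) > (X.card : ℝ) ^ e)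

theorem card_conjFinset {G : Type*} [Group G] [DecidableEq G] (A : Finset G) (s : G) :
    (conjFinset A s).card = A.card :=
  Finset.card_image_of_injective _ fun a b h => by simpa using h

open Classical in
/-- The factors that are not easy alone give growth, up to the threshold `m`; easy factors only have
to keep the size from dropping, hence their weight `1`. -/
theorem exists_conj_prod_growth {G : Type*} [Group G] [DecidableEq G] {ℓ m : ℕ} (hℓ : 0 < ℓ)
    {c e : ℝ} {𝓔 : Set (Finset G)}
    (h2 : ∀ A B : Finset G, ℓ ≤ A.card → B.card ≤ m →
      (∃ σ : G, ((conjFinset A σ * B).card : ℝ) > (A.card : ℝ) ^ c * (B.card : ℝ)) ∨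
      IsEasy 𝓔 e A) :
    ∀ (k : ℕ) (A : Fin k → Finset G), (∀ j, ℓ ≤ (A j).card) →
      ∃ σ : Fin k → G, (((List.ofFn fun j => conjFinset (A j) (σ j)).prod).card : ℝ) ≥
        min (m : ℝ) (∏ j, if IsEasy 𝓔 e (A j) then 1 else ((A j).card : ℝ) ^ c) := by
  intro k
  induction k with
  | zero => intro A _; exact ⟨fun _ => 1, by simp⟩
  | succ k ih =>
    intro A hA
    obtain ⟨σ, hσ⟩ := ih (fun j => A j.succ) (fun j => hA _)
    set B := (List.ofFn fun j => conjFinset (A j.succ) (σ j)).prod with hB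
    have hprod : ∀ s : G, (List.ofFn fun j => conjFinset (A j)
        ((Fin.cons s σ : Fin (k + 1) → G) j)).prod = conjFinset (A 0) s * B := by
      intro s
      simp [List.ofFn_succ, hB]
    have hne : ∀ s : G, (conjFinset (A 0) s).Nonempty := fun s => by
      rw [← Finset.card_pos, card_conjFinset]
      exact hℓ.trans_le (hA 0)
    have hmono : ∀ s : G, (B.card : ℝ) ≤ ((conjFinset (A 0) s * B).card : ℝ) := fun s => by
      exact_mod_cast Finset.card_le_card_mul_left (hne s)
    rw [Fin.prod_univ_succ]
    by_cases hm : m ≤ B.card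
    · refine ⟨Fin.cons 1 σ, ?_⟩
      rw [hprod]
      exact (min_le_left _ _).trans (le_trans (by exact_mod_cast hm) (hmono 1))
    have hQ : (∏ j : Fin k, if IsEasy 𝓔 e (A j.succ) then 1 else ((A j.succ).card : ℝ) ^ c)
        ≤ (B.card : ℝ) := by
      rcases min_le_iff.1 hσ with h | h
      · exact absurd (by exact_mod_cast h) hm
      · exact h
    by_cases he : IsEasy 𝓔 e (A 0)
    · refine ⟨Fin.cons 1 σ, ?_⟩
      rw [hprod, if_pos he, one_mul]
      exact (min_le_right _ _).trans (hQ.trans (hmono 1))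
    · obtain ⟨s, hs⟩ := (h2 (A 0) B (hA 0) (not_le.1 hm).le).resolve_right he
      refine ⟨Fin.cons s σ, ?_⟩
      rw [hprod, if_neg he]
      refine (min_le_right _ _).trans (le_trans ?_ hs.le)
      gcongr

open Classical in
/-- There are members of `𝓔`, large enough for hypothesis (i), every product of conjugates of which has
a left translate inside some product of conjugates of the `A j`. In the proof there is one for each
easy factor, which gives the lower bound on the product of their sizes. -/
theorem exists_easy_reduction {G : Type*} [Group G] [DecidableEq G] {ℓ : ℕ} (hℓ : 0 < ℓ)
    {c e : ℝ} (hc : 0 ≤ c) (he0 : 0 ≤ e) {𝓔 : Set (Finset G)} :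
    ∀ (k : ℕ) (A : Fin k → Finset G), (∀ j, ℓ ≤ (A j).card) →
      ∃ (n : ℕ) (Y : Fin n → Finset G), (∀ i, Y i ∈ 𝓔) ∧
        (∀ i, ((Y i).card : ℝ) ≥ (ℓ : ℝ) ^ e) ∧
        (∏ j, if IsEasy 𝓔 e (A j) then ((A j).card : ℝ) ^ (c * e) else 1) ≤
          ∏ i, ((Y i).card : ℝ) ^ c ∧
        ∀ τ : Fin n → G, ∃ (σ : Fin k → G) (h : G),
          ∀ x ∈ (List.ofFn fun i => conjFinset (Y i) (τ i)).prod,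
            h * x ∈ (List.ofFn fun j => conjFinset (A j) (σ j)).prod := by
  intro k
  induction k with
  | zero =>
    intro A _
    exact ⟨0, Fin.elim0, fun i => i.elim0, fun i => i.elim0, by simp,
      fun τ => ⟨fun _ => 1, 1, by simp⟩⟩
  | succ k ih =>
    intro A hA
    obtain ⟨n, Y, hY, hYc, hYp, hτ⟩ := ih (fun j => A j.succ) (fun j => hA _)
    rw [Fin.prod_univ_succ]
    by_cases he : IsEasy 𝓔 e (A 0)
    · obtain ⟨s, Z, hZ, hsub, hcard⟩ := id he
      refine ⟨n + 1, Fin.cons Z Y, ?_, ?_, ?_, ?_⟩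
      · exact Fin.cases hZ hY
      · refine Fin.cases (le_trans ?_ hcard.le) hYc
        exact Real.rpow_le_rpow (by positivity) (by exact_mod_cast hA 0) he0
      · rw [Fin.prod_univ_succ, if_pos he]
        simp only [Fin.cons_zero, Fin.cons_succ]
        refine mul_le_mul ?_ hYp (Finset.prod_nonneg fun j _ => ?_) (by positivity)
        · rw [mul_comm c e, Real.rpow_mul (by positivity)]
          exact Real.rpow_le_rpow (by positivity) hcard.le hc
        · split_ifs <;> positivity
      · intro τ
        obtain ⟨σ, h, hh⟩ := hτ (fun i => τ i.succ)
        -- The conjugator `τ 0 * h⁻¹` moves `h` across the new factor.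
        refine ⟨Fin.cons (τ 0 * h⁻¹) σ, h * (τ 0)⁻¹ * s * τ 0, fun x hx => ?_⟩
        simp only [List.ofFn_succ, List.prod_cons, Fin.cons_zero, Fin.cons_succ] at hx ⊢
        obtain ⟨y, hy, z, hz, rfl⟩ := Finset.mem_mul.1 hx
        obtain ⟨a, ha, rfl⟩ := Finset.mem_image.1 hy
        refine Finset.mem_mul.2 ⟨_, Finset.mem_image.2 ⟨s * a,
          hsub (Finset.mem_image_of_mem _ ha), rfl⟩, _, hh z hz, ?_⟩
        group
    · refine ⟨n, Y, hY, hYc, by simpa [if_neg he] using hYp, fun τ => ?_⟩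
      obtain ⟨σ, h, hh⟩ := hτ τ
      obtain ⟨a, ha⟩ := Finset.card_pos.1 (hℓ.trans_le (hA 0))
      refine ⟨Fin.cons 1 σ, a * h, fun x hx => ?_⟩
      simp only [List.ofFn_succ, List.prod_cons, Fin.cons_zero, Fin.cons_succ]
      exact Finset.mem_mul.2 ⟨_, Finset.mem_image.2 ⟨a, ha, rfl⟩, _, hh x hx, by group⟩

theorem getting_rid_of_easy_case (G : Type) [Group G] [Fintype G] [DecidableEq G]
    (ℓ m : ℕ) (hℓpos : 0 < ℓ) (hℓm : ℓ < m) (c c' : ℝ)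
    (hc : c ∈ Set.Ioo (0 : ℝ) 1) (hc' : c' ∈ Set.Ioo (0 : ℝ) 1)
    (𝓔 : Set (Finset G)) (h𝓔 : ∀ A ∈ 𝓔, A.Nonempty)
    (h1 : ∀ (k : ℕ) (A : Fin k → Finset G),
      (∀ j, A j ∈ 𝓔) → (∀ j, ((A j).card : ℝ) ≥ (ℓ : ℝ) ^ c') →
      ∃ σ : Fin k → G,
        (((List.ofFn fun j => conjFinset (A j) (σ j)).prod).card : ℝ) ≥
          min (m : ℝ) (∏ j, ((A j).card : ℝ) ^ c))
    (h2 : ∀ A B : Finset G, ℓ ≤ A.card → B.card ≤ m →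
      (∃ σ : G, ((conjFinset A σ * B).card : ℝ) > (A.card : ℝ) ^ c * (B.card : ℝ)) ∨
      (∃ (σ : G) (A' : Finset G), A' ∈ 𝓔 ∧ (A'.image fun a => σ * a) ⊆ A ∧
        ((A'.card : ℝ) > (A.card : ℝ) ^ c')))
    (k : ℕ) (A : Fin k → Finset G) (hA : ∀ j, ℓ ≤ (A j).card) :
    ∃ σ : Fin k → G,
      (((List.ofFn fun j => conjFinset (A j) (σ j)).prod).card : ℝ) ≥
        min (m : ℝ) (∏ j, ((A j).card : ℝ) ^ (c * c' / 2)) := by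
  classical
  obtain ⟨hc0, -⟩ := hc
  obtain ⟨hc0', hc1'⟩ := hc'
  have hone : ∀ j, (1 : ℝ) ≤ (A j).card := fun j => by exact_mod_cast hℓpos.trans_le (hA j)
  obtain ⟨σ₁, hσ₁⟩ := exists_conj_prod_growth hℓpos (m := m) (c := c) (e := c') (𝓔 := 𝓔) h2 k A hA
  obtain ⟨n, Y, hY, hYc, hYp, hτ⟩ :=
    exists_easy_reduction hℓpos hc0.le hc0'.le (𝓔 := 𝓔) k A hA
  obtain ⟨τ, hτc⟩ := h1 n Y hY hYc
  obtain ⟨σ₂, h, hh⟩ := hτ τ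
  have hcard : (((List.ofFn fun i => conjFinset (Y i) (τ i)).prod).card : ℝ) ≤
      ((List.ofFn fun j => conjFinset (A j) (σ₂ j)).prod).card := by
    exact_mod_cast Finset.card_le_card_of_injOn (fun x => h * x) (fun x hx => hh x hx)
      ((mul_right_injective h).injOn)
  set P : ℝ := ∏ j, ((A j).card : ℝ) ^ (c * c' / 2) with hP
  set S : ℝ := ∏ j, if IsEasy 𝓔 c' (A j) then 1 else ((A j).card : ℝ) ^ c with hS
  set T : ℝ := ∏ j, if IsEasy 𝓔 c' (A j) then ((A j).card : ℝ) ^ (c * c') else 1 with hT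
  have hP0 : 0 ≤ P := Finset.prod_nonneg fun j _ => by positivity
  have hT0 : 0 ≤ T := Finset.prod_nonneg fun j _ => by split_ifs <;> positivity
  have hPST : P * P ≤ S * T := by
    rw [hP, hS, hT, ← Finset.prod_mul_distrib, ← Finset.prod_mul_distrib]
    refine Finset.prod_le_prod (fun j _ => by positivity) fun j _ => ?_
    rw [← Real.rpow_add (by linarith [hone j]), add_halves]
    split_ifs
    · rw [one_mul]
    · rw [mul_one]
      exact Real.rpow_le_rpow_of_exponent_le (hone j) (by nlinarith)
  by_cases hPS : P ≤ S
  · exact ⟨σ₁, (min_le_min_left _ hPS).trans hσ₁⟩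
  · refine ⟨σ₂, (min_le_min_left _ ?_).trans (hτc.trans hcard)⟩
    refine le_trans ?_ hYp
    by_contra hPT
    push Not at hPS hPT
    nlinarith
end

section
/- There exist absolute constants C > 0 and n₀ > 0 such that the following holds. Let n > n₀ and let A, B ⊆ Aₙ be nonempty subsets with C^n ≤ |A|. Suppose that |A^σ B| < |A|^{0.05}·|B| for all σ ∈ Aₙ. Then there exist a positive integer t and t-umvirates U and U' in Sₙ such that |A ∩ U| > |A|^{0.8} and |U' ∩ B| ≥ |U'|^{0.2}. -/
/-!
Why the theorem holds. Let `E(σ)` be the number of solutions of `a^σ b = a'^σ b'` with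
`a, a' ∈ A` and `b, b' ∈ B`. By Cauchy–Schwarz `|A|²|B|² ≤ |A^σ B| E(σ)`, so the hypothesis gives
`E(σ) ≥ |A|^1.95 |B|` for every even `σ`. The equation says that `σ` conjugates `a'⁻¹ a` to
`b' b⁻¹`; for a given quadruple this has no solution `σ` unless both are of the same cycle type
`p`, and then at most `n! / |K|` solutions, where `K` is the class of type `p`. Summing over `σ`,
and using that there are at most `2ⁿ` cycle types, one type `p` carries a proportion `2⁻ⁿ` of the
energy (`sum_conjEnergy_le`, `exists_popular_type`). Fixing one element of each pair, one obtains
`X = A ∩ aK` and `Y = B ∩ bK` with `|X||Y| ≥ |K||A|^0.95 / 2ⁿ⁺¹`. As `|X| ≤ |A|` and `|Y| ≤ |K|`,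
this gives `|X| ≥ |A|^0.95 / 2ⁿ⁺¹` and `|Y| ≥ |K||A|^(-0.05) / 2ⁿ⁺¹`.

If the elements of `K` move exactly `s` points, then every element of `X` agrees with `a` in
exactly `n - s` points, so the most popular of the at most `2ⁿ` agreement sets defines an umvirate
containing a proportion `2⁻ⁿ` of `X`; the same works for `Y` and `b` (`exists_umvirate`). If
`s = n` one prescribes the image of a single point instead. Factors `2^O(n)` are negligible because
`|A| ≥ 2^(40n)`, which settles `A`. For `B` one also needs `|K| ≥ √(s!) / 2ⁿ`
(`factorial_le_class`), while `|U'| ≤ s!`, and the inequality `|K| ≥ |X|`, which makes `|K|`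
nearly as large as `|A|^0.95`.
-/


open scoped Pointwise

/-- `U` is a `t`-umvirate in `Sₙ`: the set of permutations agreeing with a fixed injection on a
fixed set `I` of size `t`. -/
def IsUmvirate (n t : ℕ) (U : Finset (Equiv.Perm (Fin n))) : Prop :=
  ∃ (I : Finset (Fin n)) (ψ : Fin n → Fin n), I.card = t ∧ Set.InjOn ψ ↑I ∧
    U = Finset.univ.filter (fun τ => ∀ i ∈ I, τ i = ψ i)

section

open Equiv Equiv.Perm Finset

/-- The number of pairs `(x, y) ∈ X × X` such that `x⁻¹ y` has cycle type `p`, where fixed points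
count as parts of `p`. -/
def pairCount {n : ℕ} (X : Finset (Perm (Fin n))) (p : (Fintype.card (Fin n)).Partition) : ℕ :=
  #{z ∈ X ×ˢ X | (z.1⁻¹ * z.2).partition = p}

/-- The order of the centralizer in `Sₙ` of a permutation whose nontrivial cycles have the lengths
listed in `m`. -/
def centSize (n : ℕ) (m : Multiset ℕ) : ℕ :=
  (n - m.sum).factorial * m.prod * ∏ k ∈ m.toFinset, (m.count k).factorial

/-- The number of solutions `(a', a, b, b')` of `a^σ b = a'^σ b'`. -/
def conjEnergy {n : ℕ} (A B : Finset (Perm (Fin n))) (σ : Perm (Fin n)) : ℕ :=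
  #{w ∈ (A ×ˢ A) ×ˢ (B ×ˢ B) | σ⁻¹ * w.1.2 * σ * w.2.1 = σ⁻¹ * w.1.1 * σ * w.2.2}

/-! ### Umvirates -/

lemma card_umvirate_le {n t : ℕ} {U : Finset (Perm (Fin n))} (hU : IsUmvirate n t U) :
    U.card ≤ (n - t).factorial := by
  obtain ⟨I, ψ, hI, -, rfl⟩ := hU
  rcases (univ.filter fun τ : Perm (Fin n) => ∀ i ∈ I, τ i = ψ i).eq_empty_or_nonempty with h | h
  · simp [h]
  obtain ⟨τ₀, h₀⟩ := h
  simp only [mem_filter, mem_univ, true_and] at h₀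
  have h1 : Fintype.card {f : Perm (Fin n) // ∀ i, ¬ (i ∉ I) → f i = i} = (n - t).factorial := by
    rw [← Fintype.card_congr (Perm.subtypeEquivSubtypePerm (fun i => i ∉ I)), Fintype.card_perm]
    congr 1
    rw [Fintype.card_subtype_compl]
    simp [hI]
  rw [← h1, Fintype.card_subtype]
  refine card_le_card_of_injOn (fun τ => τ₀⁻¹ * τ) ?_ (fun _ _ _ _ h => mul_left_cancel h)
  intro τ hτ
  simp only [coe_filter, mem_univ, true_and, Set.mem_ofPred_eq, not_not] at hτ ⊢
  intro i hi
  rw [Perm.mul_apply, hτ i hi, ← h₀ i hi]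
  simp

/-- If all elements of `X` agree with `b` in exactly `k` points, then some umvirate of positive
codimension `max k 1` captures a proportion `2⁻ⁿ` of `X`. -/
lemma exists_umvirate {n k : ℕ} (hn : 0 < n) {X : Finset (Perm (Fin n))} (hne : X.Nonempty)
    (b : Perm (Fin n)) (hX : ∀ x ∈ X, #{i | x i = b i} = k) :
    ∃ U, IsUmvirate n (max k 1) U ∧ X.card ≤ 2 ^ n * (X ∩ U).card := by
  rcases Nat.eq_zero_or_pos k with rfl | hk
  · -- The agreement set is empty here, so the image of one point is prescribed instead.
    obtain ⟨j, hj⟩ : ∃ j : Fin n, X.card ≤ n * #{x ∈ X | x ⟨0, hn⟩ = j} := by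
      by_contra! h
      have h2 := card_eq_sum_card_fiberwise (s := X) (t := univ) (f := fun x => x ⟨0, hn⟩)
        (by intro x _; simp)
      have h3 : ∑ j : Fin n, n * #{x ∈ X | x ⟨0, hn⟩ = j} < ∑ j : Fin n, X.card :=
        sum_lt_sum_of_nonempty ⟨⟨0, hn⟩, mem_univ _⟩ fun j _ => h j
      rw [← mul_sum, ← h2] at h3
      simp at h3
    refine ⟨_, ⟨{⟨0, hn⟩}, fun _ => j, by simp, by simp, rfl⟩, ?_⟩
    refine hj.trans (Nat.mul_le_mul Nat.lt_two_pow_self.le (card_le_card ?_))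
    intro x
    simp
  · obtain ⟨x₀, hx₀⟩ := hne
    obtain ⟨I, hI⟩ : ∃ I : Finset (Fin n),
        X.card ≤ 2 ^ n * #{x ∈ X | univ.filter (fun i => x i = b i) = I} := by
      by_contra! h
      have h2 := card_eq_sum_card_fiberwise (s := X) (t := univ)
        (f := fun x => univ.filter (fun i => x i = b i)) (by intro x _; simp)
      have h3 : ∑ I : Finset (Fin n), 2 ^ n * #{x ∈ X | univ.filter (fun i => x i = b i) = I}
          < ∑ I : Finset (Fin n), X.card :=
        sum_lt_sum_of_nonempty ⟨∅, mem_univ _⟩ fun j _ => h j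
      rw [← mul_sum, ← h2] at h3
      simp at h3
    have hpos : 0 < #{x ∈ X | univ.filter (fun i => x i = b i) = I} := by
      by_contra! h
      have := card_pos.2 ⟨x₀, hx₀⟩
      simp only [Nat.le_zero.1 h] at hI
      omega
    obtain ⟨x₁, h₁⟩ := card_pos.1 hpos
    rw [mem_filter] at h₁
    refine ⟨_, ⟨I, b, ?_, b.injective.injOn, rfl⟩, ?_⟩
    · rw [← h₁.2, hX x₁ h₁.1]; omega
    · refine hI.trans (Nat.mul_le_mul le_rfl (card_le_card ?_))
      intro x
      simp only [mem_filter, mem_inter, mem_univ, true_and]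
      rintro ⟨hx, rfl⟩
      exact ⟨hx, fun i hi => by simpa using hi⟩

/-! ### Centralizers and conjugacy classes -/

lemma card_conj_eq_le {n : ℕ} (x y : Perm (Fin n)) :
    #{σ : Perm (Fin n) | σ⁻¹ * x * σ = y} ≤ centSize n x.cycleType := by
  rcases (univ.filter fun σ : Perm (Fin n) => σ⁻¹ * x * σ = y).eq_empty_or_nonempty with h | h
  · simp [h]
  obtain ⟨σ₀, h₀⟩ := h
  simp only [mem_filter, mem_univ, true_and] at h₀
  have h1 := nat_card_centralizer x
  rw [Fintype.card_fin] at h1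
  rw [centSize, ← h1, ← Fintype.card_subtype, ← Nat.card_eq_fintype_card]
  have hmem : ∀ σ : {σ : Perm (Fin n) // σ⁻¹ * x * σ = y},
      (σ : Perm (Fin n)) * σ₀⁻¹ ∈ Subgroup.centralizer {x} := by
    rintro ⟨σ, hσ⟩
    rw [Subgroup.mem_centralizer_singleton_iff]
    have h2 : x * σ = σ * y := by rw [← hσ]; group
    have h3 : σ₀⁻¹ * x = y * σ₀⁻¹ := by rw [← h₀]; group
    simp only [mul_assoc, h3]
    rw [← mul_assoc x, h2, mul_assoc]
  refine Nat.card_le_card_of_injective (fun σ => ⟨σ.1 * σ₀⁻¹, hmem σ⟩) fun σ τ h => ?_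
  exact Subtype.ext (mul_right_cancel (Subtype.ext_iff.1 h))

lemma prod_le_two_pow_sum (m : Multiset ℕ) : m.prod ≤ 2 ^ m.sum := by
  induction m using Multiset.induction_on with
  | empty => simp
  | cons a s ih =>
    rw [Multiset.prod_cons, Multiset.sum_cons, pow_add]
    exact Nat.mul_le_mul Nat.lt_two_pow_self.le ih

/-- A conjugacy class of permutations moving `s` points has at least `√(s!) / 2ⁿ` elements: there
are at most `s / 2` cycles, so the centralizer has order at most `(n - s)! 2ˢ (s / 2)!`. -/
lemma factorial_le_class {n : ℕ} (x : Perm (Fin n)) :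
    (x.cycleType.sum).factorial ≤
      (#{g : Perm (Fin n) | g.cycleType = x.cycleType} * 2 ^ n) ^ 2 := by
  set m := x.cycleType with hm
  have h2 : ∀ a ∈ m, 2 ≤ a := fun a ha => two_le_of_mem_cycleType ha
  have hs : m.sum ≤ n := by simpa using x.sum_cycleType_le
  have h := card_of_cycleType_mul_eq (α := Fin n) m
  rw [Fintype.card_fin, if_pos ⟨hs, h2⟩] at h
  have hcard : 2 * m.card ≤ m.sum := by
    have := Multiset.card_nsmul_le_sum h2
    simpa [mul_comm] using this
  have hcount : ∏ k ∈ m.toFinset, (m.count k).factorial ≤ m.card.factorial := by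
    have := Nat.prod_factorial_dvd_factorial_sum m.toFinset (fun k => m.count k)
    rw [Multiset.toFinset_sum_count_eq] at this
    exact Nat.le_of_dvd (Nat.factorial_pos _) this
  have hprod : m.prod ≤ 2 ^ n :=
    (prod_le_two_pow_sum m).trans (Nat.pow_le_pow_right (by norm_num) hs)
  have hsq : m.card.factorial * m.card.factorial ≤ m.sum.factorial :=
    (Nat.le_of_dvd (Nat.factorial_pos _) (Nat.factorial_mul_factorial_dvd_factorial_add _ _)).trans
      (Nat.factorial_le (by omega))
  have hbin : m.sum.factorial * (n - m.sum).factorial ≤ n.factorial :=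
    Nat.le_of_dvd (Nat.factorial_pos _) (Nat.factorial_mul_factorial_dvd_factorial hs)
  set K := #{g : Perm (Fin n) | g.cycleType = m}
  have h3 : m.sum.factorial ≤ K * 2 ^ n * m.card.factorial := by
    refine Nat.le_of_mul_le_mul_right (c := (n - m.sum).factorial) ?_ (Nat.factorial_pos _)
    calc _ ≤ n.factorial := hbin
      _ = K * ((n - m.sum).factorial * m.prod * ∏ k ∈ m.toFinset, (m.count k).factorial) := h.symm
      _ ≤ K * ((n - m.sum).factorial * 2 ^ n * m.card.factorial) := by gcongr
      _ = _ := by ring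
  have hp := Nat.factorial_pos m.sum
  refine Nat.le_of_mul_le_mul_right (c := m.sum.factorial) ?_ hp
  calc _ ≤ (K * 2 ^ n * m.card.factorial) * (K * 2 ^ n * m.card.factorial) :=
        Nat.mul_le_mul h3 h3
    _ = (K * 2 ^ n) ^ 2 * (m.card.factorial * m.card.factorial) := by ring
    _ ≤ _ := Nat.mul_le_mul le_rfl hsq

lemma card_partition_le (n : ℕ) : Fintype.card n.Partition ≤ 2 ^ n := by
  refine (Fintype.card_le_of_surjective _ (Nat.Partition.ofComposition_surj (n := n))).trans ?_
  rw [composition_card]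
  exact Nat.pow_le_pow_right (by norm_num) (by omega)

/-! ### Averaging the energy over conjugations -/

lemma sq_le_conjEnergy {n : ℕ} (A B : Finset (Perm (Fin n))) (σ : Perm (Fin n)) :
    A.card ^ 2 * B.card ^ 2 ≤ (conjFinset A σ * B).card * conjEnergy A B σ := by
  have hc : (conjFinset A σ).card = A.card :=
    card_image_of_injective _ fun a b h => by simpa using h
  rw [← hc]
  refine (le_card_mul_mul_mulEnergy _ _).trans (Nat.mul_le_mul le_rfl ?_)
  refine card_le_card_of_injOn
    (fun x => ((σ * x.1.2 * σ⁻¹, σ * x.1.1 * σ⁻¹), x.2)) ?_ ?_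
  · rintro ⟨⟨a, a'⟩, b, b'⟩ h
    simp only [conjFinset, coe_filter, mem_product, mem_image, Set.mem_ofPred_eq] at h ⊢
    obtain ⟨⟨⟨⟨c, hc, rfl⟩, ⟨d, hd, rfl⟩⟩, hb⟩, h⟩ := h
    refine ⟨⟨⟨?_, ?_⟩, hb⟩, ?_⟩
    · simpa [mul_assoc] using hd
    · simpa [mul_assoc] using hc
    · simpa [mul_assoc] using h
  · rintro ⟨⟨a, a'⟩, b, b'⟩ - ⟨⟨c, c'⟩, d, d'⟩ - h
    simp only [Prod.mk.injEq, mul_left_inj, mul_right_inj] at h ⊢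
    tauto

/-- Averaging over `σ` turns the energy into a sum over cycle types, because the number of `σ`
with `(a'⁻¹ a)^σ = b' b⁻¹` is zero unless the two sides have the same cycle type, and is the order
of a centralizer otherwise. -/
lemma sum_conjEnergy_le {n : ℕ} (A B : Finset (Perm (Fin n))) :
    ∑ σ, conjEnergy A B σ ≤
      ∑ p : (Fintype.card (Fin n)).Partition,
        pairCount A p * pairCount B p * centSize n (p.parts.filter (2 ≤ ·)) := by
  set c : (Fintype.card (Fin n)).Partition → ℕ :=
    fun p => centSize n (p.parts.filter (2 ≤ ·)) with hc
  have hcx : ∀ x : Perm (Fin n), c x.partition = centSize n x.cycleType := fun x => by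
    rw [hc]; simp only [filter_parts_partition_eq_cycleType]
  have h1 : ∀ w : (Perm (Fin n) × Perm (Fin n)) × (Perm (Fin n) × Perm (Fin n)),
      #{σ : Perm (Fin n) | σ⁻¹ * w.1.2 * σ * w.2.1 = σ⁻¹ * w.1.1 * σ * w.2.2} ≤
      ∑ p, if (w.1.1⁻¹ * w.1.2).partition = p ∧ (w.2.1⁻¹ * w.2.2).partition = p
        then c p else 0 := by
    rintro ⟨⟨a', a⟩, b, b'⟩
    simp only
    have heq : ∀ σ : Perm (Fin n), σ⁻¹ * a * σ * b = σ⁻¹ * a' * σ * b' ↔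
        σ⁻¹ * (a'⁻¹ * a) * σ = b' * b⁻¹ := by
      intro σ
      rw [eq_mul_inv_iff_mul_eq, mul_assoc σ⁻¹ a' σ, mul_assoc σ⁻¹ (a' * σ) b',
        mul_assoc a' σ b', ← inv_mul_eq_iff_eq_mul (a := σ⁻¹), inv_inv,
        ← inv_mul_eq_iff_eq_mul (a := a'), ← inv_mul_eq_iff_eq_mul (a := σ)]
      simp only [mul_assoc, mul_inv_cancel_left]
    simp only [heq]
    by_cases hp : (a'⁻¹ * a).partition = (b⁻¹ * b').partition
    · rw [Finset.sum_eq_single (a'⁻¹ * a).partition]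
      · rw [if_pos ⟨rfl, hp.symm⟩, hcx]
        exact card_conj_eq_le _ _
      · intro p _ h
        rw [if_neg (fun h' => h h'.1.symm)]
      · simp
    · rw [Finset.card_eq_zero.2]
      · exact Nat.zero_le _
      · rw [filter_eq_empty_iff]
        intro σ _ h
        apply hp
        rw [← partition_eq_of_isConj, isConj_iff]
        refine ⟨b⁻¹ * σ⁻¹, ?_⟩
        have : b' = σ⁻¹ * (a'⁻¹ * a) * σ * b := by rw [h]; simp
        rw [this]
        group
  calc ∑ σ, conjEnergy A B σ
      = ∑ w ∈ (A ×ˢ A) ×ˢ (B ×ˢ B),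
        #{σ : Perm (Fin n) | σ⁻¹ * w.1.2 * σ * w.2.1 = σ⁻¹ * w.1.1 * σ * w.2.2} := by
        simp only [conjEnergy, card_filter]
        rw [sum_comm]
    _ ≤ ∑ w ∈ (A ×ˢ A) ×ˢ (B ×ˢ B), ∑ p,
        if (w.1.1⁻¹ * w.1.2).partition = p ∧ (w.2.1⁻¹ * w.2.2).partition = p
        then c p else 0 := sum_le_sum fun w _ => h1 w
    _ = ∑ p, pairCount A p * pairCount B p * c p := by
        rw [sum_comm]
        refine sum_congr rfl fun p _ => ?_
        rw [← sum_filter, sum_const, smul_eq_mul, pairCount, pairCount, ← card_product,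
          ← filter_product (fun z : Perm (Fin n) × Perm (Fin n) => (z.1⁻¹ * z.2).partition = p)
            (fun z : Perm (Fin n) × Perm (Fin n) => (z.1⁻¹ * z.2).partition = p)]

/-- A popular cycle type among the quotients is popular among the quotients by one element. -/
lemma exists_popular {n : ℕ} {X : Finset (Perm (Fin n))} (hX : X.Nonempty)
    (p : (Fintype.card (Fin n)).Partition) :
    ∃ b ∈ X, pairCount X p ≤ X.card * #{x ∈ X | (b⁻¹ * x).partition = p} := by
  by_contra! h
  have h1 : pairCount X p = ∑ b ∈ X, #{x ∈ X | (b⁻¹ * x).partition = p} := by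
    rw [pairCount, card_filter, sum_product]
    simp only [card_filter]
  have h2 := sum_lt_sum_of_nonempty hX h
  rw [← mul_sum, ← h1] at h2
  simp at h2

lemma card_agree {n : ℕ} (b x : Perm (Fin n)) :
    #{i | x i = b i} = n - (b⁻¹ * x).cycleType.sum := by
  rw [sum_cycleType]
  have : (univ.filter fun i => x i = b i) = (b⁻¹ * x).supportᶜ := by
    ext i
    simp [Equiv.symm_apply_eq]
  rw [this, card_compl, Fintype.card_fin]

lemma centSize_mul_class {n : ℕ} (x : Perm (Fin n)) :
    #{g : Perm (Fin n) | g.cycleType = x.cycleType} * centSize n x.cycleType = n.factorial := by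
  have h := card_of_cycleType_mul_eq (α := Fin n) x.cycleType
  rwa [Fintype.card_fin, if_pos ⟨by simpa using x.sum_cycleType_le,
    fun a ha => two_le_of_mem_cycleType ha⟩] at h

lemma card_popular_le {n : ℕ} (X : Finset (Perm (Fin n))) (b x₀ : Perm (Fin n)) :
    #{x ∈ X | (b⁻¹ * x).partition = x₀.partition} ≤
      #{g : Perm (Fin n) | g.cycleType = x₀.cycleType} := by
  refine card_le_card_of_injOn (fun x => b⁻¹ * x) ?_ (fun _ _ _ _ h => mul_left_cancel h)
  intro x hx
  simp only [coe_filter, mem_univ, true_and, Set.mem_ofPred_eq] at hx ⊢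
  exact isConj_iff_cycleType_eq.1 (partition_eq_of_isConj.2 hx.2)

/-- If no even conjugate of `A` expands `B`, then some cycle type `p` occurs unusually often among
the quotients of `A` and among those of `B`. -/
lemma exists_popular_type {n : ℕ} (hn : 2 ≤ n) {A B : Finset (Perm (Fin n))}
    (hA : A.Nonempty) (hB : B.Nonempty)
    (h : ∀ σ ∈ alternatingGroup (Fin n),
      ((conjFinset A σ * B).card : ℝ) < (A.card : ℝ) ^ (0.05 : ℝ) * (B.card : ℝ)) :
    ∃ p : (Fintype.card (Fin n)).Partition,
      (n.factorial : ℝ) * ((A.card : ℝ) ^ (0.95 : ℝ) * A.card * B.card) ≤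
        2 * 2 ^ n * (pairCount A p * pairCount B p * centSize n (p.parts.filter (2 ≤ ·)) : ℕ) := by
  classical
  have hq : (0 : ℝ) < A.card := by exact_mod_cast hA.card_pos
  have hb : (0 : ℝ) < B.card := by exact_mod_cast hB.card_pos
  set R : ℝ := (A.card : ℝ) ^ (0.95 : ℝ) * A.card * B.card with hR
  have hE : ∀ σ ∈ alternatingGroup (Fin n), R ≤ conjEnergy A B σ := by
    intro σ hσ
    have h1 : (A.card : ℝ) ^ 2 * (B.card : ℝ) ^ 2 ≤
        (conjFinset A σ * B).card * conjEnergy A B σ := by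
      exact_mod_cast sq_le_conjEnergy A B σ
    have h2 := h1.trans (mul_le_mul_of_nonneg_right (h σ hσ).le (Nat.cast_nonneg _))
    have h3 : (A.card : ℝ) ^ (0.05 : ℝ) * (A.card : ℝ) ^ (0.95 : ℝ) = A.card := by
      rw [← Real.rpow_add hq]; norm_num
    have h4 : 0 < (A.card : ℝ) ^ (0.05 : ℝ) := Real.rpow_pos_of_pos hq _
    refine le_of_mul_le_mul_left ?_ (mul_pos h4 hb)
    calc _ = ((A.card : ℝ) ^ (0.05 : ℝ) * (A.card : ℝ) ^ (0.95 : ℝ)) * A.card *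
          (B.card : ℝ) ^ 2 := by rw [hR]; ring
      _ = (A.card : ℝ) ^ 2 * (B.card : ℝ) ^ 2 := by rw [h3]; ring
      _ ≤ _ := h2
  have hcard : 2 * #{σ : Perm (Fin n) | σ ∈ alternatingGroup (Fin n)} = n.factorial := by
    have : Nontrivial (Fin n) := Fin.nontrivial_iff_two_le.2 hn
    have := two_mul_nat_card_alternatingGroup (α := Fin n)
    rw [Nat.card_eq_fintype_card, Nat.card_eq_fintype_card, Fintype.card_perm, Fintype.card_fin]
      at this
    rw [← this, Fintype.card_subtype]
  have hsum : (n.factorial : ℝ) * R ≤ 2 * (∑ σ, conjEnergy A B σ : ℕ) := by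
    have h1 : (#{σ : Perm (Fin n) | σ ∈ alternatingGroup (Fin n)} : ℝ) * R ≤
        ∑ σ, (conjEnergy A B σ : ℝ) := by
      rw [← nsmul_eq_mul]
      refine (card_nsmul_le_sum _ (fun σ => (conjEnergy A B σ : ℝ)) R ?_).trans
        (sum_le_sum_of_subset_of_nonneg (filter_subset _ _) fun _ _ _ => Nat.cast_nonneg _)
      intro σ hσ
      exact hE σ (by simpa using hσ)
    rw [← hcard]
    push_cast
    linarith
  by_contra! hcon
  have hne : (univ : Finset (Fintype.card (Fin n)).Partition).Nonempty :=
    ⟨(1 : Perm (Fin n)).partition, mem_univ _⟩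
  have h1 := sum_lt_sum_of_nonempty hne fun p _ => hcon p
  rw [← mul_sum, sum_const, nsmul_eq_mul, card_univ] at h1
  have h2 : (Fintype.card (Fintype.card (Fin n)).Partition : ℝ) ≤ 2 ^ n := by
    have h0 : 2 ^ Fintype.card (Fin n) = 2 ^ n := by rw [Fintype.card_fin]
    refine (Nat.cast_le.2 ((card_partition_le (Fintype.card (Fin n))).trans_eq h0)).trans_eq ?_
    norm_num
  have h3 : ((∑ σ, conjEnergy A B σ : ℕ) : ℝ) ≤ _ := Nat.cast_le.2 (sum_conjEnergy_le A B)
  rw [Nat.cast_sum univ (fun p : (Fintype.card (Fin n)).Partition => _)] at h3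
  have hR0 : 0 ≤ (n.factorial : ℝ) * R := by positivity
  have h4 := mul_le_mul_of_nonneg_right h2 hR0
  have h5 := mul_le_mul_of_nonneg_left (hsum.trans (mul_le_mul_of_nonneg_left h3 zero_le_two))
    (by positivity : (0 : ℝ) ≤ 2 ^ n)
  linarith

end

theorem growth_or_coset :
    ∃ (C : ℝ) (n₀ : ℕ), C > 0 ∧ 0 < n₀ ∧
      ∀ n : ℕ, n > n₀ →
        ∀ A B : Finset (Equiv.Perm (Fin n)),
          (∀ x ∈ A, x ∈ alternatingGroup (Fin n)) → (∀ x ∈ B, x ∈ alternatingGroup (Fin n)) →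
          A.Nonempty → B.Nonempty →
          C ^ (n : ℝ) ≤ (A.card : ℝ) →
          (∀ σ ∈ alternatingGroup (Fin n),
            ((conjFinset A σ * B).card : ℝ) < (A.card : ℝ) ^ (0.05 : ℝ) * (B.card : ℝ)) →
          ∃ (t : ℕ) (U U' : Finset (Equiv.Perm (Fin n))), 0 < t ∧
            IsUmvirate n t U ∧ IsUmvirate n t U' ∧
            ((A ∩ U).card : ℝ) > (A.card : ℝ) ^ (0.8 : ℝ) ∧
            ((U' ∩ B).card : ℝ) ≥ ((U'.card : ℝ)) ^ (0.2 : ℝ) := by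
  refine ⟨2 ^ 40, 1, by positivity, one_pos, ?_⟩
  intro n hn A B _ _ hA hB hC h
  obtain ⟨p, hp⟩ := exists_popular_type (by omega) hA hB h
  obtain ⟨a, -, haN⟩ := exists_popular hA p
  obtain ⟨b, -, hbN⟩ := exists_popular hB p
  set X := A.filter fun x => (a⁻¹ * x).partition = p with hX
  set Y := B.filter fun x => (b⁻¹ * x).partition = p with hY
  have hq : (0 : ℝ) < A.card := by exact_mod_cast hA.card_pos
  have hb : (0 : ℝ) < B.card := by exact_mod_cast hB.card_pos
  set c := centSize n (p.parts.filter (2 ≤ ·)) with hc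
  have hmain : (n.factorial : ℝ) * (A.card : ℝ) ^ (0.95 : ℝ) ≤
      2 * 2 ^ n * (X.card * Y.card * c) := by
    have h1 : ((pairCount A p * pairCount B p * c : ℕ) : ℝ) ≤
        (A.card * X.card) * (B.card * Y.card) * c := by
      exact_mod_cast Nat.mul_le_mul (Nat.mul_le_mul haN hbN) le_rfl
    refine le_of_mul_le_mul_right ?_ (mul_pos hq hb)
    have h2 := hp.trans (mul_le_mul_of_nonneg_left h1 (by positivity))
    linarith
  have hpos : (0 : ℝ) < X.card * Y.card * c := by
    have : (0 : ℝ) < (n.factorial : ℝ) * (A.card : ℝ) ^ (0.95 : ℝ) :=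
      mul_pos (by exact_mod_cast n.factorial_pos) (Real.rpow_pos_of_pos hq _)
    exact pos_of_mul_pos_right (this.trans_le hmain) (by positivity)
  have hposN : 0 < X.card * Y.card * c := by exact_mod_cast hpos
  have hXp : 0 < X.card := Nat.pos_of_ne_zero fun h0 => by simp [h0] at hposN
  have hYp : 0 < Y.card := Nat.pos_of_ne_zero fun h0 => by simp [h0] at hposN
  have hcp : 0 < c := Nat.pos_of_ne_zero fun h0 => by simp [h0] at hposN
  -- The popular type is the type of an actual permutation `x₀`.
  obtain ⟨x₀, hx₀⟩ : ∃ x₀ : Equiv.Perm (Fin n), x₀.partition = p := by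
    obtain ⟨x, hx⟩ := Finset.card_pos.1 hXp
    exact ⟨_, (Finset.mem_filter.1 hx).2⟩
  have hcx : c = centSize n x₀.cycleType := by
    rw [hc, ← hx₀, Equiv.Perm.filter_parts_partition_eq_cycleType]
  set K := (Finset.univ.filter fun g : Equiv.Perm (Fin n) => g.cycleType = x₀.cycleType).card
    with hK
  have hKc : K * c = n.factorial := by rw [hcx]; exact centSize_mul_class x₀
  have hXK : X.card ≤ K := by rw [hX, ← hx₀]; exact card_popular_le A a x₀
  have hYK : Y.card ≤ K := by rw [hY, ← hx₀]; exact card_popular_le B b x₀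
  have hXA : X.card ≤ A.card := Finset.card_le_card (Finset.filter_subset _ _)
  have hKp : 0 < K := hXp.trans_le hXK
  have hF := factorial_le_class x₀
  rw [← hK] at hF
  set s := x₀.cycleType.sum with hs
  have hagree : ∀ d x : Equiv.Perm (Fin n), (d⁻¹ * x).partition = p →
      (Finset.univ.filter fun i => x i = d i).card = n - s := by
    intro d x hx
    rw [card_agree, hs, Equiv.Perm.isConj_iff_cycleType_eq.1
      (Equiv.Perm.partition_eq_of_isConj.2 (hx.trans hx₀.symm))]
  obtain ⟨U, hU, hXU⟩ := exists_umvirate (by omega) (Finset.card_pos.1 hXp) a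
    fun x hx => hagree a x (Finset.mem_filter.1 hx).2
  obtain ⟨U', hU', hYU⟩ := exists_umvirate (by omega) (Finset.card_pos.1 hYp) b
    fun x hx => hagree b x (Finset.mem_filter.1 hx).2
  refine ⟨_, U, U', by omega, hU, hU', ?_⟩
  have hXU' : X.card ≤ 2 ^ n * (A ∩ U).card := hXU.trans (Nat.mul_le_mul le_rfl
    (Finset.card_le_card (Finset.inter_subset_inter_right (Finset.filter_subset _ _))))
  have hYU' : Y.card ≤ 2 ^ n * (U' ∩ B).card := hYU.trans (Nat.mul_le_mul le_rfl
    (Finset.card_le_card (by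
      rw [Finset.inter_comm]
      exact Finset.inter_subset_inter_left (Finset.filter_subset _ _))))
  have hu : 0 < (A ∩ U).card := Nat.pos_of_ne_zero fun h0 => by
    rw [h0] at hXU'; omega
  have hv : 0 < (U' ∩ B).card := Nat.pos_of_ne_zero fun h0 => by
    rw [h0] at hYU'; omega
  have hw : 0 < U'.card := hv.trans_le (Finset.card_le_card Finset.inter_subset_left)
  have hwF : U'.card ≤ (K * 2 ^ n) ^ 2 :=
    (card_umvirate_le hU').trans ((Nat.factorial_le (by omega)).trans hF)
  have hmain' : (K : ℝ) * (A.card : ℝ) ^ (0.95 : ℝ) ≤ 2 * 2 ^ n * (X.card * Y.card) := by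
    have hcR : (0 : ℝ) < c := by exact_mod_cast hcp
    refine le_of_mul_le_mul_right ?_ hcR
    rw [← hKc] at hmain
    push_cast at hmain
    linarith
  clear_value X Y K c s
  -- All remaining inequalities are linear in logarithms.
  have cast_pos : ∀ {k : ℕ}, 0 < k → (0 : ℝ) < k := fun hk => Nat.cast_pos.2 hk
  have hlog2 : 0 < Real.log 2 := Real.log_pos one_lt_two
  have hlog : ∀ {x y : ℕ}, 0 < x → x ≤ 2 ^ n * y → 0 < y →
      Real.log x ≤ n * Real.log 2 + Real.log y := by
    intro x y hx hxy hy
    rw [← Real.log_pow, ← Real.log_mul (by positivity) (cast_pos hy).ne']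
    exact Real.log_le_log (cast_pos hx) (by exact_mod_cast hxy)
  have hmono : ∀ {x y : ℕ}, 0 < x → x ≤ y → Real.log x ≤ Real.log y := fun hx hxy =>
    Real.log_le_log (cast_pos hx) (by exact_mod_cast hxy)
  have e1 := hlog hXp hXU' hu
  have e2 := hlog hYp hYU' hv
  have e3 := hmono hXp hXK
  have e4 := hmono hXp hXA
  have e5 := hmono hYp hYK
  have e6 : Real.log U'.card ≤ 2 * (Real.log K + n * Real.log 2) := by
    have := hmono hw hwF
    push_cast at this
    rwa [Real.log_pow, Real.log_mul (cast_pos hKp).ne' (by positivity), Real.log_pow] at this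
  have e7 : Real.log K + 0.95 * Real.log A.card ≤
      Real.log 2 + n * Real.log 2 + (Real.log X.card + Real.log Y.card) := by
    have hK' := cast_pos hKp
    have hX' := cast_pos hXp
    have hY' := cast_pos hYp
    have := Real.log_le_log (mul_pos hK' (Real.rpow_pos_of_pos hq _)) hmain'
    rwa [Real.log_mul hK'.ne' (Real.rpow_pos_of_pos hq _).ne', Real.log_rpow hq,
      Real.log_mul (by positivity) (mul_pos hX' hY').ne',
      Real.log_mul two_ne_zero (by positivity), Real.log_pow,
      Real.log_mul hX'.ne' hY'.ne'] at this
  have e8 : 40 * (n * Real.log 2) ≤ Real.log A.card := by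
    have := Real.log_le_log (by positivity) hC
    rw [Real.log_rpow (by positivity), Real.log_pow] at this
    push_cast at this
    linarith
  have e9 : Real.log 2 ≤ n * Real.log 2 :=
    le_mul_of_one_le_left hlog2.le (by exact_mod_cast (by omega : 1 ≤ n))
  constructor
  · rw [gt_iff_lt, ← Real.log_lt_log_iff (Real.rpow_pos_of_pos hq _) (cast_pos hu),
      Real.log_rpow hq]
    linarith
  · rw [ge_iff_le, ← Real.log_le_log_iff (Real.rpow_pos_of_pos (cast_pos hw) _) (cast_pos hv),
      Real.log_rpow (cast_pos hw)]
    linarith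
end
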